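/- arXiv:0807.0900 — 3 statements merged into one kernel-verified Lean document; each statement's English description precedes it below -/
import Mathlib

section
/- Let Δ ⊂ ℝⁿ be a simple polytope. A facet F_i of Δ is flat (i.e. there is a hyperplane in the dual space containing the conormal of every other facet meeting F_i) if and only if the volume V(κ) of Δ(κ) is an affine-linear function of the support number κ_i on the chamber C_Δ. -/
open MeasureTheory Function Set

noncomputable section

namespace MassLinearPaper

def dotp {n : ℕ} (v x : Fin n → ℝ) : ℝ := ∑ j, v j * x j

def polytope {n N : ℕ} (η : Fin N → Fin n → ℝ) (κ : Fin N → ℝ) : Set (Fin n → ℝ) :=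
  {x | ∀ i, dotp (η i) x ≤ κ i}

def facet {n N : ℕ} (η : Fin N → Fin n → ℝ) (κ : Fin N → ℝ) (i : Fin N) : Set (Fin n → ℝ) :=
  {x ∈ polytope η κ | dotp (η i) x = κ i}

/-- A polytope is simple if at each point the active conormals are linearly independent. -/
def IsSimplePoly {n N : ℕ} (η : Fin N → Fin n → ℝ) (κ : Fin N → ℝ) : Prop :=
  ∀ x ∈ polytope η κ,
    LinearIndependent ℝ (fun i : {i : Fin N // dotp (η i) x = κ i} => η i.1)

/-- Two support vectors give analogous polytopes: the same collections of facets intersect. -/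
def Analogous {n N : ℕ} (η : Fin N → Fin n → ℝ) (κ κ' : Fin N → ℝ) : Prop :=
  ∀ I : Finset (Fin N),
    (⋂ i ∈ I, facet η κ' i).Nonempty ↔ (⋂ i ∈ I, facet η κ i).Nonempty

/-- The chamber of Δ(κ). -/
def chamber {n N : ℕ} (η : Fin N → Fin n → ℝ) (κ : Fin N → ℝ) : Set (Fin N → ℝ) :=
  connectedComponentIn {κ' | IsSimplePoly η κ' ∧ Analogous η κ κ'} κ

/-- Standing hypotheses: simple, bounded, nonempty interior, all facets nonempty. -/
def GoodPolytope {n N : ℕ} (η : Fin N → Fin n → ℝ) (κ : Fin N → ℝ) : Prop :=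
  IsSimplePoly η κ ∧ Bornology.IsBounded (polytope η κ) ∧
    (interior (polytope η κ)).Nonempty ∧ ∀ i, (facet η κ i).Nonempty

/-- The center of mass of Δ(κ). -/
def centroid {n N : ℕ} (η : Fin N → Fin n → ℝ) (κ : Fin N → ℝ) : Fin n → ℝ :=
  ⨍ x in polytope η κ, x

/-- The volume of Δ(κ) as a function of κ. -/
def volFn {n N : ℕ} (η : Fin N → Fin n → ℝ) : (Fin N → ℝ) → ℝ :=
  fun κ => (volume (polytope η κ)).toReal

/-- Partial derivative with respect to the i-th support number. -/
def pd {N : ℕ} (i : Fin N) (f : (Fin N → ℝ) → ℝ) : (Fin N → ℝ) → ℝ :=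
  fun κ => fderiv ℝ f κ (Pi.single i 1)

def face {n N : ℕ} (η : Fin N → Fin n → ℝ) (κ : Fin N → ℝ) (S : Finset (Fin N)) :
    Set (Fin n → ℝ) :=
  ⋂ i ∈ S, facet η κ i

/-- Centroid of a face with respect to Hausdorff measure of the appropriate dimension. -/
def faceCentroid {n N : ℕ} (η : Fin N → Fin n → ℝ) (κ : Fin N → ℝ) (S : Finset (Fin N)) :
    Fin n → ℝ :=
  ⨍ x in face η κ S, x ∂(μH[(n : ℝ) - S.card])

/-- The facet `F i` is H-symmetric: `⟨H, c(κ)⟩` does not depend on `κ i` on the chamber. -/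
def SymmFacet {n N : ℕ} (η : Fin N → Fin n → ℝ) (κ : Fin N → ℝ) (H : Fin n → ℝ)
    (i : Fin N) : Prop :=
  ∀ κ₁ ∈ chamber η κ, ∀ κ₂ ∈ chamber η κ, (∀ j, j ≠ i → κ₁ j = κ₂ j) →
    dotp H (centroid η κ₁) = dotp H (centroid η κ₂)

/-- H is mass linear with coefficients γ and constant C. -/
def MassLinear {n N : ℕ} (η : Fin N → Fin n → ℝ) (κ : Fin N → ℝ) (H : Fin n → ℝ)
    (γ : Fin N → ℝ) (C : ℝ) : Prop :=
  ∀ κ' ∈ chamber η κ, dotp H (centroid η κ') = ∑ i, γ i * κ' i + C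

/-- A facet is pervasive if it meets every other facet. -/
def Pervasive {n N : ℕ} (η : Fin N → Fin n → ℝ) (κ : Fin N → ℝ) (i : Fin N) : Prop :=
  ∀ j, j ≠ i → (facet η κ i ∩ facet η κ j).Nonempty

/-- A facet is flat if the conormals of all other facets meeting it lie in a hyperplane. -/
def FlatFacet {n N : ℕ} (η : Fin N → Fin n → ℝ) (κ : Fin N → ℝ) (i : Fin N) : Prop :=
  ∃ ξ : Fin n → ℝ, ξ ≠ 0 ∧
    ∀ j, j ≠ i → (facet η κ i ∩ facet η κ j).Nonempty → dotp (η j) ξ = 0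

/-- Equivalence of facets, via the criterion of Lemma 4.4. -/
def FacetEquiv {n N : ℕ} (η : Fin N → Fin n → ℝ) (i j : Fin N) : Prop :=
  i = j ∨ ∃ ξ : Fin n → ℝ, dotp (η i) ξ = 1 ∧ dotp (η j) ξ = -1 ∧
    ∀ k, k ≠ i → k ≠ j → dotp (η k) ξ = 0

def IsEquivClass {n N : ℕ} (η : Fin N → Fin n → ℝ) (I : Finset (Fin N)) : Prop :=
  I.Nonempty ∧ (∀ i ∈ I, ∀ j ∈ I, FacetEquiv η i j) ∧
    ∀ i ∈ I, ∀ j, FacetEquiv η i j → j ∈ I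

/-- H is inessential. -/
def Inessential {n N : ℕ} (η : Fin N → Fin n → ℝ) (H : Fin n → ℝ) : Prop :=
  ∃ β : Fin N → ℝ, H = ∑ i, β i • η i ∧
    ∀ I : Finset (Fin N), IsEquivClass η I → ∑ i ∈ I, β i = 0

end MassLinearPaper

open MassLinearPaper

namespace FlatProof

variable {n N : ℕ}

lemma dotp_add (v x y : Fin n → ℝ) : dotp v (x + y) = dotp v x + dotp v y := by
  simp [dotp, mul_add, Finset.sum_add_distrib]

lemma dotp_smul (v x : Fin n → ℝ) (c : ℝ) : dotp v (c • x) = c * dotp v x := by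
  simp only [dotp, Pi.smul_apply, smul_eq_mul, Finset.mul_sum]
  exact Finset.sum_congr rfl fun _ _ => by ring

lemma dotp_sub (v x y : Fin n → ℝ) : dotp v (x - y) = dotp v x - dotp v y := by
  simp [dotp, mul_sub, Finset.sum_sub_distrib]

lemma dotp_zero (v : Fin n → ℝ) : dotp v 0 = 0 := by simp [dotp]

lemma dotp_sum {ι : Type*} (s : Finset ι) (v : Fin n → ℝ) (f : ι → Fin n → ℝ) :
    dotp v (∑ k ∈ s, f k) = ∑ k ∈ s, dotp v (f k) := by
  simp only [dotp, Finset.sum_apply, Finset.mul_sum]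
  exact Finset.sum_comm

lemma continuous_dotp (v : Fin n → ℝ) : Continuous (dotp v) := by
  unfold dotp; fun_prop

def dl (v : Fin n → ℝ) : (Fin n → ℝ) →ₗ[ℝ] ℝ where
  toFun := dotp v
  map_add' := dotp_add v
  map_smul' c x := by simp [dotp_smul]

lemma dotp_solve {ι : Type*} {v : ι → Fin n → ℝ} (h : LinearIndependent ℝ v) (c : ι → ℝ) :
    ∃ x, ∀ j, dotp (v j) x = c j := by
  have hx : ∃ f : (Fin n → ℝ) →ₗ[ℝ] ℝ, ∀ j, f (v j) = c j := by
    let B := Module.Basis.span h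
    obtain ⟨f, hf⟩ := LinearMap.exists_extend (B.constr ℝ c)
    refine ⟨f, fun j => ?_⟩
    have h1 : (B.constr ℝ c) (B j) = c j := B.constr_basis ℝ c j
    have h2 : ((B j : Submodule.span ℝ (range v)) : Fin n → ℝ) = v j :=
      congrArg Subtype.val (Module.Basis.span_apply h j)
    rw [← h1, ← hf, ← h2]; rfl
  obtain ⟨f, hf⟩ := hx
  refine ⟨fun k => f (Pi.single k 1), fun j => ?_⟩
  rw [← hf j]
  conv_rhs => rw [LinearMap.pi_apply_eq_sum_univ f (v j)]
  simp only [dotp, smul_eq_mul]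
  refine Finset.sum_congr rfl fun k _ => ?_
  congr 2
  ext l
  simp [Pi.single_apply, eq_comm]

lemma isClosed_polytope (η : Fin N → Fin n → ℝ) (κ : Fin N → ℝ) : IsClosed (polytope η κ) := by
  have : polytope η κ = ⋂ i, {x | dotp (η i) x ≤ κ i} := by ext; simp [polytope]
  rw [this]
  exact isClosed_iInter fun i => isClosed_le (continuous_dotp _) continuous_const

lemma eta_ne_zero {η : Fin N → Fin n → ℝ} {κ : Fin N → ℝ} (h : GoodPolytope η κ) (i : Fin N) :
    η i ≠ 0 := by
  obtain ⟨x, hx, hxi⟩ := h.2.2.2 i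
  exact (h.1 x hx).ne_zero ⟨i, hxi⟩

lemma exists_strict {η : Fin N → Fin n → ℝ} {κ : Fin N → ℝ} (h : GoodPolytope η κ) :
    ∃ x, ∀ i, dotp (η i) x < κ i := by
  obtain ⟨x, hx⟩ := h.2.2.1
  refine ⟨x, fun i => ?_⟩
  have hxP := interior_subset hx
  have hcont : Continuous fun t : ℝ => x + t • η i := by fun_prop
  have h0 : ∀ᶠ t : ℝ in nhds 0, x + t • η i ∈ interior (polytope η κ) := by
    apply hcont.continuousAt.eventually_mem
    simpa using isOpen_interior.mem_nhds hx
  obtain ⟨ε, hε, hb⟩ := Metric.eventually_nhds_iff.1 h0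
  have h1 := interior_subset (hb (y := ε / 2) (by simp [abs_of_pos hε, hε])) i
  rw [dotp_add, dotp_smul] at h1
  have hpos : 0 < dotp (η i) (η i) := by
    have hne := eta_ne_zero h i
    obtain ⟨k, hk⟩ := Function.ne_iff.1 hne
    exact Finset.sum_pos' (fun j _ => mul_self_nonneg _) ⟨k, Finset.mem_univ _, mul_self_pos.2 hk⟩
  nlinarith [mul_pos (half_pos hε) hpos]

lemma bounded_all {η : Fin N → Fin n → ℝ} {κ : Fin N → ℝ} (h : GoodPolytope η κ)
    (κ' : Fin N → ℝ) : Bornology.IsBounded (polytope η κ') := by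
  obtain ⟨x0, hx0⟩ := exists_strict h
  have : ∀ᶠ e : ℝ in nhdsWithin 0 (Ioi 0), ∀ i, e * κ' i < κ i - dotp (η i) x0 := by
    rw [Filter.eventually_all]
    intro i
    apply Filter.Eventually.filter_mono nhdsWithin_le_nhds
    have hc : Continuous fun e : ℝ => e * κ' i := by fun_prop
    apply hc.continuousAt.eventually_lt continuousAt_const
    simpa using hx0 i
  obtain ⟨e, he, hepos⟩ := (this.and self_mem_nhdsWithin).exists
  have hepos : 0 < e := hepos
  obtain ⟨R, hR⟩ := h.2.1.exists_norm_le
  refine (isBounded_iff_forall_norm_le).2 ⟨e⁻¹ * (R + ‖x0‖), fun x hx => ?_⟩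
  have hm : x0 + e • x ∈ polytope η κ := by
    intro i
    rw [dotp_add, dotp_smul]
    nlinarith [he i, mul_le_mul_of_nonneg_left (hx i) hepos.le]
  have h1 := hR _ hm
  have h2 : ‖e • x‖ ≤ R + ‖x0‖ := by
    have : e • x = (x0 + e • x) - x0 := by abel
    rw [this]
    exact (norm_sub_le _ _).trans (by linarith)
  rw [norm_smul, Real.norm_of_nonneg hepos.le] at h2
  rw [← div_eq_inv_mul, le_div_iff₀ hepos]
  linarith

lemma vol_ne_top {η : Fin N → Fin n → ℝ} {κ : Fin N → ℝ} (h : GoodPolytope η κ)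
    (κ' : Fin N → ℝ) : volume (polytope η κ') ≠ ⊤ :=
  (bounded_all h κ').measure_lt_top.ne

def HasFace (η : Fin N → Fin n → ℝ) (κ : Fin N → ℝ) (I : Finset (Fin N)) : Prop :=
  ∃ x ∈ polytope η κ, ∀ i ∈ I, dotp (η i) x = κ i

lemma hasFace_iff {η : Fin N → Fin n → ℝ} {κ : Fin N → ℝ} {I : Finset (Fin N)}
    (hI : I.Nonempty) : (⋂ i ∈ I, facet η κ i).Nonempty ↔ HasFace η κ I := by
  obtain ⟨i0, hi0⟩ := hI
  constructor
  · rintro ⟨x, hx⟩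
    simp only [mem_iInter] at hx
    exact ⟨x, (hx i0 hi0).1, fun i hi => (hx i hi).2⟩
  · rintro ⟨x, hx, hxi⟩
    refine ⟨x, ?_⟩
    simp only [mem_iInter]
    exact fun i hi => ⟨hx, hxi i hi⟩

lemma Analogous.hasFace {η : Fin N → Fin n → ℝ} {κ κ' : Fin N → ℝ} (h : Analogous η κ κ')
    {I : Finset (Fin N)} (hI : I.Nonempty) : HasFace η κ' I ↔ HasFace η κ I := by
  rw [← hasFace_iff hI, ← hasFace_iff hI]; exact h I

lemma redundant {η : Fin N → Fin n → ℝ} {κ κ' : Fin N → ℝ} (h : Analogous η κ κ')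
    {I : Finset (Fin N)} (hI : I.Nonempty) (hF : HasFace η κ I) {x : Fin n → ℝ}
    (hx : ∀ j ∈ I, dotp (η j) x = κ' j)
    (hx2 : ∀ l, HasFace η κ (insert l I) → dotp (η l) x ≤ κ' l) : x ∈ polytope η κ' := by
  by_contra hxP
  obtain ⟨y, hy, hyI⟩ := (Analogous.hasFace h hI).2 hF
  have hne : (Finset.univ.filter fun l => κ' l < dotp (η l) x).Nonempty := by
    simp only [polytope, mem_ofPred_eq, not_forall, not_le] at hxP
    obtain ⟨l, hl⟩ := hxP
    exact ⟨l, by simpa using hl⟩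
  obtain ⟨l, hl, hmin⟩ := Finset.exists_min_image _
    (fun l => (κ' l - dotp (η l) y) / (dotp (η l) x - dotp (η l) y)) hne
  simp only [Finset.mem_filter, Finset.mem_univ, true_and] at hl hmin
  set t := (κ' l - dotp (η l) y) / (dotp (η l) x - dotp (η l) y) with ht
  have hd : 0 < dotp (η l) x - dotp (η l) y := by linarith [hy l]
  have ht0 : 0 ≤ t := div_nonneg (by linarith [hy l]) hd.le
  have ht1 : t ≤ 1 := by rw [ht, div_le_one hd]; linarith
  have htl : t * (dotp (η l) x - dotp (η l) y) = κ' l - dotp (η l) y := by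
    rw [ht]; field_simp
  refine absurd (hx2 l ?_) (not_le.2 hl)
  rw [← Analogous.hasFace h (Finset.insert_nonempty _ _)]
  have hz : ∀ m, dotp (η m) (y + t • (x - y)) = dotp (η m) y + t * (dotp (η m) x - dotp (η m) y) :=
    fun m => by rw [dotp_add, dotp_smul, dotp_sub]
  refine ⟨y + t • (x - y), fun m => ?_, fun m hm => ?_⟩
  · rw [hz]
    by_cases hm : κ' m < dotp (η m) x
    · have h1 := hmin m hm
      rw [le_div_iff₀ (by linarith [hy m])] at h1
      linarith
    · push Not at hm
      nlinarith [hy m]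
  · rw [hz]
    rcases Finset.mem_insert.1 hm with rfl | hm
    · linarith
    · rw [hyI m hm, hx m hm]; ring

lemma self_mem {η : Fin N → Fin n → ℝ} {κ : Fin N → ℝ} (h : GoodPolytope η κ) :
    κ ∈ {κ' | IsSimplePoly η κ' ∧ Analogous η κ κ'} := ⟨h.1, fun _ => Iff.rfl⟩

lemma chamber_analogous {η : Fin N → Fin n → ℝ} {κ κ' : Fin N → ℝ}
    (hm : κ' ∈ chamber η κ) : Analogous η κ κ' :=
  (connectedComponentIn_subset _ _ hm).2

lemma slab_vol (A : Set (Fin n → ℝ)) (v ξ : Fin n → ℝ) (hv : dotp v ξ = 1)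
    (hA : ∀ x, ∀ c : ℝ, x + c • ξ ∈ A ↔ x ∈ A) {s t : ℝ} (hst : s < t) :
    (volume (A ∩ {x | s < dotp v x ∧ dotp v x ≤ t})).toReal =
      (t - s) * (volume (A ∩ {x | 0 < dotp v x ∧ dotp v x ≤ 1})).toReal := by
  have hc : 0 < t - s := sub_pos.2 hst
  have h1 : volume (A ∩ {x | s < dotp v x ∧ dotp v x ≤ t}) =
      volume (A ∩ {x | 0 < dotp v x ∧ dotp v x ≤ t - s}) := by
    rw [← measure_preimage_add_right volume (s • ξ) (A ∩ {x | s < dotp v x ∧ dotp v x ≤ t})]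
    congr 1
    ext x
    simp only [mem_preimage, mem_inter_iff, mem_ofPred_eq, hA, dotp_add, dotp_smul, hv]
    constructor
    · rintro ⟨h1, h2, h3⟩; exact ⟨h1, by linarith, by linarith⟩
    · rintro ⟨h1, h2, h3⟩; exact ⟨h1, by linarith, by linarith⟩
  let f : (Fin n → ℝ) →ₗ[ℝ] (Fin n → ℝ) := LinearMap.transvection (dl v) ((t - s - 1) • ξ)
  have hf : ∀ x, f x = x + (dotp v x * (t - s - 1)) • ξ := by
    intro x
    simp [f, LinearMap.transvection.apply, smul_smul, dl]
  have hdet : LinearMap.det f = t - s := by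
    have : LinearMap.det f = 1 + dl v ((t - s - 1) • ξ) := LinearMap.transvection.det _ _
    rw [this]
    show 1 + dotp v _ = _
    rw [dotp_smul, hv]; ring
  have h2 : f ⁻¹' (A ∩ {x | 0 < dotp v x ∧ dotp v x ≤ t - s}) =
      A ∩ {x | 0 < dotp v x ∧ dotp v x ≤ 1} := by
    ext x
    simp only [mem_preimage, mem_inter_iff, mem_ofPred_eq, hf, hA, dotp_add, dotp_smul, hv]
    have e : dotp v x + dotp v x * (t - s - 1) * 1 = (t - s) * dotp v x := by ring
    rw [e]
    constructor
    · rintro ⟨h1, h2, h3⟩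
      exact ⟨h1, by rwa [mul_pos_iff_of_pos_left hc] at h2, by nlinarith⟩
    · rintro ⟨h1, h2, h3⟩
      exact ⟨h1, mul_pos hc h2, by nlinarith⟩
  have h3 := Measure.addHaar_preimage_linearMap volume (f := f) (by rw [hdet]; exact hc.ne')
    (A ∩ {x | 0 < dotp v x ∧ dotp v x ≤ t - s})
  rw [h2, hdet, abs_of_pos (inv_pos.2 hc)] at h3
  rw [h1, h3, ENNReal.toReal_mul, ENNReal.toReal_ofReal (inv_pos.2 hc).le]
  field_simp

lemma volFn_sub {η : Fin N → Fin n → ℝ} {κ : Fin N → ℝ} (h : GoodPolytope η κ) (i : Fin N)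
    (κ' : Fin N → ℝ) {s t : ℝ} (hst : s ≤ t) :
    (volume {x | (∀ j, j ≠ i → dotp (η j) x ≤ κ' j) ∧ s < dotp (η i) x ∧ dotp (η i) x ≤ t}).toReal
      = volFn η (update κ' i t) - volFn η (update κ' i s) := by
  have hsub : polytope η (update κ' i s) ⊆ polytope η (update κ' i t) := by
    intro x hx j
    by_cases hj : j = i
    · subst hj; have := hx j; simp only [update_self] at this ⊢; linarith
    · have := hx j; simpa [hj] using this
  have heq : {x | (∀ j, j ≠ i → dotp (η j) x ≤ κ' j) ∧ s < dotp (η i) x ∧ dotp (η i) x ≤ t} =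
      polytope η (update κ' i t) \ polytope η (update κ' i s) := by
    ext x
    simp only [mem_ofPred_eq, mem_sdiff, polytope]
    constructor
    · rintro ⟨h1, h2, h3⟩
      refine ⟨fun j => ?_, fun hc => ?_⟩
      · by_cases hj : j = i
        · subst hj; simpa using h3
        · simpa [hj] using h1 j hj
      · have := hc i; simp only [update_self] at this; linarith
    · rintro ⟨h1, h2⟩
      have h3 : ∀ j, j ≠ i → dotp (η j) x ≤ κ' j := fun j hj => by simpa [hj] using h1 j
      refine ⟨h3, ?_, by simpa using h1 i⟩
      by_contra hc
      push Not at hc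
      apply h2
      intro j
      by_cases hj : j = i
      · subst hj; simpa using hc
      · simpa [hj] using h3 j hj
  rw [heq]
  exact measureReal_sdiff hsub (isClosed_polytope η _).measurableSet (vol_ne_top h _)

lemma hasFace_pair {η : Fin N → Fin n → ℝ} {κ : Fin N → ℝ} {i j : Fin N} :
    HasFace η κ {j, i} ↔ (facet η κ i ∩ facet η κ j).Nonempty := by
  constructor
  · rintro ⟨x, hx, hI⟩
    exact ⟨x, ⟨hx, hI i (by simp)⟩, ⟨hx, hI j (by simp)⟩⟩
  · rintro ⟨x, hx, hx2⟩
    refine ⟨x, hx.1, fun k hk => ?_⟩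
    simp only [Finset.mem_insert, Finset.mem_singleton] at hk
    rcases hk with rfl | rfl
    exacts [hx2.2, hx.2]

theorem forward {η : Fin N → Fin n → ℝ} {κ : Fin N → ℝ} (h : GoodPolytope η κ) (i : Fin N)
    (hflat : FlatFacet η κ i) (κ' : Fin N → ℝ) (hκ' : κ' ∈ chamber η κ) :
    ∃ a b : ℝ, ∀ t : ℝ, update κ' i t ∈ chamber η κ →
      volFn η (update κ' i t) = a * t + b := by
  obtain ⟨ξ₀, hξ₀, hkill₀⟩ := hflat
  have hFi : HasFace η κ {i} := by
    obtain ⟨x, hx, hxi⟩ := h.2.2.2 i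
    exact ⟨x, hx, by simpa using hxi⟩
  have hne : dotp (η i) ξ₀ ≠ 0 := by
    intro h0
    obtain ⟨x, hx, hxi⟩ := hFi
    have hxi := hxi i (by simp)
    have hray : ∀ c : ℝ, x + c • ξ₀ ∈ polytope η κ := by
      intro c
      apply redundant (κ := κ) (fun _ => Iff.rfl) (I := {i}) (by simp) ⟨x, hx, by simpa using hxi⟩
      · intro j hj
        rw [Finset.mem_singleton] at hj
        subst hj
        rw [dotp_add, dotp_smul, h0, hxi]; ring
      · intro l hl
        rw [dotp_add, dotp_smul]
        by_cases hli : l = i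
        · subst hli; rw [h0, hxi]; simp
        · rw [hkill₀ l hli (hasFace_pair.1 hl)]
          simpa using hx l
    obtain ⟨R, hR⟩ := h.2.1.exists_norm_le
    have hpos : 0 < ‖ξ₀‖ := norm_pos_iff.2 hξ₀
    have h1 := hR _ (hray ((R + ‖x‖ + 1) / ‖ξ₀‖))
    have hR0 : 0 ≤ R := (norm_nonneg _).trans (hR x hx)
    have h2 : ‖((R + ‖x‖ + 1) / ‖ξ₀‖) • ξ₀‖ = R + ‖x‖ + 1 := by
      rw [norm_smul, Real.norm_of_nonneg (by positivity)]
      field_simp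
    have h3 := norm_sub_le (x + ((R + ‖x‖ + 1) / ‖ξ₀‖) • ξ₀) x
    rw [add_sub_cancel_left, h2] at h3
    linarith
  set ξ := (dotp (η i) ξ₀)⁻¹ • ξ₀ with hξ
  have hi1 : dotp (η i) ξ = 1 := by rw [hξ, dotp_smul, inv_mul_cancel₀ hne]
  have hkill : ∀ j, j ≠ i → HasFace η κ {j, i} → dotp (η j) ξ = 0 := by
    intro j hj hF
    rw [hξ, dotp_smul, hkill₀ j hj (hasFace_pair.1 hF), mul_zero]
  let A : Set (Fin n → ℝ) := {x | ∀ j, j ≠ i → HasFace η κ {j, i} → dotp (η j) x ≤ κ' j}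
  have hA : ∀ x, ∀ c : ℝ, x + c • ξ ∈ A ↔ x ∈ A := by
    intro x c
    refine forall_congr' fun j => forall_congr' fun hj => forall_congr' fun hF => ?_
    rw [dotp_add, dotp_smul, hkill j hj hF, mul_zero, add_zero]
  have hmem : ∀ t, update κ' i t ∈ chamber η κ → ∀ x ∈ A, dotp (η i) x = t →
      ∀ j, j ≠ i → dotp (η j) x ≤ κ' j := by
    intro t ht x hx hxt j hj
    have := redundant (chamber_analogous ht) (I := {i}) (by simp) hFi (x := x)
      (by intro j hj; rw [Finset.mem_singleton] at hj; subst hj; simpa using hxt)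
      (by
        intro l hl
        by_cases hli : l = i
        · subst hli; simp [hxt]
        · simpa [hli] using hx l hli hl) j
    simpa [hj] using this
  have key : ∀ s t, s < t → update κ' i s ∈ chamber η κ → update κ' i t ∈ chamber η κ →
      volFn η (update κ' i t) - volFn η (update κ' i s) =
        (t - s) * (volume (A ∩ {x | 0 < dotp (η i) x ∧ dotp (η i) x ≤ 1})).toReal := by
    intro s t hst hs ht
    rw [← slab_vol A (η i) ξ hi1 hA hst, ← volFn_sub h i κ' hst.le]
    congr 2
    ext x
    simp only [mem_inter_iff, mem_ofPred_eq]
    constructor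
    · rintro ⟨h1, h2⟩
      exact ⟨fun j hj _ => h1 j hj, h2⟩
    · rintro ⟨h1, h2, h3⟩
      refine ⟨fun j hj => ?_, h2, h3⟩
      have a1 := hmem s hs (x + (s - dotp (η i) x) • ξ) ((hA _ _).2 h1)
        (by rw [dotp_add, dotp_smul, hi1]; ring) j hj
      have a2 := hmem t ht (x + (t - dotp (η i) x) • ξ) ((hA _ _).2 h1)
        (by rw [dotp_add, dotp_smul, hi1]; ring) j hj
      rw [dotp_add, dotp_smul] at a1 a2
      by_cases hc : 0 ≤ dotp (η j) ξ
      · nlinarith [mul_nonneg (sub_nonneg.2 h3) hc]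
      · push Not at hc
        nlinarith [mul_nonneg (sub_nonneg.2 h2.le) (neg_nonneg.2 hc.le)]
  refine ⟨(volume (A ∩ {x | 0 < dotp (η i) x ∧ dotp (η i) x ≤ 1})).toReal,
    volFn η κ' - (volume (A ∩ {x | 0 < dotp (η i) x ∧ dotp (η i) x ≤ 1})).toReal * κ' i,
    fun t ht => ?_⟩
  have hself : update κ' i (κ' i) = κ' := update_eq_self i κ'
  rcases lt_trichotomy (κ' i) t with hlt | heq | hgt
  · have := key _ _ hlt (by rwa [hself]) ht
    rw [hself] at this
    linarith
  · rw [← heq, hself]; ring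
  · have := key _ _ hgt ht (by rwa [hself])
    rw [hself] at this
    linarith

lemma hasFace_closed {η : Fin N → Fin n → ℝ} {κ : Fin N → ℝ} (h : GoodPolytope η κ)
    (I : Finset (Fin N)) (hI : ¬ HasFace η κ I) : ∀ᶠ κ' in nhds κ, ¬ HasFace η κ' I := by
  obtain ⟨R, hR⟩ := (bounded_all h (fun l => κ l + 1)).exists_norm_le
  let C : Set ((Fin N → ℝ) × (Fin n → ℝ)) :=
    (Metric.closedBall κ 1 ×ˢ Metric.closedBall 0 R) ∩
      {p | (∀ l, dotp (η l) p.2 ≤ p.1 l) ∧ ∀ l ∈ I, dotp (η l) p.2 = p.1 l}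
  have hC : IsCompact C := by
    apply IsCompact.inter_right
    · exact (isCompact_closedBall _ _).prod (isCompact_closedBall _ _)
    · have e : {p : (Fin N → ℝ) × (Fin n → ℝ) | (∀ l, dotp (η l) p.2 ≤ p.1 l) ∧
          ∀ l ∈ I, dotp (η l) p.2 = p.1 l} = (⋂ l, {p | dotp (η l) p.2 ≤ p.1 l}) ∩
          ⋂ l ∈ I, {p | dotp (η l) p.2 = p.1 l} := by
        ext p; simp
      rw [e]
      have hc : ∀ l, Continuous fun p : (Fin N → ℝ) × (Fin n → ℝ) => dotp (η l) p.2 :=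
        fun l => (continuous_dotp _).comp continuous_snd
      have hc2 : ∀ l, Continuous fun p : (Fin N → ℝ) × (Fin n → ℝ) => p.1 l :=
        fun l => by fun_prop
      refine IsClosed.inter (isClosed_iInter fun l => isClosed_le (hc l) (hc2 l)) ?_
      exact isClosed_iInter fun l => isClosed_iInter fun _ => isClosed_eq (hc l) (hc2 l)
  have hcl : IsClosed (Prod.fst '' C) := (hC.image continuous_fst).isClosed
  have hn : κ ∉ Prod.fst '' C := by
    rintro ⟨⟨k, x⟩, hp, rfl⟩
    exact hI ⟨x, hp.2.1, hp.2.2⟩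
  filter_upwards [hcl.isOpen_compl.mem_nhds hn, Metric.closedBall_mem_nhds κ one_pos] with κ' h1 h2
  rintro ⟨x, hx, hxI⟩
  refine h1 ⟨(κ', x), ⟨⟨h2, ?_⟩, hx, hxI⟩, rfl⟩
  simp only [mem_closedBall_zero_iff]
  refine hR x fun l => (hx l).trans ?_
  have h3 : |κ' l - κ l| ≤ 1 := by
    have := (dist_le_pi_dist κ' κ l).trans (Metric.mem_closedBall.1 h2)
    rwa [Real.dist_eq] at this
  linarith [(abs_le.1 h3).2]

lemma hasFace_open {η : Fin N → Fin n → ℝ} {κ : Fin N → ℝ} (h : GoodPolytope η κ)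
    (I : Finset (Fin N)) (hI : HasFace η κ I) : ∀ᶠ κ' in nhds κ, HasFace η κ' I := by
  obtain ⟨x, hx, hxI⟩ := hI
  have hli := h.1 x hx
  choose e he using fun j : {j : Fin N // dotp (η j) x = κ j} =>
    dotp_solve hli (fun k => if k = j then 1 else 0)
  let X : (Fin N → ℝ) → Fin n → ℝ := fun κ' => x + ∑ j, (κ' j.1 - κ j.1) • e j
  have hX : Continuous X := by fun_prop
  have hX0 : X κ = x := by simp [X]
  have hact : ∀ κ' l, dotp (η l) x = κ l → dotp (η l) (X κ') = κ' l := by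
    intro κ' l hl
    simp only [X, dotp_add, dotp_sum, dotp_smul]
    have : ∀ j, dotp (η l) (e j) = if (⟨l, hl⟩ : {j : Fin N // dotp (η j) x = κ j}) = j then 1 else 0 :=
      fun j => he j ⟨l, hl⟩
    simp [this, hl]
  have hev : ∀ᶠ κ' in nhds κ, ∀ l, dotp (η l) x ≠ κ l → dotp (η l) (X κ') < κ' l := by
    rw [Filter.eventually_all]
    intro l
    by_cases hl : dotp (η l) x = κ l
    · exact Filter.Eventually.of_forall fun _ hc => absurd hl hc
    · have : ∀ᶠ κ' in nhds κ, dotp (η l) (X κ') < κ' l := by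
        apply ContinuousAt.eventually_lt
        · exact ((continuous_dotp _).comp hX).continuousAt
        · exact (continuous_apply l).continuousAt
        · show dotp (η l) (X κ) < κ l
          rw [hX0]; exact lt_of_le_of_ne (hx l) hl
      filter_upwards [this] with κ' h1 _ using h1
  filter_upwards [hev] with κ' h1
  refine ⟨X κ', fun l => ?_, fun l hl => hact κ' l (hxI l hl)⟩
  by_cases hl : dotp (η l) x = κ l
  · exact (hact κ' l hl).le
  · exact (h1 l hl).le

lemma chamber_nhds {η : Fin N → Fin n → ℝ} {κ : Fin N → ℝ} (h : GoodPolytope η κ) :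
    ∃ r > 0, ∀ κ' : Fin N → ℝ, (∀ l, |κ' l - κ l| ≤ r) → κ' ∈ chamber η κ := by
  have hev : ∀ᶠ κ' in nhds κ, ∀ I : Finset (Fin N), HasFace η κ' I ↔ HasFace η κ I := by
    rw [Filter.eventually_all]
    intro I
    by_cases hI : HasFace η κ I
    · filter_upwards [hasFace_open h I hI] with κ' h1 using ⟨fun _ => hI, fun _ => h1⟩
    · filter_upwards [hasFace_closed h I hI] with κ' h1
      exact ⟨fun h2 => absurd h2 h1, fun h2 => absurd h2 hI⟩
  have hgood : ∀ᶠ κ' in nhds κ, κ' ∈ {κ' | IsSimplePoly η κ' ∧ Analogous η κ κ'} := by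
    filter_upwards [hev] with κ' h1
    constructor
    · intro x hx
      obtain ⟨y, hy, hyI⟩ := (h1 (Finset.univ.filter fun l => dotp (η l) x = κ' l)).1
        ⟨x, hx, by simp⟩
      simp only [Finset.mem_filter, Finset.mem_univ, true_and] at hyI
      have hli := h.1 y hy
      exact hli.comp (fun j : {j : Fin N // dotp (η j) x = κ' j} => ⟨j.1, hyI j.1 j.2⟩)
        (fun a b hab => by simpa [Subtype.ext_iff] using hab)
    · intro I
      rcases I.eq_empty_or_nonempty with rfl | hI
      · simp
      · rw [hasFace_iff hI, hasFace_iff hI]; exact h1 I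
  obtain ⟨r, hr, hb⟩ := Metric.eventually_nhds_iff_ball.1 hgood
  have hsub : Metric.ball κ r ⊆ chamber η κ :=
    (convex_ball κ r).isPreconnected.subset_connectedComponentIn (Metric.mem_ball_self hr) hb
  refine ⟨r / 2, half_pos hr, fun κ' hκ' => hsub ?_⟩
  rw [Metric.mem_ball, dist_pi_lt_iff hr]
  intro l
  rw [Real.dist_eq]
  linarith [hκ' l]

lemma leaves_polytope {η : Fin N → Fin n → ℝ} {κ : Fin N → ℝ} (h : GoodPolytope η κ) {x e : Fin n → ℝ}
    (hx : x ∈ polytope η κ) (he : e ≠ 0) (hact : ∀ j, dotp (η j) x = κ j → dotp (η j) e ≤ 0) :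
    ∃ τ : ℝ, 0 < τ ∧ x + τ • e ∈ polytope η κ ∧
      ∃ b, 0 < dotp (η b) e ∧ dotp (η b) (x + τ • e) = κ b := by
  have hne : (Finset.univ.filter fun l => 0 < dotp (η l) e).Nonempty := by
    by_contra hc
    rw [Finset.not_nonempty_iff_eq_empty, Finset.filter_eq_empty_iff] at hc
    simp only [Finset.mem_univ, true_implies, not_lt] at hc
    obtain ⟨R, hR⟩ := h.2.1.exists_norm_le
    have hpos : 0 < ‖e‖ := norm_pos_iff.2 he
    have hR0 : 0 ≤ R := (norm_nonneg _).trans (hR x hx)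
    have hray : x + ((R + ‖x‖ + 1) / ‖e‖) • e ∈ polytope η κ := by
      intro l
      rw [dotp_add, dotp_smul]
      have h1 : 0 ≤ (R + ‖x‖ + 1) / ‖e‖ := by positivity
      nlinarith [hx l, @hc l]
    have h1 := hR _ hray
    have h2 : ‖((R + ‖x‖ + 1) / ‖e‖) • e‖ = R + ‖x‖ + 1 := by
      rw [norm_smul, Real.norm_of_nonneg (by positivity)]
      field_simp
    have h3 := norm_sub_le (x + ((R + ‖x‖ + 1) / ‖e‖) • e) x
    rw [add_sub_cancel_left, h2] at h3
    linarith
  obtain ⟨b, hb, hmin⟩ := Finset.exists_min_image _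
    (fun l => (κ l - dotp (η l) x) / dotp (η l) e) hne
  simp only [Finset.mem_filter, Finset.mem_univ, true_and] at hb hmin
  have hbx : dotp (η b) x < κ b :=
    lt_of_le_of_ne (hx b) fun hc => absurd (hact b hc) (not_le.2 hb)
  have hτ : 0 < (κ b - dotp (η b) x) / dotp (η b) e := div_pos (sub_pos.2 hbx) hb
  refine ⟨(κ b - dotp (η b) x) / dotp (η b) e, hτ, fun l => ?_, b, hb, ?_⟩
  · rw [dotp_add, dotp_smul]
    by_cases hl : 0 < dotp (η l) e
    · have := hmin l hl
      rw [le_div_iff₀ hl] at this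
      linarith
    · push Not at hl
      nlinarith [hx l]
  · rw [dotp_add, dotp_smul]
    field_simp
    ring

def IsV (η : Fin N → Fin n → ℝ) (κ : Fin N → ℝ) (v : Fin n → ℝ) : Prop :=
  v ∈ polytope η κ ∧ ∀ x, (∀ j, dotp (η j) v = κ j → dotp (η j) x = 0) → x = 0

def act (η : Fin N → Fin n → ℝ) (κ : Fin N → ℝ) (v : Fin n → ℝ) : Finset (Fin N) :=
  Finset.univ.filter fun l => dotp (η l) v = κ l

lemma mem_act {η : Fin N → Fin n → ℝ} {κ : Fin N → ℝ} {v : Fin n → ℝ} {l : Fin N} :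
    l ∈ act η κ v ↔ dotp (η l) v = κ l := by simp [act]

lemma exists_vertex {η : Fin N → Fin n → ℝ} {κ : Fin N → ℝ} (h : GoodPolytope η κ) (i : Fin N) :
    ∃ v, IsV η κ v ∧ dotp (η i) v = κ i := by
  obtain ⟨v, hv, hmax⟩ := Set.Finite.exists_maximalFor' (act η κ) (facet η κ i) (Set.toFinite _)
    (h.2.2.2 i)
  refine ⟨v, ⟨hv.1, fun x hx => ?_⟩, hv.2⟩
  by_contra hne
  obtain ⟨τ, hτ, hP, b, hb, hb2⟩ := leaves_polytope h hv.1 hne (fun j hj => (hx j hj).le)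
  have hle : act η κ v ≤ act η κ (v + τ • x) := by
    intro l hl
    rw [mem_act] at hl ⊢
    rw [dotp_add, dotp_smul, hx l hl, hl]; ring
  have h1 : v + τ • x ∈ facet η κ i := ⟨hP, mem_act.1 (hle (mem_act.2 hv.2))⟩
  have h2 := hmax h1 hle (mem_act.2 hb2)
  rw [mem_act] at h2
  exact hb.ne' (hx b h2)

lemma vertex_inj {η : Fin N → Fin n → ℝ} {κ : Fin N → ℝ} {v w : Fin n → ℝ} (hv : IsV η κ v)
    (hw : act η κ v = act η κ w) : v = w := by
  have := hv.2 (v - w) fun j hj => by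
    have h1 : j ∈ act η κ w := hw ▸ mem_act.2 hj
    rw [dotp_sub, hj, mem_act.1 h1, sub_self]
  exact sub_eq_zero.1 this

lemma solve_act {η : Fin N → Fin n → ℝ} {κ : Fin N → ℝ} (h : GoodPolytope η κ) {x : Fin n → ℝ}
    (hx : x ∈ polytope η κ) (c : Fin N → ℝ) :
    ∃ y, ∀ j, dotp (η j) x = κ j → dotp (η j) y = c j := by
  obtain ⟨y, hy⟩ := dotp_solve (h.1 x hx) (fun j => c j.1)
  exact ⟨y, fun j hj => hy ⟨j, hj⟩⟩

def Reg (η : Fin N → Fin n → ℝ) (κ : Fin N → ℝ) (i : Fin N) (ε : ℝ) (J : Finset (Fin N)) (α β : ℝ)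
    (κ' : Fin N → ℝ) : Set (Fin n → ℝ) :=
  {x | (∀ j ∈ J, κ j < dotp (η j) x ∧ dotp (η j) x ≤ κ j + ε) ∧
    (∀ j, j ∉ J → j ≠ i → dotp (η j) x ≤ κ' j) ∧ α < dotp (η i) x ∧ dotp (η i) x ≤ β}

lemma measurable_dotp (v : Fin n → ℝ) : Measurable (dotp v) := (continuous_dotp v).measurable

lemma measurable_Reg (η : Fin N → Fin n → ℝ) (κ : Fin N → ℝ) (i : Fin N) (ε : ℝ)
    (J : Finset (Fin N)) (α β : ℝ) (κ' : Fin N → ℝ) : MeasurableSet (Reg η κ i ε J α β κ') := by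
  have e : Reg η κ i ε J α β κ' =
      ((⋂ j ∈ J, {x | κ j < dotp (η j) x} ∩ {x | dotp (η j) x ≤ κ j + ε}) ∩
      (⋂ j, ⋂ (_ : j ∉ J), ⋂ (_ : j ≠ i), {x | dotp (η j) x ≤ κ' j})) ∩
      ({x | α < dotp (η i) x} ∩ {x | dotp (η i) x ≤ β}) := by
    ext x; simp [Reg, and_assoc]
  rw [e]
  have m1 : ∀ (j : Fin N) (c : ℝ), MeasurableSet {x | dotp (η j) x ≤ c} := fun j c =>
    measurableSet_le (measurable_dotp _) measurable_const
  have m2 : ∀ (j : Fin N) (c : ℝ), MeasurableSet {x | c < dotp (η j) x} := fun j c =>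
    measurableSet_lt measurable_const (measurable_dotp _)
  refine MeasurableSet.inter (MeasurableSet.inter ?_ ?_) ((m2 _ _).inter (m1 _ _))
  · exact MeasurableSet.iInter fun j => MeasurableSet.iInter fun _ => (m2 _ _).inter (m1 _ _)
  · exact MeasurableSet.iInter fun j => MeasurableSet.iInter fun _ => MeasurableSet.iInter fun _ =>
      m1 _ _

lemma Reg_ne_top {η : Fin N → Fin n → ℝ} {κ : Fin N → ℝ} (h : GoodPolytope η κ) (i : Fin N) (ε : ℝ)
    (J : Finset (Fin N)) (α β : ℝ) (κ' : Fin N → ℝ) : volume (Reg η κ i ε J α β κ') ≠ ⊤ := by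
  refine ne_top_of_le_ne_top (vol_ne_top h fun j => max (κ j + ε) (max (κ' j) β))
    (measure_mono ?_)
  rintro x ⟨h1, h2, h3, h4⟩ j
  by_cases hj : j ∈ J
  · exact (h1 j hj).2.trans (le_max_left _ _)
  · by_cases hi : j = i
    · subst hi; exact h4.trans ((le_max_right _ _).trans (le_max_right _ _))
    · exact (h2 j hj hi).trans ((le_max_left _ _).trans (le_max_right _ _))

lemma Reg_insert {η : Fin N → Fin n → ℝ} {κ : Fin N → ℝ} (h : GoodPolytope η κ) (i : Fin N)
    {ε : ℝ} (hε : 0 < ε) (J : Finset (Fin N)) {j : Fin N} (hj : j ∉ J) (hji : j ≠ i) (α β : ℝ)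
    (κ' : Fin N → ℝ) :
    (volume (Reg η κ i ε (insert j J) α β κ')).toReal =
      (volume (Reg η κ i ε J α β (update κ' j (κ j + ε)))).toReal -
      (volume (Reg η κ i ε J α β (update κ' j (κ j)))).toReal := by
  have hsub : Reg η κ i ε J α β (update κ' j (κ j)) ⊆
      Reg η κ i ε J α β (update κ' j (κ j + ε)) := by
    rintro x ⟨h1, h2, h3⟩
    refine ⟨h1, fun l hl hli => (h2 l hl hli).trans ?_, h3⟩
    by_cases hlj : l = j
    · subst hlj; simp [hε.le]
    · simp [hlj]
  have heq : Reg η κ i ε (insert j J) α β κ' = Reg η κ i ε J α β (update κ' j (κ j + ε)) \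
      Reg η κ i ε J α β (update κ' j (κ j)) := by
    ext x
    constructor
    · rintro ⟨h1, h2, h3⟩
      refine ⟨⟨fun l hl => h1 l (Finset.mem_insert_of_mem hl), fun l hl hli => ?_, h3⟩, fun hc => ?_⟩
      · by_cases hlj : l = j
        · subst hlj; simpa using (h1 l (Finset.mem_insert_self _ _)).2
        · simpa [hlj] using h2 l (by simp [hlj, hl]) hli
      · have h4 := hc.2.1 j hj hji
        rw [update_self] at h4
        linarith [(h1 j (Finset.mem_insert_self _ _)).1]
    · rintro ⟨⟨h1, h2, h3⟩, h4⟩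
      have h5 : ∀ l, l ∉ J → l ≠ i → l ≠ j → dotp (η l) x ≤ κ' l := fun l a b c => by
        simpa [c] using h2 l a b
      refine ⟨fun l hl => ?_, fun l hl hli => ?_, h3⟩
      · rcases Finset.mem_insert.1 hl with rfl | hl
        · refine ⟨?_, by simpa using h2 l hj hji⟩
          by_contra hc
          push Not at hc
          refine h4 ⟨h1, fun m hm hmi => ?_, h3⟩
          by_cases hml : m = l
          · subst hml; simpa using hc
          · simpa [hml] using h5 m hm hmi hml
        · exact h1 l hl
      · rw [Finset.mem_insert, not_or] at hl
        exact h5 l hl.2 hli hl.1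
  rw [heq]
  exact measureReal_sdiff hsub (measurable_Reg _ _ _ _ _ _ _ _) (Reg_ne_top h _ _ _ _ _ _)

lemma box_eq {η : Fin N → Fin n → ℝ} {κ : Fin N → ℝ} (h : GoodPolytope η κ) (i : Fin N)
    (H : ∀ κ' ∈ chamber η κ, ∃ a b : ℝ, ∀ t : ℝ, update κ' i t ∈ chamber η κ →
          volFn η (update κ' i t) = a * t + b)
    {ε : ℝ} (hε : 0 < ε) (hr : ∀ κ' : Fin N → ℝ, (∀ l, |κ' l - κ l| ≤ 2 * ε) → κ' ∈ chamber η κ)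
    (J : Finset (Fin N)) : i ∉ J →
    ∀ κ' : Fin N → ℝ, (∀ l, κ l ≤ κ' l ∧ κ' l ≤ κ l + ε) →
      (volume (Reg η κ i ε J (κ i) (κ i + ε) κ')).toReal =
      (volume (Reg η κ i ε J (κ i + ε) (κ i + 2 * ε) κ')).toReal := by
  induction J using Finset.induction_on with
  | empty =>
    intro _ κ' hκ'
    have e : ∀ α β, Reg η κ i ε ∅ α β κ' =
        {x | (∀ j, j ≠ i → dotp (η j) x ≤ κ' j) ∧ α < dotp (η i) x ∧ dotp (η i) x ≤ β} := by
      intro α β; ext x; simp [Reg]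
    have hin : ∀ t, κ i ≤ t → t ≤ κ i + 2 * ε → update κ' i t ∈ chamber η κ := by
      intro t h1 h2
      apply hr
      intro l
      by_cases hl : l = i
      · subst hl; rw [update_self, abs_le]; constructor <;> linarith
      · rw [update_of_ne hl, abs_le]; constructor <;> linarith [hκ' l]
    have hκ'c : κ' ∈ chamber η κ := by
      apply hr
      intro l
      rw [abs_le]; constructor <;> linarith [hκ' l]
    obtain ⟨a, b, hab⟩ := H κ' hκ'c
    rw [e, e, volFn_sub h i κ' (by linarith), volFn_sub h i κ' (by linarith),
      hab _ (hin _ (by linarith) (by linarith)), hab _ (hin _ (by linarith) (by linarith)),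
      hab _ (hin _ (by linarith) (by linarith))]
    ring
  | insert j J hj ih =>
    intro hi κ' hκ'
    rw [Finset.mem_insert, not_or] at hi
    have hu : ∀ c, κ j ≤ c → c ≤ κ j + ε →
        ∀ l, κ l ≤ update κ' j c l ∧ update κ' j c l ≤ κ l + ε := by
      intro c h1 h2 l
      by_cases hl : l = j
      · subst hl; simpa using ⟨h1, h2⟩
      · simpa [hl] using hκ' l
    rw [Reg_insert h i hε J hj (Ne.symm hi.1), Reg_insert h i hε J hj (Ne.symm hi.1),
      ih hi.2 _ (hu _ (by linarith) le_rfl), ih hi.2 _ (hu _ le_rfl (by linarith))]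

lemma edge_step {η : Fin N → Fin n → ℝ} {κ : Fin N → ℝ} (h : GoodPolytope η κ) (i : Fin N)
    (H : ∀ κ' ∈ chamber η κ, ∃ a b : ℝ, ∀ t : ℝ, update κ' i t ∈ chamber η κ →
          volFn η (update κ' i t) = a * t + b)
    {v e ξ : Fin n → ℝ} {k : Fin N} (hv : IsV η κ v) (hi : dotp (η i) v = κ i)
    (hk : dotp (η k) v = κ k) (hki : k ≠ i) (hek : dotp (η k) e = -1)
    (hej : ∀ j, dotp (η j) v = κ j → j ≠ k → dotp (η j) e = 0)
    (hξi : dotp (η i) ξ = 1) (hξ : ∀ j, dotp (η j) v = κ j → j ≠ i → dotp (η j) ξ = 0) :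
    ∃ τ : ℝ, 0 < τ ∧ IsV η κ (v + τ • e) ∧ dotp (η i) (v + τ • e) = κ i ∧
      ∀ j, dotp (η j) (v + τ • e) = κ j → j ≠ i → dotp (η j) ξ = 0 := by
  have he : e ≠ 0 := by
    rintro rfl
    rw [dotp_zero] at hek
    norm_num at hek
  obtain ⟨τ, hτ, hP, b, hbe, hb⟩ := leaves_polytope h hv.1 he (fun j hj => by
    by_cases hjk : j = k
    · subst hjk; rw [hek]; norm_num
    · exact (hej j hj hjk).le)
  set w := v + τ • e with hw
  set K : Finset (Fin N) := (act η κ v).erase k with hK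
  have memK : ∀ {j}, j ∈ K ↔ j ≠ k ∧ dotp (η j) v = κ j := by
    intro j; rw [hK, Finset.mem_erase, mem_act]
  have hiK : i ∈ K := memK.2 ⟨hki.symm, hi⟩
  have hwdot : ∀ j, dotp (η j) w = dotp (η j) v + τ * dotp (η j) e := fun j => by
    rw [hw, dotp_add, dotp_smul]
  have hKw : ∀ j ∈ K, dotp (η j) w = κ j := by
    intro j hj
    obtain ⟨h1, h2⟩ := memK.1 hj
    rw [hwdot, h2, hej j h2 h1]; ring
  have hker : ∀ x, (∀ j ∈ K, dotp (η j) x = 0) → x = (-dotp (η k) x) • e := by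
    intro x hx
    have := hv.2 (x - (-dotp (η k) x) • e) fun j hj => by
      rw [dotp_sub, dotp_smul]
      by_cases hjk : j = k
      · subst hjk; rw [hek]; ring
      · rw [hx j (memK.2 ⟨hjk, hj⟩), hej j hj hjk]; ring
    exact sub_eq_zero.1 this
  have hbv : dotp (η b) v < κ b := by
    have := hwdot b
    rw [hb] at this
    nlinarith [mul_pos hτ hbe]
  have hbK : b ∉ K := fun hc => hbv.ne (memK.1 hc).2
  have hbk : b ≠ k := by rintro rfl; exact hbv.ne hk
  have hkw : dotp (η k) w < κ k := by rw [hwdot, hk, hek]; linarith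
  have hactw : ∀ l, dotp (η l) w = κ l → l ∈ K ∨ l = b := by
    intro l hl
    by_contra hc
    push Not at hc
    obtain ⟨y, hy⟩ := solve_act h hP (fun m => if m = l then 1 else 0)
    have hyK : ∀ j ∈ K, dotp (η j) y = 0 := fun j hj => by
      rw [hy j (hKw j hj), if_neg]; rintro rfl; exact hc.1 hj
    have h1 := hker y hyK
    have h2 : dotp (η b) y = 0 := by rw [hy b hb, if_neg (Ne.symm hc.2)]
    rw [h1, dotp_smul] at h2
    rcases mul_eq_zero.1 h2 with h3 | h3
    · rw [h3, zero_smul] at h1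
      have h4 := hy l hl
      rw [h1, dotp_zero, if_pos rfl] at h4
      norm_num at h4
    · exact hbe.ne' h3
  have hwV : IsV η κ w := by
    refine ⟨hP, fun x hx => ?_⟩
    have h1 := hker x fun j hj => hx j (hKw j hj)
    have h2 := hx b hb
    rw [h1, dotp_smul] at h2
    rcases mul_eq_zero.1 h2 with h3 | h3
    · rw [h1, h3, zero_smul]
    · exact absurd h3 hbe.ne'
  have hedge : ∀ l, HasFace η κ (insert l K) → l ∈ K ∨ l = k ∨ l = b := by
    rintro l ⟨y, hy, hyI⟩
    by_contra hc
    push Not at hc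
    obtain ⟨hc1, hc2, hc3⟩ := hc
    have h1 := hker (y - v) fun j hj => by
      rw [dotp_sub, hyI j (Finset.mem_insert_of_mem hj), (memK.1 hj).2, sub_self]
    set z := -dotp (η k) (y - v) with hz
    have hydot : ∀ j, dotp (η j) y = dotp (η j) v + z * dotp (η j) e := by
      intro j
      have : y = v + z • e := by rw [← h1]; abel
      rw [this, dotp_add, dotp_smul]
    have hz0 : 0 ≤ z := by rw [hz, dotp_sub, hk]; linarith [hy k]
    have hzτ : z ≤ τ := by
      have h2 := hy b
      rw [hydot b, ← hb, hwdot b] at h2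
      exact le_of_mul_le_mul_right (by linarith) hbe
    have hlv : dotp (η l) v < κ l :=
      lt_of_le_of_ne (hv.1 l) fun hc => hc1 (memK.2 ⟨hc2, hc⟩)
    have hlw : dotp (η l) w < κ l :=
      lt_of_le_of_ne (hP l) fun hc => (hactw l hc).elim hc1 hc3
    have hly := hyI l (Finset.mem_insert_self _ _)
    rw [hydot] at hly
    rw [hwdot] at hlw
    by_cases hs : 0 ≤ dotp (η l) e
    · nlinarith [mul_le_mul_of_nonneg_right hzτ hs]
    · push Not at hs
      nlinarith [mul_nonneg hz0 (neg_nonneg.2 hs.le)]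
  have hFK : HasFace η κ K := ⟨v, hv.1, fun j hj => (memK.1 hj).2⟩
  obtain ⟨r, hr0, hr⟩ := chamber_nhds h
  set ε := r / 2 with hεdef
  have hε : 0 < ε := half_pos hr0
  have hr2 : ∀ κ' : Fin N → ℝ, (∀ l, |κ' l - κ l| ≤ 2 * ε) → κ' ∈ chamber η κ :=
    fun κ' hκ' => hr κ' fun l => (hκ' l).trans (by rw [hεdef]; linarith)
  have hbox := box_eq h i H hε hr2 (K.erase i) (by simp) κ (fun l => ⟨le_rfl, by linarith⟩)
  let Q : ℝ → ℝ → ℝ → Set (Fin n → ℝ) := fun α β γ =>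
    {x | (∀ j ∈ K, j ≠ i → κ j < dotp (η j) x ∧ dotp (η j) x ≤ κ j + ε) ∧
      dotp (η k) x ≤ κ k ∧ dotp (η b) x ≤ γ ∧ α < dotp (η i) x ∧ dotp (η i) x ≤ β}
  have hbi : b ≠ i := by rintro rfl; exact hbK hiK
  have hkK : k ∉ K := by simp [hK]
  have hRegQ : ∀ α β, κ i ≤ α → β ≤ κ i + 2 * ε →
      Reg η κ i ε (K.erase i) α β κ = Q α β (κ b) := by
    intro α β hα hβ
    ext x
    constructor
    · rintro ⟨h1, h2, h3⟩
      exact ⟨fun j hj hji => h1 j (Finset.mem_erase.2 ⟨hji, hj⟩),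
        h2 k (by simp [hkK]) hki, h2 b (by simp [hbK]) hbi, h3⟩
    · rintro ⟨h1, h2, h3, h4, h5⟩
      let κ' : Fin N → ℝ := fun l => if l ∈ K then dotp (η l) x else κ l
      have hκ' : κ' ∈ chamber η κ := by
        apply hr2
        intro l
        by_cases hl : l ∈ K
        · simp only [κ', if_pos hl]
          by_cases hli : l = i
          · subst hli; rw [abs_le]; constructor <;> linarith
          · rw [abs_le]; constructor <;> linarith [h1 l hl hli]
        · simp only [κ', if_neg hl, sub_self, abs_zero]; linarith
      have hxP : x ∈ polytope η κ' := by
        refine redundant (chamber_analogous hκ') ⟨i, hiK⟩ hFK (fun j hj => by simp [κ', hj]) ?_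
        intro l hl
        rcases hedge l hl with h6 | rfl | rfl
        · simp [κ', h6]
        · simpa [κ', hkK] using h2
        · simpa [κ', hbK] using h3
      refine ⟨fun j hj => h1 j (Finset.mem_of_mem_erase hj) (Finset.ne_of_mem_erase hj),
        fun j hj hji => ?_, h4, h5⟩
      have hjK : j ∉ K := fun hc => hj (Finset.mem_erase.2 ⟨hji, hc⟩)
      simpa [κ', hjK] using hxP j
  set c := dotp (η b) ξ with hc
  have htrans : volume (Q (κ i + ε) (κ i + 2 * ε) (κ b)) =
      volume (Q (κ i) (κ i + ε) (κ b - ε * c)) := by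
    rw [← measure_preimage_add_right volume (ε • ξ) (Q (κ i + ε) (κ i + 2 * ε) (κ b))]
    congr 1
    ext x
    simp only [mem_preimage, Q, mem_ofPred_eq, dotp_add, dotp_smul, hξi, ← hc, hξ k hk hki]
    constructor
    · rintro ⟨h1, h2, h3, h4, h5⟩
      refine ⟨fun j hj hji => ?_, by linarith, by linarith, by linarith, by linarith⟩
      have := h1 j hj hji
      rw [hξ j (memK.1 hj).2 hji] at this
      constructor <;> linarith
    · rintro ⟨h1, h2, h3, h4, h5⟩
      refine ⟨fun j hj hji => ?_, by linarith, by linarith, by linarith, by linarith⟩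
      have := h1 j hj hji
      rw [hξ j (memK.1 hj).2 hji]
      constructor <;> linarith
  rw [hRegQ _ _ le_rfl (by linarith), hRegQ _ _ (by linarith) le_rfl, htrans] at hbox
  have hmono : ∀ α β, α ≤ κ b → κ b ≤ β → α < β → volume (Q (κ i) (κ i + ε) β) ≠ ⊤ →
      (volume (Q (κ i) (κ i + ε) α)).toReal ≠ (volume (Q (κ i) (κ i + ε) β)).toReal := by
    intro α β hα hβ hαβ hfin heq
    have hsub : Q (κ i) (κ i + ε) α ⊆ Q (κ i) (κ i + ε) β := by
      rintro x ⟨h1, h2, h3, h4⟩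
      exact ⟨h1, h2, h3.trans hαβ.le, h4⟩
    have hfin2 : volume (Q (κ i) (κ i + ε) α) ≠ ⊤ := ne_top_of_le_ne_top hfin (measure_mono hsub)
    have heq2 := (ENNReal.toReal_eq_toReal_iff' hfin2 hfin).1 heq
    let O : Set (Fin n → ℝ) := (⋂ j ∈ K, {x | κ j < dotp (η j) x} ∩ {x | dotp (η j) x < κ j + ε}) ∩
      ({x | dotp (η k) x < κ k} ∩ ({x | α < dotp (η b) x} ∩ {x | dotp (η b) x < β}))
    have o1 : ∀ (j : Fin N) (c : ℝ), IsOpen {x | dotp (η j) x < c} := fun j c =>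
      isOpen_lt (continuous_dotp _) continuous_const
    have o2 : ∀ (j : Fin N) (c : ℝ), IsOpen {x | c < dotp (η j) x} := fun j c =>
      isOpen_lt continuous_const (continuous_dotp _)
    have hO : IsOpen O := by
      refine IsOpen.inter ?_ ((o1 _ _).inter ((o2 _ _).inter (o1 _ _)))
      exact isOpen_biInter_finset fun j _ => (o2 _ _).inter (o1 _ _)
    have hOne : O.Nonempty := by
      obtain ⟨y, hy⟩ := solve_act h hP (fun m => if m = b then β + α - 2 * κ b else 1)
      have hev : ∀ᶠ s : ℝ in nhdsWithin 0 (Ioi 0),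
          dotp (η k) w + s * dotp (η k) y < κ k ∧ s < 1 ∧ s < ε := by
        apply Filter.Eventually.filter_mono nhdsWithin_le_nhds
        refine Filter.Eventually.and ?_ ((eventually_lt_nhds one_pos).and (eventually_lt_nhds hε))
        have hcont : Continuous fun s : ℝ => dotp (η k) w + s * dotp (η k) y := by fun_prop
        apply hcont.continuousAt.eventually_lt continuousAt_const
        simpa using hkw
      obtain ⟨s, ⟨hs1, hs2, hs3⟩, hs0⟩ := (hev.and self_mem_nhdsWithin).exists
      have hs0 : 0 < s := hs0
      refine ⟨w + s • y, ?_, ?_, ?_, ?_⟩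
      · simp only [mem_iInter]
        intro j hj
        have h1 : dotp (η j) y = 1 := by
          rw [hy j (hKw j hj), if_neg]; rintro rfl; exact hbK hj
        have h2 : dotp (η j) (w + s • y) = κ j + s := by
          rw [dotp_add, dotp_smul, h1, hKw j hj, mul_one]
        constructor
        · show κ j < dotp (η j) (w + s • y)
          linarith
        · show dotp (η j) (w + s • y) < κ j + ε
          linarith
      · show dotp (η k) (w + s • y) < κ k
        rw [dotp_add, dotp_smul]; exact hs1
      · show α < dotp (η b) (w + s • y)
        rw [dotp_add, dotp_smul, hy b hb, if_pos rfl, hb]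
        rcases hα.lt_or_eq with h1 | h1
        · nlinarith [mul_nonneg hs0.le (sub_nonneg.2 hβ)]
        · nlinarith
      · show dotp (η b) (w + s • y) < β
        rw [dotp_add, dotp_smul, hy b hb, if_pos rfl, hb]
        rcases hβ.lt_or_eq with h1 | h1
        · nlinarith [mul_nonneg hs0.le (sub_nonneg.2 hα)]
        · nlinarith
    have hdisj : Disjoint (Q (κ i) (κ i + ε) α) O := by
      rw [Set.disjoint_left]
      rintro x ⟨_, _, h3, _⟩ ⟨_, _, h5, _⟩
      have h5 : α < dotp (η b) x := h5
      linarith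
    have hOsub : O ⊆ Q (κ i) (κ i + ε) β := by
      rintro x ⟨h1, h2, h3, h4⟩
      simp only [mem_iInter] at h1
      have h2 : dotp (η k) x < κ k := h2
      have h4 : dotp (η b) x < β := h4
      have h5 : ∀ j ∈ K, κ j < dotp (η j) x ∧ dotp (η j) x < κ j + ε := fun j hj => h1 j hj
      exact ⟨fun j hj _ => ⟨(h5 j hj).1, (h5 j hj).2.le⟩, h2.le, h4.le, (h5 i hiK).1, (h5 i hiK).2.le⟩
    have hle := measure_mono (μ := volume) (Set.union_subset hsub hOsub)
    rw [measure_union hdisj hO.measurableSet, heq2] at hle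
    have hpos : 0 < volume O := hO.measure_pos volume hOne
    exact absurd hle (not_le.2 (ENNReal.lt_add_right hfin hpos.ne'))
  have hf1 : volume (Q (κ i) (κ i + ε) (κ b)) ≠ ⊤ := by
    rw [← hRegQ _ _ le_rfl (by linarith)]; exact Reg_ne_top h _ _ _ _ _ _
  have hf2 : volume (Q (κ i) (κ i + ε) (κ b - ε * c)) ≠ ⊤ := by
    rw [← htrans, ← hRegQ _ _ (by linarith) le_rfl]; exact Reg_ne_top h _ _ _ _ _ _
  have hc0 : c = 0 := by
    by_contra hne
    rcases lt_or_gt_of_ne hne with hlt | hgt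
    · exact hmono (κ b) (κ b - ε * c) le_rfl (by nlinarith) (by nlinarith) hf2 hbox
    · exact hmono (κ b - ε * c) (κ b) (by nlinarith) le_rfl (by nlinarith) hf1 hbox.symm
  refine ⟨τ, hτ, hwV, hKw i hiK, fun j hj hji => ?_⟩
  rcases hactw j hj with h1 | rfl
  · exact hξ j (memK.1 h1).2 hji
  · exact hc0

theorem backward {η : Fin N → Fin n → ℝ} {κ : Fin N → ℝ} (h : GoodPolytope η κ) (i : Fin N)
    (H : ∀ κ' ∈ chamber η κ, ∃ a b : ℝ, ∀ t : ℝ, update κ' i t ∈ chamber η κ →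
          volFn η (update κ' i t) = a * t + b) : FlatFacet η κ i := by
  obtain ⟨v₀, hv₀, hv₀i⟩ := exists_vertex h i
  obtain ⟨ξ, hξ⟩ := solve_act h hv₀.1 (fun m => if m = i then 1 else 0)
  have hξi : dotp (η i) ξ = 1 := by rw [hξ i hv₀i, if_pos rfl]
  refine ⟨ξ, ?_, fun b hbi hmeet => ?_⟩
  · rintro rfl
    rw [dotp_zero] at hξi
    norm_num at hξi
  let S : Set (Fin n → ℝ) := {v | IsV η κ v ∧ dotp (η i) v = κ i ∧
    ∀ j, dotp (η j) v = κ j → j ≠ i → dotp (η j) ξ = 0}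
  have hS : S.Finite := by
    apply Set.Finite.of_finite_image (f := act η κ) (Set.toFinite _)
    intro x hx y _ hxy
    exact vertex_inj hx.1 hxy
  have hSne : S.Nonempty := ⟨v₀, hv₀, hv₀i, fun j hj hji => by rw [hξ j hj, if_neg hji]⟩
  obtain ⟨v, hv, hmax⟩ := Set.exists_max_image S (dotp (η b)) hS hSne
  obtain ⟨hvV, hvi, hvξ⟩ := hv
  by_cases hbv : dotp (η b) v = κ b
  · exact hvξ b hbv hbi
  exfalso
  have hlt : dotp (η b) v < κ b := lt_of_le_of_ne (hvV.1 b) hbv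
  obtain ⟨y, hyi, hyb⟩ := hmeet
  choose e he using fun k : Fin N => solve_act h hvV.1 (fun m => if m = k then -1 else 0)
  have hcone : y - v = ∑ k ∈ act η κ v, (κ k - dotp (η k) y) • e k := by
    refine sub_eq_zero.1 (hvV.2 _ fun j hj => ?_)
    rw [dotp_sub, dotp_sub, dotp_sum]
    have : ∀ k ∈ act η κ v, dotp (η j) ((κ k - dotp (η k) y) • e k) =
        if j = k then dotp (η j) y - κ j else 0 := by
      intro k _
      rw [dotp_smul, he k j hj]
      by_cases hjk : j = k
      · subst hjk; simp
      · simp [hjk]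
    rw [Finset.sum_congr rfl this, Finset.sum_ite_eq, if_pos (mem_act.2 hj), hj, sub_self]
  have hpos : 0 < ∑ k ∈ act η κ v, (κ k - dotp (η k) y) * dotp (η b) (e k) := by
    have h1 := congrArg (dotp (η b)) hcone
    rw [dotp_sub, dotp_sum, hyb.2] at h1
    simp only [dotp_smul] at h1
    rw [← h1]; linarith
  obtain ⟨k, hk, hkpos⟩ := Finset.exists_lt_of_sum_lt (s := act η κ v) (f := fun _ => (0 : ℝ))
    (by simpa using hpos)
  have hk := mem_act.1 hk
  have hki : k ≠ i := by
    rintro rfl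
    rw [hyi.2] at hkpos
    simp at hkpos
  have hbe : 0 < dotp (η b) (e k) := by
    have := hyi.1 k
    by_contra hc
    push Not at hc
    nlinarith
  obtain ⟨τ, hτ, hV, hVi, hVξ⟩ := edge_step h i H hvV hvi hk hki
    (by rw [he k k hk, if_pos rfl]) (fun j hj hjk => by rw [he k j hj, if_neg hjk]) hξi hvξ
  have := hmax _ ⟨hV, hVi, hVξ⟩
  rw [dotp_add, dotp_smul] at this
  nlinarith [mul_pos hτ hbe]

end FlatProof

/-- A facet is flat iff the volume is an affine-linear function of its support number. -/
theorem stmt8 {n N : ℕ} (η : Fin N → Fin n → ℝ) (κ : Fin N → ℝ)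
    (hΔ : GoodPolytope η κ) (i : Fin N) :
    FlatFacet η κ i ↔
      ∀ κ' ∈ chamber η κ, ∃ a b : ℝ, ∀ t : ℝ,
        Function.update κ' i t ∈ chamber η κ →
          volFn η (Function.update κ' i t) = a * t + b :=
  ⟨fun hf κ' hκ' => FlatProof.forward hΔ i hf κ' hκ', FlatProof.backward hΔ i⟩
end
end

section
/- Let H be a mass linear function on a simple polytope Δ ⊂ ℝⁿ (i.e. κ ↦ ⟨H, c_Δ(κ)⟩ is affine-linear on the chamber). Then every H-asymmetric facet of Δ is either pervasive (meets every other facet) or flat (the conormals of all other facets meeting it lie in a hyperplane). -/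
open MeasureTheory Function Set

noncomputable section

open MassLinearPaper


lemma dotp_add {n : ℕ} (v x y : Fin n → ℝ) : dotp v (x + y) = dotp v x + dotp v y := by
  simp [dotp, mul_add, Finset.sum_add_distrib]

lemma dotp_smul {n : ℕ} (v x : Fin n → ℝ) (t : ℝ) : dotp v (t • x) = t * dotp v x := by
  simp only [dotp, Pi.smul_apply, smul_eq_mul, Finset.mul_sum]
  exact Finset.sum_congr rfl fun _ _ => by ring

lemma dotp_neg {n : ℕ} (v x : Fin n → ℝ) : dotp v (-x) = - dotp v x := by
  simp [dotp]

lemma dotp_sub {n : ℕ} (v x y : Fin n → ℝ) : dotp v (x - y) = dotp v x - dotp v y := by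
  rw [sub_eq_add_neg, dotp_add, dotp_neg]; ring

lemma dotp_zero {n : ℕ} (v : Fin n → ℝ) : dotp v 0 = 0 := by simp [dotp]

lemma dotp_sum {n : ℕ} {ι : Type*} (v : Fin n → ℝ) (s : Finset ι) (f : ι → Fin n → ℝ) :
    dotp v (∑ k ∈ s, f k) = ∑ k ∈ s, dotp v (f k) := by
  classical
  induction s using Finset.induction_on with
  | empty => simp [dotp_zero]
  | insert a s ha ih => rw [Finset.sum_insert ha, Finset.sum_insert ha, dotp_add, ih]

@[fun_prop]
lemma dotp_cont {n : ℕ} (v : Fin n → ℝ) : Continuous (dotp v) := by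
  unfold dotp; fun_prop

lemma polytope_closed {n N : ℕ} (η : Fin N → Fin n → ℝ) (κ : Fin N → ℝ) :
    IsClosed (polytope η κ) := by
  simp only [polytope, ofPred_forall]
  exact isClosed_iInter fun i => isClosed_le (dotp_cont _) continuous_const

/-- Solving the linear system for independent conormals. -/
lemma solve {n N : ℕ} (η : Fin N → Fin n → ℝ) (p : Fin N → Prop)
    (h : LinearIndependent ℝ (fun i : {i : Fin N // p i} => η i.1)) (c : Fin N → ℝ) :
    ∃ d, ∀ i, p i → dotp (η i) d = c i := by
  classical
  let M : Matrix {i : Fin N // p i} (Fin n) ℝ := fun i => η i.1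
  have hr : M.rank = Fintype.card {i : Fin N // p i} := LinearIndependent.rank_matrix h
  have : LinearMap.range M.mulVecLin = ⊤ := by
    apply Submodule.eq_top_of_finrank_eq
    rw [← Matrix.rank, hr]; simp
  obtain ⟨d, hd⟩ := LinearMap.range_eq_top.1 this (fun i => c i.1)
  refine ⟨d, fun i hi => ?_⟩
  have := congrFun hd ⟨i, hi⟩
  exact this

lemma exists_strict {n N : ℕ} (η : Fin N → Fin n → ℝ) (κ : Fin N → ℝ)
    (hΔ : GoodPolytope η κ) : ∃ z, ∀ p, dotp (η p) z < κ p := by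
  obtain ⟨hs, -, ⟨z, hz⟩, hf⟩ := hΔ
  refine ⟨z, fun p => ?_⟩
  obtain ⟨x, hx, hxp⟩ := hf p
  obtain ⟨d, hd⟩ := solve η _ (hs x hx) (fun _ => 1)
  have hd1 := hd p hxp
  have hc : Filter.Tendsto (fun t : ℝ => z + t • d) (nhds 0) (nhds z) := by
    have : Continuous (fun t : ℝ => z + t • d) := by fun_prop
    simpa using this.tendsto 0
  have h1 := hc.eventually (mem_interior_iff_mem_nhds.1 hz)
  have h2 := (h1.filter_mono (nhdsWithin_le_nhds (s := Ioi 0))).and self_mem_nhdsWithin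
  obtain ⟨t, ht, ht0⟩ := h2.exists
  have := ht p
  rw [dotp_add, dotp_smul, hd1] at this
  have : (0:ℝ) < t := ht0
  linarith

lemma mem_inter_facet {n N : ℕ} (η : Fin N → Fin n → ℝ) (κ : Fin N → ℝ) (I : Finset (Fin N))
    (x : Fin n → ℝ) : x ∈ (⋂ i ∈ I, facet η κ i) ↔
      ∀ i ∈ I, x ∈ polytope η κ ∧ dotp (η i) x = κ i := by
  simp [facet]

lemma polytope_closed2 {n N : ℕ} (η : Fin N → Fin n → ℝ) :
    IsClosed {q : (Fin N → ℝ) × (Fin n → ℝ) | q.2 ∈ polytope η q.1} := by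
  have : {q : (Fin N → ℝ) × (Fin n → ℝ) | q.2 ∈ polytope η q.1} =
      ⋂ i, {q : (Fin N → ℝ) × (Fin n → ℝ) | dotp (η i) q.2 ≤ q.1 i} := by
    ext q; simp [polytope]
  rw [this]
  refine isClosed_iInter fun i => isClosed_le ?_ ?_ <;> fun_prop

/-- Uniform boundedness for nearby support numbers. -/
lemma nbhd_bdd {n N : ℕ} (η : Fin N → Fin n → ℝ) (κ : Fin N → ℝ) (z : Fin n → ℝ)
    (hz : ∀ p, dotp (η p) z < κ p) (hb : Bornology.IsBounded (polytope η κ)) :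
    ∃ R : ℝ, ∀ᶠ κ' in nhds κ, (∀ p, dotp (η p) z < κ' p) ∧
      polytope η κ' ⊆ Metric.closedBall z R := by
  obtain ⟨R, hR0, hR⟩ := hb.subset_ball_lt 0 z
  refine ⟨R, ?_⟩
  have h1 : ∀ᶠ κ' in nhds κ, ∀ p, dotp (η p) z < κ' p := by
    rw [Filter.eventually_all]
    intro p
    exact (continuous_apply p).tendsto κ |>.eventually (lt_mem_nhds (hz p))
  have h2 : ∀ᶠ κ' in nhds κ, ∀ x ∈ Metric.sphere z R, x ∉ polytope η κ' := by
    apply (isCompact_sphere z R).eventually_forall_of_forall_eventually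
    intro x hx
    have : (κ, x) ∈ {q : (Fin N → ℝ) × (Fin n → ℝ) | q.2 ∈ polytope η q.1}ᶜ := by
      intro h
      have := hR h
      rw [Metric.mem_ball] at this
      rw [Metric.mem_sphere] at hx
      linarith
    have := (polytope_closed2 η).isOpen_compl.mem_nhds this
    exact Filter.Eventually.mono this (fun q hq => hq)
  filter_upwards [h1, h2] with κ' h1 h2
  refine ⟨h1, fun x hx => ?_⟩
  by_contra hcon
  have hcon' : R < ‖x - z‖ := by
    rw [Metric.mem_closedBall, dist_eq_norm] at hcon; exact not_le.1 hcon
  have hpos : 0 < ‖x - z‖ := hR0.trans hcon'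
  refine h2 (z + (R / ‖x - z‖) • (x - z)) ?_ ?_
  · rw [mem_sphere_iff_norm, add_sub_cancel_left, norm_smul, Real.norm_eq_abs,
      abs_of_pos (by positivity)]
    field_simp
  · intro p
    rw [dotp_add, dotp_smul, dotp_sub]
    have ha : R / ‖x - z‖ ≤ 1 := by rw [div_le_one hpos]; exact hcon'.le
    have hb : 0 < R / ‖x - z‖ := by positivity
    have := hx p
    have := h1 p
    nlinarith

lemma nbhd_analogous {n N : ℕ} (η : Fin N → Fin n → ℝ) (κ : Fin N → ℝ)
    (hΔ : GoodPolytope η κ) : ∀ᶠ κ' in nhds κ, Analogous η κ κ' := by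
  obtain ⟨z, hz⟩ := exists_strict η κ hΔ
  obtain ⟨R, hR⟩ := nbhd_bdd η κ z hz hΔ.2.1
  unfold Analogous
  rw [Filter.eventually_all]
  intro I
  by_cases hne : (⋂ i ∈ I, facet η κ i).Nonempty
  · suffices ∀ᶠ κ' in nhds κ, (⋂ i ∈ I, facet η κ' i).Nonempty by
      filter_upwards [this] with κ' h
      exact ⟨fun _ => hne, fun _ => h⟩
    rcases I.eq_empty_or_nonempty with rfl | ⟨i0, hi0⟩
    · simp
    obtain ⟨x, hx⟩ := hne
    rw [mem_inter_facet] at hx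
    have hxp := (hx i0 hi0).1
    have hs := fun c => solve η _ (hΔ.1 x hxp) c
    choose d hd using fun k : Fin N => hs (Pi.single k 1)
    classical
    let A : Finset (Fin N) := Finset.univ.filter fun k => dotp (η k) x = κ k
    let y : (Fin N → ℝ) → (Fin n → ℝ) := fun κ' => x + ∑ k ∈ A, (κ' k - κ k) • d k
    have hy : ∀ κ' k, k ∈ A → dotp (η k) (y κ') = κ' k := by
      intro κ' k hk
      have hk' : dotp (η k) x = κ k := by simpa [A] using hk
      simp only [y]
      rw [dotp_add, dotp_sum, hk', Finset.sum_eq_single k]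
      · rw [dotp_smul, hd k k hk']; simp
      · intro b hb hbk
        rw [dotp_smul, hd b k hk']; simp [hbk.symm]
      · exact fun h => absurd hk h
    have hyc : Continuous y := by fun_prop
    have hy0 : y κ = x := by simp [y]
    have : ∀ᶠ κ' in nhds κ, ∀ k, k ∉ A → dotp (η k) (y κ') < κ' k := by
      rw [Filter.eventually_all]
      intro k
      by_cases hk : k ∈ A
      · simp [hk]
      have hlt : dotp (η k) (y κ) < κ k := by
        rw [hy0]
        exact lt_of_le_of_ne (hxp k) (by simpa [A] using hk)
      have : IsOpen {κ' : Fin N → ℝ | dotp (η k) (y κ') < κ' k} :=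
        isOpen_lt (by fun_prop) (by fun_prop)
      filter_upwards [this.mem_nhds hlt] with κ' h _ using h
    filter_upwards [this] with κ' h
    refine ⟨y κ', ?_⟩
    rw [mem_inter_facet]
    refine fun i hi => ⟨fun p => ?_, hy κ' i (by simpa [A] using (hx i hi).2)⟩
    by_cases hp : p ∈ A
    · exact (hy κ' p hp).le
    · exact (h p hp).le
  · have hIne : I.Nonempty := by
      by_contra h
      rw [Finset.not_nonempty_iff_eq_empty] at h
      subst h; simp at hne
    obtain ⟨i0, hi0⟩ := hIne
    have h2 : ∀ᶠ κ' in nhds κ, ∀ x ∈ Metric.closedBall z R, x ∉ ⋂ i ∈ I, facet η κ' i := by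
      apply (isCompact_closedBall z R).eventually_forall_of_forall_eventually
      intro x hx
      have hcl : IsClosed {q : (Fin N → ℝ) × (Fin n → ℝ) |
          ∀ i, i ∈ I → q.2 ∈ polytope η q.1 ∧ dotp (η i) q.2 = q.1 i} := by
        simp only [ofPred_forall]
        refine isClosed_iInter fun i => isClosed_iInter fun _ => ?_
        exact (polytope_closed2 η).inter (isClosed_eq (by fun_prop) (by fun_prop))
      have : (κ, x) ∈ {q : (Fin N → ℝ) × (Fin n → ℝ) |
          ∀ i, i ∈ I → q.2 ∈ polytope η q.1 ∧ dotp (η i) q.2 = q.1 i}ᶜ := by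
        intro h
        exact hne ⟨x, (mem_inter_facet _ _ _ _).2 h⟩
      filter_upwards [hcl.isOpen_compl.mem_nhds this] with q hq hq'
      exact hq ((mem_inter_facet _ _ _ _).1 hq')
    filter_upwards [hR, h2] with κ' h1 h2
    refine ⟨fun ⟨x, hx⟩ => absurd hx (h2 x (h1.2 ?_)), fun h => absurd h hne⟩
    exact ((mem_inter_facet _ _ _ _).1 hx i0 hi0).1

lemma Analogous.simple {n N : ℕ} {η : Fin N → Fin n → ℝ} {κ κ' : Fin N → ℝ}
    (h : Analogous η κ κ') (hs : IsSimplePoly η κ) : IsSimplePoly η κ' := by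
  classical
  intro x hx
  let A : Finset (Fin N) := Finset.univ.filter fun k => dotp (η k) x = κ' k
  by_cases hA : A.Nonempty
  · obtain ⟨k0, hk0⟩ := hA
    obtain ⟨y, hy⟩ := (h A).1 ⟨x, (mem_inter_facet _ _ _ _).2 fun i hi => ⟨hx, by simpa [A] using hi⟩⟩
    rw [mem_inter_facet] at hy
    have := hs y (hy k0 hk0).1
    exact this.comp (fun i : {i : Fin N // dotp (η i) x = κ' i} =>
      (⟨i.1, (hy i.1 (by simpa [A] using i.2)).2⟩ : {i : Fin N // dotp (η i) y = κ i}))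
      (fun a b hab => by simpa [Subtype.ext_iff] using hab)
  · have : IsEmpty {i : Fin N // dotp (η i) x = κ' i} :=
      ⟨fun i => hA ⟨i.1, by simpa [A] using i.2⟩⟩
    exact linearIndependent_empty_type

/-- Local data around `κ`. -/
structure Loc {n N : ℕ} (η : Fin N → Fin n → ℝ) (κ : Fin N → ℝ) (ρ : ℝ) (z : Fin n → ℝ) :
    Prop where
  pos : 0 < ρ
  ana : ∀ κ' : Fin N → ℝ, (∀ p, |κ' p - κ p| < ρ) → Analogous η κ κ'
  cham : ∀ κ' : Fin N → ℝ, (∀ p, |κ' p - κ p| < ρ) → κ' ∈ chamber η κ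
  bdd : ∀ κ' : Fin N → ℝ, (∀ p, |κ' p - κ p| < ρ) → Bornology.IsBounded (polytope η κ')
  strict : ∀ κ' : Fin N → ℝ, (∀ p, |κ' p - κ p| < ρ) → ∀ p, dotp (η p) z < κ' p

lemma exists_loc {n N : ℕ} (η : Fin N → Fin n → ℝ) (κ : Fin N → ℝ)
    (hΔ : GoodPolytope η κ) : ∃ ρ z, Loc η κ ρ z := by
  obtain ⟨z, hz⟩ := exists_strict η κ hΔ
  obtain ⟨R, hR⟩ := nbhd_bdd η κ z hz hΔ.2.1
  obtain ⟨ρ, hρ, hball⟩ := Metric.eventually_nhds_iff_ball.1 ((nbhd_analogous η κ hΔ).and hR)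
  have key : ∀ κ' : Fin N → ℝ, (∀ p, |κ' p - κ p| < ρ) → κ' ∈ Metric.ball κ ρ := by
    intro κ' h
    rw [Metric.mem_ball, dist_pi_lt_iff hρ]
    exact fun p => by rw [Real.dist_eq]; exact h p
  refine ⟨ρ, z, hρ, fun κ' h => (hball κ' (key κ' h)).1, fun κ' h => ?_,
    fun κ' h => Metric.isBounded_closedBall.subset (hball κ' (key κ' h)).2.2,
    fun κ' h => (hball κ' (key κ' h)).2.1⟩
  refine (convex_ball κ ρ).isPreconnected.subset_connectedComponentIn (Metric.mem_ball_self hρ) ?_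
    (key κ' h)
  exact fun q hq => ⟨Analogous.simple (hball q hq).1 hΔ.1, (hball q hq).1⟩

lemma strict_open {n N : ℕ} (η : Fin N → Fin n → ℝ) (κ : Fin N → ℝ) :
    IsOpen {x | ∀ p, dotp (η p) x < κ p} := by
  rw [ofPred_forall]
  exact isOpen_iInter_of_finite fun p => isOpen_lt (by fun_prop) (by fun_prop)

lemma strict_near {n N : ℕ} (η : Fin N → Fin n → ℝ) (κ : Fin N → ℝ) (z y : Fin n → ℝ)
    (hz : ∀ p, dotp (η p) z < κ p) (hy : y ∈ polytope η κ) (O : Set (Fin n → ℝ))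
    (hO : IsOpen O) (hyO : y ∈ O) : (O ∩ {x | ∀ p, dotp (η p) x < κ p}).Nonempty := by
  have hc : Filter.Tendsto (fun t : ℝ => y + t • (z - y)) (nhds 0) (nhds y) := by
    have : Continuous (fun t : ℝ => y + t • (z - y)) := by fun_prop
    simpa using this.tendsto 0
  have h1 := hc.eventually (hO.mem_nhds hyO)
  have h2 := (h1.and (gt_mem_nhds (zero_lt_one' ℝ))).filter_mono
    (nhdsWithin_le_nhds (s := Ioi (0:ℝ)))
  obtain ⟨t, ⟨ht, ht1⟩, ht0⟩ := (h2.and self_mem_nhdsWithin).exists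
  refine ⟨_, ht, fun p => ?_⟩
  rw [dotp_add, dotp_smul, dotp_sub]
  have h0 : (0:ℝ) < t := ht0
  have := hz p
  have := hy p
  nlinarith

lemma vol_lt {n : ℕ} (A B W : Set (Fin n → ℝ)) (hAB : A ⊆ B) (hB : Bornology.IsBounded B)
    (hW : IsOpen W) (hWn : W.Nonempty) (hWB : W ⊆ B) (hd : Disjoint A W) :
    volume.real A < volume.real B := by
  have hfB : volume B ≠ ⊤ := hB.measure_lt_top.ne
  have hfA : volume A ≠ ⊤ := (hB.subset hAB).measure_lt_top.ne
  have hfW : volume W ≠ ⊤ := (hB.subset hWB).measure_lt_top.ne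
  have h1 : volume.real (A ∪ W) = volume.real A + volume.real W :=
    measureReal_union hd hW.measurableSet hfA hfW
  have h2 : volume.real (A ∪ W) ≤ volume.real B := measureReal_mono (union_subset hAB hWB) hfB
  have h3 : 0 < volume.real W := ENNReal.toReal_pos (hW.measure_pos volume hWn).ne' hfW
  linarith

lemma poly_meas {n N : ℕ} (η : Fin N → Fin n → ℝ) (κ : Fin N → ℝ) :
    MeasurableSet (polytope η κ) := (polytope_closed η κ).measurableSet

lemma poly_int {n N : ℕ} (η : Fin N → Fin n → ℝ) (κ : Fin N → ℝ)
    (hb : Bornology.IsBounded (polytope η κ)) {E : Type*} [NormedAddCommGroup E]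
    (f : (Fin n → ℝ) → E) (hf : Continuous f) :
    IntegrableOn f (polytope η κ) volume :=
  hf.continuousOn.integrableOn_compact (Metric.isCompact_of_isClosed_isBounded (polytope_closed η κ) hb)

lemma poly_mono {n N : ℕ} (η : Fin N → Fin n → ℝ) (κ κ' : Fin N → ℝ) (h : ∀ p, κ p ≤ κ' p) :
    polytope η κ ⊆ polytope η κ' := fun _ hx p => (hx p).trans (h p)

lemma moment {n N : ℕ} (η : Fin N → Fin n → ℝ) (κ : Fin N → ℝ) (H : Fin n → ℝ)
    (hb : Bornology.IsBounded (polytope η κ)) (hv : 0 < volume.real (polytope η κ)) :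
    ∫ x in polytope η κ, dotp H x =
      volume.real (polytope η κ) * dotp H (centroid η κ) := by
  let ℓ : (Fin n → ℝ) →L[ℝ] ℝ := LinearMap.toContinuousLinearMap
    { toFun := dotp H, map_add' := dotp_add H, map_smul' := fun t x => dotp_smul H x t }
  have h1 : ∫ x in polytope η κ, ℓ x = ℓ (∫ x in polytope η κ, x) :=
    ℓ.integral_comp_comm (poly_int η κ hb (fun x => x) continuous_id)
  have h2 : ∀ x, ℓ x = dotp H x := fun x => rfl
  simp only [h2] at h1
  rw [h1, centroid, setAverage_eq, dotp_smul]
  field_simp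

lemma second_diff {n N : ℕ} {η : Fin N → Fin n → ℝ} {κ : Fin N → ℝ} {ρ : ℝ} {z : Fin n → ℝ}
    (hL : Loc η κ ρ z) (i j : Fin N) (hij : j ≠ i)
    (hdis : ¬ (facet η κ i ∩ facet η κ j).Nonempty)
    (κ' : Fin N → ℝ) (s t : ℝ) (hs : 0 < s) (ht : 0 < t)
    (hκ : ∀ p, |κ' p - κ p| + s + t < ρ) (f : (Fin n → ℝ) → ℝ) (hf : Continuous f) :
    (∫ x in polytope η (κ' + Pi.single i s + Pi.single j t), f x) +
      (∫ x in polytope η κ', f x) =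
    (∫ x in polytope η (κ' + Pi.single i s), f x) +
      (∫ x in polytope η (κ' + Pi.single j t), f x) := by
  classical
  have hsi : ∀ p, (0:ℝ) ≤ (Pi.single i s : Fin N → ℝ) p := fun p => by
    rw [Pi.single_apply]; split_ifs <;> linarith
  have htj : ∀ p, (0:ℝ) ≤ (Pi.single j t : Fin N → ℝ) p := fun p => by
    rw [Pi.single_apply]; split_ifs <;> linarith
  have n2 : ∀ p, |(κ' + Pi.single i s + Pi.single j t : Fin N → ℝ) p - κ p| < ρ := fun p => by
    have h1 := hκ p
    have h2 := le_abs_self (κ' p - κ p)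
    have h3 := neg_abs_le (κ' p - κ p)
    simp only [Pi.add_apply, Pi.single_apply, abs_lt]
    split_ifs <;> constructor <;> linarith
  have hb := hL.bdd _ n2
  have s1 : polytope η (κ' + Pi.single i s) ⊆ polytope η (κ' + Pi.single i s + Pi.single j t) :=
    poly_mono _ _ _ fun p => by have := htj p; simp only [Pi.add_apply]; linarith
  have s2 : polytope η (κ' + Pi.single j t) ⊆ polytope η (κ' + Pi.single i s + Pi.single j t) :=
    poly_mono _ _ _ fun p => by have := hsi p; simp only [Pi.add_apply]; linarith
  have s3 : polytope η κ' ⊆ polytope η (κ' + Pi.single j t) :=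
    poly_mono _ _ _ fun p => by have := htj p; simp only [Pi.add_apply]; linarith
  have e1 := setIntegral_sdiff (μ := volume) (poly_meas η _) (poly_int η _ hb f hf) s1
  have e2 := setIntegral_sdiff (μ := volume) (poly_meas η _)
    (poly_int η _ (hb.subset s2) f hf) s3
  have key : polytope η (κ' + Pi.single i s + Pi.single j t) \ polytope η (κ' + Pi.single i s)
      = polytope η (κ' + Pi.single j t) \ polytope η κ' := by
    ext x
    constructor
    · rintro ⟨hx, hx'⟩
      have hxj : κ' j < dotp (η j) x := by
        by_contra hcon
        refine hx' fun p => ?_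
        have := hx p
        by_cases hpj : p = j
        · subst hpj; simp [hij]; linarith
        · simpa [hpj] using this
      have hxi : dotp (η i) x ≤ κ' i := by
        by_contra hcon
        push Not at hcon
        have hxi' := hx i
        have hxj' := hx j
        simp [hij, hij.symm] at hxi' hxj'
        let κ₂ : Fin N → ℝ := fun p => if p = i then dotp (η i) x else
          if p = j then dotp (η j) x else κ' p
        have hk2 : ∀ p, |κ₂ p - κ p| < ρ := by
          intro p
          have h1 := hκ p
          have h2 := le_abs_self (κ' p - κ p)
          have h3 := neg_abs_le (κ' p - κ p)
          simp only [κ₂]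
          split_ifs with hp hp
          · subst hp; rw [abs_lt]; constructor <;> linarith
          · subst hp; rw [abs_lt]; constructor <;> linarith
          · linarith
        have hmem : x ∈ polytope η κ₂ := by
          intro p
          have := hx p
          simp only [κ₂]
          split_ifs with hp hp
          · subst hp; rfl
          · subst hp; rfl
          · simpa [hp, *] using this
        have := (hL.ana κ₂ hk2 {i, j}).1 ⟨x, by
          rw [mem_inter_facet]
          intro k hk
          refine ⟨hmem, ?_⟩
          simp only [Finset.mem_insert, Finset.mem_singleton] at hk
          rcases hk with rfl | rfl
          · simp [κ₂]
          · simp [κ₂, hij]⟩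
        obtain ⟨y, hy⟩ := this
        rw [mem_inter_facet] at hy
        exact hdis ⟨y, hy i (by simp), hy j (by simp)⟩
      refine ⟨fun p => ?_, fun h => absurd (h j) (not_le.2 hxj)⟩
      have := hx p
      by_cases hpi : p = i
      · subst hpi; simp [hij.symm]; linarith
      · simpa [hpi] using this
    · rintro ⟨hx, hx'⟩
      refine ⟨s2 hx, fun h => hx' fun p => ?_⟩
      by_cases hpi : p = i
      · have := hx p
        subst hpi; simpa [hij.symm] using this
      · have := h p
        simpa [hpi] using this
  rw [key] at e1
  linarith

lemma vol_eq_int {n : ℕ} (A : Set (Fin n → ℝ)) : ∫ _ in A, (1:ℝ) = volume.real A := by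
  simp

/-- Volumes strictly increase with each support number. -/
lemma vol_incr {n N : ℕ} {η : Fin N → Fin n → ℝ} {κ : Fin N → ℝ} {ρ : ℝ} {z : Fin n → ℝ}
    (hL : Loc η κ ρ z) (hf : ∀ i, (facet η κ i).Nonempty) (j : Fin N)
    (κ' : Fin N → ℝ) (t : ℝ) (ht : 0 < t) (hκ : ∀ p, |κ' p - κ p| + t < ρ) :
    volume.real (polytope η κ') < volume.real (polytope η (κ' + Pi.single j t)) := by
  have n0 : ∀ p, |κ' p - κ p| < ρ := fun p => by have := hκ p; linarith
  have n1 : ∀ u, 0 ≤ u → u ≤ t → ∀ p, |(κ' + Pi.single j u : Fin N → ℝ) p - κ p| < ρ := fun u hu hut p => by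
    have h1 := hκ p
    rw [Pi.add_apply, Pi.single_apply]
    split_ifs
    · have := abs_add_le (κ' p - κ p) u
      rw [abs_of_nonneg hu] at this
      rw [show κ' p + u - κ p = κ' p - κ p + u by ring]; linarith
    · rw [add_zero]; linarith
  have hm : ∀ u v, u ≤ v → polytope η (κ' + Pi.single j u) ⊆ polytope η (κ' + Pi.single j v) :=
    fun u v huv => poly_mono _ _ _ fun p => by
      simp only [Pi.add_apply, Pi.single_apply]; split_ifs <;> linarith
  have h2 := n1 (t/2) (by linarith) (by linarith)
  obtain ⟨y, hy⟩ := (hL.ana _ h2 {j}).2 (by simpa using hf j)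
  have hy : y ∈ polytope η (κ' + Pi.single j (t/2)) ∧ dotp (η j) y = (κ' + Pi.single j (t/2) : Fin N → ℝ) j :=
    (mem_inter_facet _ _ _ _).1 hy j (by simp)
  have hO : IsOpen {x | κ' j < dotp (η j) x} := isOpen_lt (by fun_prop) (by fun_prop)
  have hne := strict_near η _ z y (hL.strict _ h2) hy.1 _ hO (by
    change κ' j < dotp (η j) y
    rw [hy.2]; simp; linarith)
  refine vol_lt _ _ _ ?_ (hL.bdd _ (n1 t ht.le le_rfl)) (hO.inter (strict_open η _)) hne ?_ ?_
  · simpa using hm 0 t ht.le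
  · rintro x ⟨-, hx⟩
    exact hm (t/2) t (by linarith) fun p => (hx p).le
  · rw [Set.disjoint_left]
    rintro x hx ⟨hx', -⟩
    have h1 : κ' j < dotp (η j) x := hx'
    have := hx j
    linarith

lemma vol_pos {n N : ℕ} {η : Fin N → Fin n → ℝ} {κ : Fin N → ℝ} {ρ : ℝ} {z : Fin n → ℝ}
    (hL : Loc η κ ρ z) (κ' : Fin N → ℝ) (hκ : ∀ p, |κ' p - κ p| < ρ) :
    0 < volume.real (polytope η κ') := by
  have := vol_lt ∅ (polytope η κ') _ (empty_subset _) (hL.bdd _ hκ) (strict_open η κ')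
    ⟨z, hL.strict _ hκ⟩ (fun x hx p => (hx p).le) (empty_disjoint _)
  simpa using this

lemma relation {n N : ℕ} {η : Fin N → Fin n → ℝ} {κ : Fin N → ℝ} {ρ : ℝ} {z : Fin n → ℝ}
    (hL : Loc η κ ρ z) {H : Fin n → ℝ} {γ : Fin N → ℝ} {C : ℝ} (hml : MassLinear η κ H γ C)
    (i j : Fin N) (hij : j ≠ i)
    (hdis : ¬ (facet η κ i ∩ facet η κ j).Nonempty)
    (κ' : Fin N → ℝ) (s t : ℝ) (hs : 0 < s) (ht : 0 < t)
    (hκ : ∀ p, |κ' p - κ p| + s + t < ρ) :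
    γ i * s * (volume.real (polytope η (κ' + Pi.single j t)) - volume.real (polytope η κ')) +
    γ j * t * (volume.real (polytope η (κ' + Pi.single i s)) - volume.real (polytope η κ')) = 0 := by
  have hV := second_diff hL i j hij hdis κ' s t hs ht hκ (fun _ => 1) continuous_const
  have hM := second_diff hL i j hij hdis κ' s t hs ht hκ (dotp H) (dotp_cont H)
  simp only [vol_eq_int] at hV
  have n0 : ∀ p, |κ' p - κ p| < ρ := fun p => by have := hκ p; linarith
  have n1 : ∀ p, |(κ' + Pi.single i s : Fin N → ℝ) p - κ p| < ρ ∧ |(κ' + Pi.single j t : Fin N → ℝ) p - κ p| < ρ ∧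
      |(κ' + Pi.single i s + Pi.single j t : Fin N → ℝ) p - κ p| < ρ := fun p => by
    have h1 := hκ p
    have h2 := le_abs_self (κ' p - κ p)
    have h3 := neg_abs_le (κ' p - κ p)
    simp only [Pi.add_apply, Pi.single_apply, abs_lt]
    split_ifs <;> refine ⟨⟨?_, ?_⟩, ⟨?_, ?_⟩, ?_, ?_⟩ <;> linarith
  have m : ∀ q : Fin N → ℝ, (∀ p, |q p - κ p| < ρ) → ∫ x in polytope η q, dotp H x =
      volume.real (polytope η q) * (∑ i, γ i * q i + C) := fun q hq => by
    rw [moment η q H (hL.bdd q hq) (vol_pos hL q hq), hml q (hL.cham q hq)]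
  rw [m _ n0, m _ (fun p => (n1 p).1), m _ (fun p => (n1 p).2.1), m _ (fun p => (n1 p).2.2)] at hM
  have hsum : ∀ (q : Fin N → ℝ) k u, ∑ p, γ p * (q + Pi.single k u : Fin N → ℝ) p = ∑ p, γ p * q p + γ k * u := by
    intro q k u
    simp [mul_add, Finset.sum_add_distrib, Pi.single_apply]
  rw [hsum, hsum, hsum] at hM
  rw [eq_sub_of_add_eq hV] at hM
  linarith

/-- The volume is affine in the i-th support number near `κ`. -/
lemma vol_affine {n N : ℕ} {η : Fin N → Fin n → ℝ} {κ : Fin N → ℝ} {ρ : ℝ} {z : Fin n → ℝ}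
    (hL : Loc η κ ρ z) (hf : ∀ i, (facet η κ i).Nonempty)
    {H : Fin n → ℝ} {γ : Fin N → ℝ} {C : ℝ} (hml : MassLinear η κ H γ C)
    (i j : Fin N) (hij : j ≠ i) (hi : γ i ≠ 0)
    (hdis : ¬ (facet η κ i ∩ facet η κ j).Nonempty)
    (κ' : Fin N → ℝ) (s : ℝ) (hs : 0 < s)
    (hκ : ∀ p, |κ' p - κ p| + 4 * s < ρ) :
    volume.real (polytope η (κ' + Pi.single i s)) - volume.real (polytope η κ') =
    volume.real (polytope η κ') - volume.real (polytope η (κ' + Pi.single i (-s))) := by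
  have n0 : ∀ p, |(κ' + Pi.single i (-s) : Fin N → ℝ) p - κ p| + 3 * s < ρ := fun p => by
    have h1 := hκ p
    have h2 := le_abs_self (κ' p - κ p)
    have h3 := neg_abs_le (κ' p - κ p)
    rw [← lt_sub_iff_add_lt, abs_lt, Pi.add_apply, Pi.single_apply]
    split_ifs <;> constructor <;> linarith
  have r1 := relation hL hml i j hij hdis (κ' + Pi.single i (-s)) s s hs hs
    (fun p => by have := n0 p; linarith)
  have r2 := relation hL hml i j hij hdis (κ' + Pi.single i (-s)) (2 * s) s (by linarith) hs
    (fun p => by have := n0 p; linarith)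
  have hb := vol_incr hL hf j (κ' + Pi.single i (-s)) s hs (fun p => by have := n0 p; linarith)
  have e1 : κ' + Pi.single i (-s) + Pi.single i s = κ' := by
    rw [add_assoc, ← Pi.single_add]; simp
  have e2 : κ' + Pi.single i (-s) + Pi.single i (2 * s) = κ' + Pi.single i s := by
    rw [add_assoc, ← Pi.single_add]; congr 2; ring
  rw [e1] at r1
  rw [e2] at r2
  have hj : γ j ≠ 0 := by
    intro h
    rw [h] at r1
    have : γ i * s * (volume.real (polytope η (κ' + Pi.single i (-s) + Pi.single j s)) -
      volume.real (polytope η (κ' + Pi.single i (-s)))) ≠ 0 :=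
      mul_ne_zero (mul_ne_zero hi hs.ne') (sub_pos.2 hb).ne'
    apply this; linarith
  have : γ j * s * ((volume.real (polytope η (κ' + Pi.single i s)) - volume.real (polytope η κ')) -
    (volume.real (polytope η κ') - volume.real (polytope η (κ' + Pi.single i (-s))))) = 0 := by
    linarith
  rcases mul_eq_zero.1 this with h | h
  · exact absurd h (mul_ne_zero hj hs.ne')
  · linarith

/-- Slabs of width `s` along the facets in `S`. -/
def Qbox {n N : ℕ} (η : Fin N → Fin n → ℝ) (s : ℝ) (S : Finset (Fin N)) (κ : Fin N → ℝ) :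
    Set (Fin n → ℝ) :=
  {x | x ∈ polytope η κ ∧ ∀ k ∈ S, κ k - s < dotp (η k) x}

lemma Qbox_empty {n N : ℕ} (η : Fin N → Fin n → ℝ) (s : ℝ) (κ : Fin N → ℝ) :
    Qbox η s ∅ κ = polytope η κ := by
  ext x; simp [Qbox]

lemma Qbox_meas {n N : ℕ} (η : Fin N → Fin n → ℝ) (s : ℝ) (S : Finset (Fin N)) (κ : Fin N → ℝ) :
    MeasurableSet (Qbox η s S κ) := by
  have : Qbox η s S κ = polytope η κ ∩ ⋂ k ∈ S, {x | κ k - s < dotp (η k) x} := by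
    ext x; simp [Qbox]
  rw [this]
  refine (poly_meas η κ).inter (S.measurableSet_biInter fun k _ => ?_)
  exact (isOpen_lt (by fun_prop) (by fun_prop)).measurableSet

lemma Qbox_sub {n N : ℕ} (η : Fin N → Fin n → ℝ) (s : ℝ) (S : Finset (Fin N)) (κ : Fin N → ℝ) :
    Qbox η s S κ ⊆ polytope η κ := fun _ hx => hx.1

lemma Qbox_mono {n N : ℕ} (η : Fin N → Fin n → ℝ) (s : ℝ) (hs : 0 < s) (S : Finset (Fin N))
    (κ : Fin N → ℝ) (k : Fin N) (hk : k ∉ S) :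
    Qbox η s S (κ + Pi.single k (-s)) ⊆ Qbox η s S κ := by
  rintro x ⟨h1, h2⟩
  refine ⟨fun p => ?_, fun p hp => ?_⟩
  · have := h1 p
    rw [Pi.add_apply, Pi.single_apply] at this
    split_ifs at this <;> linarith
  · have := h2 p hp
    have hpk : p ≠ k := fun h => hk (h ▸ hp)
    simpa [hpk] using this

lemma Qbox_insert {n N : ℕ} (η : Fin N → Fin n → ℝ) (s : ℝ) (S : Finset (Fin N))
    (κ : Fin N → ℝ) (k : Fin N) (hk : k ∉ S) :
    Qbox η s (insert k S) κ = Qbox η s S κ \ Qbox η s S (κ + Pi.single k (-s)) := by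
  ext x
  constructor
  · rintro ⟨h1, h2⟩
    refine ⟨⟨h1, fun p hp => h2 p (Finset.mem_insert_of_mem hp)⟩, fun h => ?_⟩
    have h3 := h2 k (Finset.mem_insert_self _ _)
    have h4 := h.1 k
    simp at h4
    linarith
  · rintro ⟨⟨h1, h2⟩, h3⟩
    refine ⟨h1, fun p hp => ?_⟩
    rcases Finset.mem_insert.1 hp with rfl | hp
    · by_contra hcon
      refine h3 ⟨fun q => ?_, fun q hq => ?_⟩
      · have := h1 q
        by_cases hqp : q = p
        · subst hqp; simp; linarith
        · simpa [hqp] using this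
      · have hqk : q ≠ p := fun h => hk (h ▸ hq)
        simpa [hqk] using h2 q hq
    · exact h2 p hp

lemma Qbox_vol_insert {n N : ℕ} (η : Fin N → Fin n → ℝ) (s : ℝ) (hs : 0 < s) (S : Finset (Fin N))
    (κ : Fin N → ℝ) (k : Fin N) (hk : k ∉ S) (hb : Bornology.IsBounded (polytope η κ)) :
    volume.real (Qbox η s (insert k S) κ) =
      volume.real (Qbox η s S κ) - volume.real (Qbox η s S (κ + Pi.single k (-s))) := by
  rw [Qbox_insert η s S κ k hk]
  exact measureReal_sdiff (Qbox_mono η s hs S κ k hk) (Qbox_meas _ _ _ _)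
    (hb.subset (Qbox_sub _ _ _ _)).measure_lt_top.ne

lemma Qbox_vol {n N : ℕ} {η : Fin N → Fin n → ℝ} {κ : Fin N → ℝ} {ρ : ℝ} {z : Fin n → ℝ}
    (hL : Loc η κ ρ z) (i : Fin N) (s : ℝ) (hs : 0 < s) (hsρ : 3 * s < ρ)
    (hA : ∀ κ' : Fin N → ℝ, (∀ p, |κ' p - κ p| ≤ s) →
      volume.real (polytope η (κ' + Pi.single i s)) - volume.real (polytope η κ') =
      volume.real (polytope η κ') - volume.real (polytope η (κ' + Pi.single i (-s))))
    (S : Finset (Fin N)) :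
    i ∉ S → ∀ κ' : Fin N → ℝ, (∀ p, |κ' p - κ p| ≤ s) → (∀ p ∈ S, κ' p = κ p) →
      volume.real (Qbox η s (insert i S) κ') =
        volume.real (Qbox η s (insert i S) (κ' + Pi.single i s)) := by
  have hbd : ∀ κ' : Fin N → ℝ, (∀ p, |κ' p - κ p| ≤ s) →
      Bornology.IsBounded (polytope η κ') ∧
      Bornology.IsBounded (polytope η (κ' + Pi.single i s)) := by
    intro κ' h
    refine ⟨hL.bdd _ fun p => by have := h p; linarith, hL.bdd _ fun p => ?_⟩
    have h1 := abs_le.1 (h p)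
    rw [abs_lt, Pi.add_apply, Pi.single_apply]
    split_ifs <;> constructor <;> linarith
  induction S using Finset.induction_on with
  | empty =>
    intro _ κ' h1 _
    have e : κ' + Pi.single i s + Pi.single i (-s) = κ' := by
      rw [add_assoc, ← Pi.single_add]; simp
    rw [Qbox_vol_insert η s hs ∅ _ i (by simp) (hbd κ' h1).1,
      Qbox_vol_insert η s hs ∅ _ i (by simp) (hbd κ' h1).2, e]
    simp only [Qbox_empty]
    exact (hA κ' h1).symm
  | insert k S hk ih =>
    intro hi κ' h1 h2
    have hiS : i ∉ S := fun h => hi (Finset.mem_insert_of_mem h)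
    have hik : k ≠ i := fun h => hi (by simp [h])
    have hk' : k ∉ insert i S := by simp [hik, hk]
    rw [Finset.insert_comm, Qbox_vol_insert η s hs _ _ k hk' (hbd κ' h1).1,
      Qbox_vol_insert η s hs _ _ k hk' (hbd κ' h1).2,
      add_right_comm, ← ih hiS κ' h1 (fun p hp => h2 p (Finset.mem_insert_of_mem hp)), ← ih hiS]
    · intro p
      rw [Pi.add_apply, Pi.single_apply]
      split_ifs with hp
      · rw [hp, h2 k (Finset.mem_insert_self _ _)]
        simp [abs_of_pos hs]
      · simpa using h1 p
    · intro p hp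
      have hpk : p ≠ k := fun h => hk (h ▸ hp)
      simpa [hpk] using h2 p (Finset.mem_insert_of_mem hp)

/-- Near an edge, only the two end facets matter. -/
lemma edge_mem {n N : ℕ} {η : Fin N → Fin n → ℝ} {κ : Fin N → ℝ} {ρ : ℝ} {z : Fin n → ℝ}
    (hL : Loc η κ ρ z) (J : Finset (Fin N)) (m l : Fin N) (d : Fin n → ℝ)
    (hm : dotp (η m) d < 0) (hl : 0 < dotp (η l) d)
    (hline : ∀ e : Fin n → ℝ, (∀ k ∈ J, dotp (η k) e = 0) → ∃ c : ℝ, e = c • d)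
    (hfm : (⋂ k ∈ insert m J, facet η κ k).Nonempty)
    (hfl : (⋂ k ∈ insert l J, facet η κ k).Nonempty)
    (κ' : Fin N → ℝ) (hκ : ∀ p, |κ' p - κ p| < ρ) (x : Fin n → ℝ)
    (hxJ : ∀ k ∈ J, dotp (η k) x = κ' k) (hxm : dotp (η m) x ≤ κ' m)
    (hxl : dotp (η l) x ≤ κ' l) : x ∈ polytope η κ' := by
  obtain ⟨v, hv⟩ := (hL.ana κ' hκ _).2 hfm
  obtain ⟨w, hw⟩ := (hL.ana κ' hκ _).2 hfl
  rw [mem_inter_facet] at hv hw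
  obtain ⟨a, ha⟩ := hline (v - x) fun k hk => by
    rw [dotp_sub, (hv k (Finset.mem_insert_of_mem hk)).2, hxJ k hk, sub_self]
  obtain ⟨b, hb⟩ := hline (w - x) fun k hk => by
    rw [dotp_sub, (hw k (Finset.mem_insert_of_mem hk)).2, hxJ k hk, sub_self]
  obtain ⟨hv1, hv2⟩ := hv m (Finset.mem_insert_self _ _)
  obtain ⟨hw1, hw2⟩ := hw l (Finset.mem_insert_self _ _)
  have ha' : ∀ p, dotp (η p) v - dotp (η p) x = a * dotp (η p) d := fun p => by
    rw [← dotp_sub, ha, dotp_smul]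
  have hb' : ∀ p, dotp (η p) w - dotp (η p) x = b * dotp (η p) d := fun p => by
    rw [← dotp_sub, hb, dotp_smul]
  have ha0 : a ≤ 0 := by
    by_contra hcon
    have := ha' m
    have := mul_neg_of_pos_of_neg (not_le.1 hcon) hm
    linarith
  have hb0 : 0 ≤ b := by
    by_contra hcon
    have := hb' l
    have := mul_neg_of_neg_of_pos (not_le.1 hcon) hl
    linarith
  intro p
  rcases le_total 0 (dotp (η p) d) with h | h
  · have := hb' p
    have := mul_nonneg hb0 h
    have := hw1 p
    linarith
  · have := ha' p
    have := mul_nonneg_of_nonpos_of_nonpos ha0 h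
    have := hv1 p
    linarith

lemma edge_vol_lt {n N : ℕ} {η : Fin N → Fin n → ℝ} {κ : Fin N → ℝ} {ρ : ℝ} {z : Fin n → ℝ}
    (hL : Loc η κ ρ z) (J : Finset (Fin N)) (m l : Fin N) (d : Fin n → ℝ)
    (hmJ : m ∉ J) (hlJ : l ∉ J)
    (hm : dotp (η m) d < 0) (hl : 0 < dotp (η l) d)
    (hline : ∀ e : Fin n → ℝ, (∀ k ∈ J, dotp (η k) e = 0) → ∃ c : ℝ, e = c • d)
    (hfm : (⋂ k ∈ insert m J, facet η κ k).Nonempty)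
    (hfl : (⋂ k ∈ insert l J, facet η κ k).Nonempty)
    (s : ℝ) (hs : 0 < s) (α β : Fin N → ℝ)
    (hβ : ∀ p, |β p - κ p| + s < ρ) (hαβ : ∀ p, p ∉ J → α p = β p)
    (ζ : Fin n → ℝ) (hζJ : ∀ k ∈ J, dotp (η k) ζ = β k - α k) (hζl : dotp (η l) ζ = 0)
    (hζm : dotp (η m) ζ < 0) :
    volume.real (Qbox η s J α) < volume.real (Qbox η s J β) := by
  have htr : volume.real (Qbox η s J α) =
      volume.real ((fun x => x + (-ζ)) ⁻¹' (Qbox η s J α)) := by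
    rw [measureReal_def, measureReal_def, measure_preimage_add_right]
  rw [htr]
  have hβ0 : ∀ p, |β p - κ p| < ρ := fun p => by have := hβ p; linarith
  let κ₂ : Fin N → ℝ := fun p => if p ∈ J then β p - s / 2 else β p
  have hκ₂ : ∀ p, |κ₂ p - κ p| < ρ := fun p => by
    have h1 := hβ p
    have h2 := le_abs_self (β p - κ p)
    have h3 := neg_abs_le (β p - κ p)
    simp only [κ₂, abs_lt]
    split_ifs <;> constructor <;> linarith
  obtain ⟨v, hv⟩ := (hL.ana κ₂ hκ₂ _).2 hfm
  rw [mem_inter_facet] at hv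
  obtain ⟨hvp, hvm⟩ := hv m (Finset.mem_insert_self _ _)
  have hO : IsOpen ((⋂ k ∈ J, {x | β k - s < dotp (η k) x}) ∩
      {x | β m + dotp (η m) ζ < dotp (η m) x}) := by
    refine IsOpen.inter (isOpen_biInter_finset fun k _ => ?_) ?_
    · exact isOpen_lt (by fun_prop) (by fun_prop)
    · exact isOpen_lt (by fun_prop) (by fun_prop)
  have hne := strict_near η κ₂ z v (hL.strict _ hκ₂) hvp _ hO (by
    refine ⟨?_, ?_⟩
    · simp only [mem_iInter]
      intro k hk
      change β k - s < dotp (η k) v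
      rw [(hv k (Finset.mem_insert_of_mem hk)).2]
      simp only [κ₂, if_pos hk]; linarith
    · change β m + dotp (η m) ζ < dotp (η m) v
      rw [hvm]; simp only [κ₂, if_neg hmJ]; linarith)
  refine vol_lt _ _ _ ?_ ((hL.bdd β hβ0).subset (Qbox_sub _ _ _ _))
    (hO.inter (strict_open η κ₂)) hne ?_ ?_
  · rintro x ⟨h1, h2⟩
    have hx : ∀ p, dotp (η p) (x + -ζ) = dotp (η p) x - dotp (η p) ζ := fun p => by
      rw [dotp_add, dotp_neg]; ring
    have h1' : ∀ p, dotp (η p) x - dotp (η p) ζ ≤ α p := fun p => by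
      rw [← hx]; exact h1 p
    have h2' : ∀ p ∈ J, β p - s < dotp (η p) x := fun p hp => by
      have := h2 p hp
      rw [hx, hζJ p hp] at this; linarith
    have h3 : ∀ p ∈ J, dotp (η p) x ≤ β p := fun p hp => by
      have := h1' p
      rw [hζJ p hp] at this; linarith
    let κ₃ : Fin N → ℝ := fun p => if p ∈ J then dotp (η p) x else β p
    have hκ₃ : ∀ p, |κ₃ p - κ p| < ρ := fun p => by
      have e1 := hβ p
      have e2 := le_abs_self (β p - κ p)
      have e3 := neg_abs_le (β p - κ p)
      simp only [κ₃, abs_lt]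
      split_ifs with hp
      · have := h2' p hp
        have := h3 p hp
        constructor <;> linarith
      · constructor <;> linarith
    have hmem := edge_mem hL J m l d hm hl hline hfm hfl κ₃ hκ₃ x
      (fun k hk => by simp [κ₃, hk])
      (by have := h1' m; rw [hαβ m hmJ] at this; simp only [κ₃, if_neg hmJ]; linarith)
      (by have := h1' l; rw [hαβ l hlJ] at this; simp only [κ₃, if_neg hlJ]; linarith)
    refine ⟨fun p => ?_, h2'⟩
    by_cases hp : p ∈ J
    · exact h3 p hp
    · have := hmem p
      simpa only [κ₃, if_neg hp] using this
  · rintro x ⟨⟨hx1, -⟩, hx2⟩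
    simp only [mem_iInter] at hx1
    refine ⟨fun p => ?_, hx1⟩
    have := hx2 p
    simp only [κ₂] at this
    split_ifs at this <;> linarith
  · rw [Set.disjoint_left]
    rintro x ⟨h1, -⟩ ⟨⟨-, hx⟩, -⟩
    have h2 : β m + dotp (η m) ζ < dotp (η m) x := hx
    have h3 := h1 m
    simp only [dotp_add, dotp_neg, hαβ m hmJ] at h3
    linarith

lemma edge_flat {n N : ℕ} {η : Fin N → Fin n → ℝ} {κ : Fin N → ℝ} {ρ : ℝ} {z : Fin n → ℝ}
    (hL : Loc η κ ρ z) (i : Fin N) (s : ℝ) (hs : 0 < s) (hsρ : 3 * s < ρ)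
    (hA : ∀ κ' : Fin N → ℝ, (∀ p, |κ' p - κ p| ≤ s) →
      volume.real (polytope η (κ' + Pi.single i s)) - volume.real (polytope η κ') =
      volume.real (polytope η κ') - volume.real (polytope η (κ' + Pi.single i (-s))))
    (J : Finset (Fin N)) (m l : Fin N) (d : Fin n → ℝ)
    (hiJ : i ∈ J) (hmJ : m ∉ J) (hlJ : l ∉ J)
    (hm : dotp (η m) d < 0) (hl : 0 < dotp (η l) d)
    (hline : ∀ e : Fin n → ℝ, (∀ k ∈ J, dotp (η k) e = 0) → ∃ c : ℝ, e = c • d)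
    (hfm : (⋂ k ∈ insert m J, facet η κ k).Nonempty)
    (hfl : (⋂ k ∈ insert l J, facet η κ k).Nonempty)
    (ξ : Fin n → ℝ) (hξi : dotp (η i) ξ = 1) (hξJ : ∀ k ∈ J, k ≠ i → dotp (η k) ξ = 0)
    (hξl : dotp (η l) ξ = 0) : dotp (η m) ξ = 0 := by
  have hv := Qbox_vol hL i s hs hsρ hA (J.erase i) (by simp) κ (by simp [hs.le]) (by simp)
  rw [Finset.insert_erase hiJ] at hv
  have hoff : ∀ p, p ∉ J → κ p = (κ + Pi.single i s : Fin N → ℝ) p := fun p hp => by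
    have : p ≠ i := fun h => hp (h ▸ hiJ)
    simp [this]
  have hon : ∀ k ∈ J, s * dotp (η k) ξ = (κ + Pi.single i s : Fin N → ℝ) k - κ k := fun k hk => by
    by_cases hki : k = i
    · subst hki; simp [hξi]
    · simp [hki, hξJ k hk hki]
  rcases lt_trichotomy (dotp (η m) ξ) 0 with h | h | h
  · have := edge_vol_lt hL J m l d hmJ hlJ hm hl hline hfm hfl s hs κ (κ + Pi.single i s)
      (fun p => by
        rw [Pi.add_apply, Pi.single_apply]
        split_ifs <;> simp [abs_of_pos hs] <;> linarith)
      hoff (s • ξ) (fun k hk => by rw [dotp_smul]; exact hon k hk)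
      (by rw [dotp_smul, hξl, mul_zero])
      (by rw [dotp_smul]; exact mul_neg_of_pos_of_neg hs h)
    linarith
  · exact h
  · have := edge_vol_lt hL J m l d hmJ hlJ hm hl hline hfm hfl s hs (κ + Pi.single i s) κ
      (fun p => by simp; linarith)
      (fun p hp => (hoff p hp).symm) (-(s • ξ))
      (fun k hk => by rw [dotp_neg, dotp_smul]; have := hon k hk; linarith)
      (by rw [dotp_neg, dotp_smul, hξl, mul_zero, neg_zero])
      (by rw [dotp_neg, dotp_smul]; have := mul_pos hs h; linarith)
    linarith

/-- Moving along a direction until a new facet is hit. -/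
lemma travel {n N : ℕ} {η : Fin N → Fin n → ℝ} {κ : Fin N → ℝ}
    (hb : Bornology.IsBounded (polytope η κ)) (x d : Fin n → ℝ) (hx : x ∈ polytope η κ)
    (hd : d ≠ 0) (hact : ∀ k, dotp (η k) x = κ k → dotp (η k) d ≤ 0) :
    ∃ t : ℝ, ∃ l, 0 < t ∧ dotp (η l) x ≠ κ l ∧ x + t • d ∈ polytope η κ ∧
      dotp (η l) (x + t • d) = κ l ∧ 0 < dotp (η l) d := by
  classical
  let P : Finset (Fin N) := Finset.univ.filter fun k => 0 < dotp (η k) d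
  have hP : P.Nonempty := by
    by_contra hcon
    rw [Finset.not_nonempty_iff_eq_empty] at hcon
    have hneg : ∀ k, dotp (η k) d ≤ 0 := fun k => by
      by_contra h
      have : k ∈ P := by simpa [P] using h
      rw [hcon] at this; simp at this
    obtain ⟨R, hR0, hR⟩ := hb.subset_ball_lt 0 x
    have hdn : 0 < ‖d‖ := norm_pos_iff.2 hd
    have : x + (R / ‖d‖) • d ∈ polytope η κ := fun k => by
      rw [dotp_add, dotp_smul]
      have h1 := hx k
      have h2 := mul_nonpos_of_nonneg_of_nonpos (a := R / ‖d‖) (by positivity) (hneg k)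
      linarith
    have := hR this
    rw [mem_ball_iff_norm, add_sub_cancel_left, norm_smul, Real.norm_eq_abs,
      abs_of_pos (by positivity), div_mul_cancel₀ _ hdn.ne'] at this
    exact lt_irrefl _ this
  obtain ⟨l, hlP, hmin⟩ := P.exists_min_image (fun k => (κ k - dotp (η k) x) / dotp (η k) d) hP
  have hl : 0 < dotp (η l) d := by simpa [P] using hlP
  have hlx : dotp (η l) x ≠ κ l := fun h => absurd (hact l h) (not_le.2 hl)
  have hlt : dotp (η l) x < κ l := lt_of_le_of_ne (hx l) hlx
  have ht : 0 < (κ l - dotp (η l) x) / dotp (η l) d := div_pos (by linarith) hl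
  refine ⟨_, l, ht, hlx, fun k => ?_, ?_, hl⟩
  · rw [dotp_add, dotp_smul]
    have h1 := hx k
    rcases le_or_gt (dotp (η k) d) 0 with h | h
    · have := mul_nonpos_of_nonneg_of_nonpos ht.le h
      linarith
    · have := hmin k (by simpa [P] using h)
      rw [le_div_iff₀ h] at this
      linarith
  · rw [dotp_add, dotp_smul, div_mul_cancel₀ _ hl.ne']; ring

/-- Vertices: points of the polytope whose active conormals separate directions. -/
def IsVert {n N : ℕ} (η : Fin N → Fin n → ℝ) (κ : Fin N → ℝ) (v : Fin n → ℝ) : Prop :=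
  v ∈ polytope η κ ∧ ∀ d, (∀ k, dotp (η k) v = κ k → dotp (η k) d = 0) → d = 0

lemma exists_vert {n N : ℕ} {η : Fin N → Fin n → ℝ} {κ : Fin N → ℝ}
    (hb : Bornology.IsBounded (polytope η κ)) (x : Fin n → ℝ) (hx : x ∈ polytope η κ) :
    ∃ v, IsVert η κ v ∧ ∀ k, dotp (η k) x = κ k → dotp (η k) v = κ k := by
  classical
  let S : Set (Finset (Fin N)) := {A | ∃ y ∈ polytope η κ,
    A = Finset.univ.filter (fun k => dotp (η k) y = κ k) ∧
    ∀ k, dotp (η k) x = κ k → dotp (η k) y = κ k}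
  have hS : S.Nonempty := ⟨_, x, hx, rfl, fun _ h => h⟩
  obtain ⟨A, ⟨y, hy, rfl, hyx⟩, hmax⟩ := S.toFinite.exists_maximalFor Finset.card S hS
  refine ⟨y, ⟨hy, fun d hd => ?_⟩, hyx⟩
  by_contra hd0
  obtain ⟨t, l, ht, hl, hmem, hle, -⟩ := travel hb y d hy hd0 fun k hk => (hd k hk).le
  have hkeep : ∀ k, dotp (η k) y = κ k → dotp (η k) (y + t • d) = κ k := fun k hk => by
    rw [dotp_add, dotp_smul, hd k hk, hk]; ring
  have h1 := hmax (j := Finset.univ.filter (fun k => dotp (η k) (y + t • d) = κ k))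
    ⟨_, hmem, rfl, fun k hk => hkeep k (hyx k hk)⟩
  have hlt : (Finset.univ.filter (fun k => dotp (η k) y = κ k)).card <
      (Finset.univ.filter (fun k => dotp (η k) (y + t • d) = κ k)).card := by
    apply Finset.card_lt_card
    rw [Finset.ssubset_iff_of_subset]
    · exact ⟨l, by simpa using hle, by simpa using hl⟩
    · intro k hk
      simp only [Finset.mem_filter, Finset.mem_univ, true_and] at hk ⊢
      exact hkeep k hk
  exact absurd (h1 hlt.le) (not_le.2 hlt)

lemma vert_finite {n N : ℕ} (η : Fin N → Fin n → ℝ) (κ : Fin N → ℝ) :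
    {v | IsVert η κ v}.Finite := by
  classical
  refine Set.Finite.of_finite_image (f := fun v => Finset.univ.filter (fun k => dotp (η k) v = κ k))
    (Set.toFinite _) ?_
  intro v hv w hw h
  have h' : ∀ k, dotp (η k) v = κ k → dotp (η k) w = κ k := fun k hk => by
    have : k ∈ Finset.univ.filter (fun k => dotp (η k) v = κ k) := by simpa using hk
    have h2 : Finset.univ.filter (fun k => dotp (η k) v = κ k) =
      Finset.univ.filter (fun k => dotp (η k) w = κ k) := h
    rw [h2] at this
    simpa using this
  have := hv.2 (v - w) fun k hk => by rw [dotp_sub, hk, h' k hk, sub_self]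
  exact sub_eq_zero.1 this

theorem flat_of_affine {n N : ℕ} {η : Fin N → Fin n → ℝ} {κ : Fin N → ℝ} {ρ : ℝ}
    {z : Fin n → ℝ} (hΔ : GoodPolytope η κ)
    (hL : Loc η κ ρ z) (i : Fin N) (s : ℝ) (hs : 0 < s) (hsρ : 3 * s < ρ)
    (hA : ∀ κ' : Fin N → ℝ, (∀ p, |κ' p - κ p| ≤ s) →
      volume.real (polytope η (κ' + Pi.single i s)) - volume.real (polytope η κ') =
      volume.real (polytope η κ') - volume.real (polytope η (κ' + Pi.single i (-s)))) :
    FlatFacet η κ i := by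
  classical
  obtain ⟨hsim, hb, -, hf⟩ := hΔ
  obtain ⟨x0, hx0, hx0i⟩ := hf i
  obtain ⟨v0, hv0, hv0x⟩ := exists_vert hb x0 hx0
  have hv0i := hv0x i hx0i
  obtain ⟨ξ, hξ⟩ := solve η _ (hsim v0 hv0.1) (Pi.single i 1)
  have hξi : dotp (η i) ξ = 1 := by simpa using hξ i hv0i
  let f : (Fin n → ℝ) → ℝ := fun x =>
    ∑ k ∈ Finset.univ.filter (fun k => dotp (η k) v0 = κ k), dotp (η k) x
  have fadd : ∀ x y, f (x + y) = f x + f y := fun x y => by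
    simp [f, dotp_add, Finset.sum_add_distrib]
  have fsmul : ∀ (t : ℝ) x, f (t • x) = t * f x := fun t x => by
    simp [f, dotp_smul, Finset.mul_sum]
  have fsum : ∀ (T : Finset (Fin N)) (g : Fin N → Fin n → ℝ),
      f (∑ k ∈ T, g k) = ∑ k ∈ T, f (g k) := fun T g => by
    simp only [f, dotp_sum]; exact Finset.sum_comm
  have good : ∀ v, IsVert η κ v → dotp (η i) v = κ i →
      ∀ k, dotp (η k) v = κ k → k ≠ i → dotp (η k) ξ = 0 := by
    by_contra hcon
    push Not at hcon
    let B : Set (Fin n → ℝ) := {v | IsVert η κ v ∧ dotp (η i) v = κ i ∧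
      ∃ k, dotp (η k) v = κ k ∧ k ≠ i ∧ dotp (η k) ξ ≠ 0}
    have hBf : B.Finite := (vert_finite η κ).subset fun v hv => hv.1
    have hBn : B.Nonempty := by
      obtain ⟨v, h1, h2, k, h3, h4, h5⟩ := hcon
      exact ⟨v, h1, h2, k, h3, h4, h5⟩
    obtain ⟨v, ⟨hv, hvi, hbad⟩, hmax⟩ := Set.exists_max_image B f hBf hBn
    -- `v` is not `v0`
    have hne : v ≠ v0 := by
      rintro rfl
      obtain ⟨k, h3, h4, h5⟩ := hbad
      apply h5
      rw [hξ k h3]; simp [h4]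
    have hfpos : 0 < f (v0 - v) := by
      have hnn : ∀ k ∈ Finset.univ.filter (fun k => dotp (η k) v0 = κ k),
          0 ≤ dotp (η k) (v0 - v) := fun k hk => by
        have hk : dotp (η k) v0 = κ k := by simpa using hk
        rw [dotp_sub, hk]
        have := hv.1 k
        linarith
      refine lt_of_le_of_ne (Finset.sum_nonneg hnn) fun h => ?_
      have h0 := (Finset.sum_eq_zero_iff_of_nonneg hnn).1 h.symm
      have := hv0.2 (v0 - v) fun k hk => h0 k (by simpa using hk)
      exact hne (sub_eq_zero.1 this).symm
    choose D hD using fun m : Fin N => solve η _ (hsim v hv.1) (Pi.single m (-1))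
    let T := Finset.univ.filter (fun k => dotp (η k) v = κ k)
    have hT : ∀ k, k ∈ T ↔ dotp (η k) v = κ k := fun k => by simp [T]
    have hdec : ∀ e : Fin n → ℝ, e = ∑ m ∈ T, (-(dotp (η m) e)) • D m := by
      intro e
      rw [← sub_eq_zero]
      apply hv.2
      intro k hk
      rw [dotp_sub, dotp_sum, Finset.sum_eq_single k]
      · rw [dotp_smul, hD k k hk]; simp
      · intro b _ hbk
        rw [dotp_smul, hD b k hk]; simp [hbk.symm]
      · exact fun h => absurd ((hT k).2 hk) h
    have hex : ∃ m ∈ T, 0 < (-(dotp (η m) (v0 - v))) * f (D m) := by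
      by_contra hcon
      push Not at hcon
      rw [hdec (v0 - v), fsum] at hfpos
      simp only [fsmul] at hfpos
      exact absurd hfpos (not_lt.2 (Finset.sum_nonpos hcon))
    obtain ⟨m, hmT, hm⟩ := hex
    have hmv : dotp (η m) v = κ m := (hT m).1 hmT
    have hc : 0 ≤ -(dotp (η m) (v0 - v)) := by
      rw [dotp_sub, hmv]
      have := hv0.1 m
      linarith
    have hfD : 0 < f (D m) := pos_of_mul_pos_right hm hc
    have hmi : m ≠ i := by
      rintro rfl
      rw [dotp_sub, hv0i, hvi] at hm
      simp at hm
    have hDm : dotp (η m) (D m) = -1 := by rw [hD m m hmv]; simp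
    have hDk : ∀ k, dotp (η k) v = κ k → k ≠ m → dotp (η k) (D m) = 0 := fun k hk hkm => by
      rw [hD m k hk]; simp [hkm]
    have hD0 : D m ≠ 0 := fun h => by rw [h, dotp_zero] at hDm; norm_num at hDm
    obtain ⟨t, l, ht, hlv, hw, hlw, hlD⟩ := travel hb v (D m) hv.1 hD0 fun k hk => by
      by_cases hkm : k = m
      · subst hkm; rw [hDm]; norm_num
      · rw [hDk k hk hkm]
    have hJw : ∀ k, dotp (η k) v = κ k → k ≠ m → dotp (η k) (v + t • D m) = κ k :=
      fun k hk hkm => by rw [dotp_add, dotp_smul, hDk k hk hkm, hk]; ring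
    have hline : ∀ e : Fin n → ℝ, (∀ k ∈ T.erase m, dotp (η k) e = 0) →
        ∃ c : ℝ, e = c • D m := by
      intro e he
      refine ⟨-(dotp (η m) e), ?_⟩
      conv_lhs => rw [hdec e]
      rw [Finset.sum_eq_single m]
      · intro k hk hkm
        rw [he k (Finset.mem_erase.2 ⟨hkm, hk⟩)]; simp
      · exact fun h => absurd hmT h
    have hwv : IsVert η κ (v + t • D m) := by
      refine ⟨hw, fun e he => ?_⟩
      obtain ⟨c, rfl⟩ := hline e fun k hk => by
        rw [Finset.mem_erase, hT] at hk
        exact he k (hJw k hk.2 hk.1)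
      have := he l hlw
      rw [dotp_smul] at this
      rcases mul_eq_zero.1 this with h | h
      · rw [h, zero_smul]
      · exact absurd h hlD.ne'
    have hwi : dotp (η i) (v + t • D m) = κ i := hJw i hvi hmi.symm
    have hwgood : ∀ k, dotp (η k) (v + t • D m) = κ k → k ≠ i → dotp (η k) ξ = 0 := by
      intro k hk hki
      by_contra hk0
      have := hmax _ ⟨hwv, hwi, k, hk, hki, hk0⟩
      rw [fadd, fsmul] at this
      have := mul_pos ht hfD
      linarith
    have hli : l ≠ i := fun h => hlv (h ▸ hvi)
    have hmξ : dotp (η m) ξ = 0 := by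
      refine edge_flat hL i s hs hsρ hA (T.erase m) m l (D m)
        (by rw [Finset.mem_erase, hT]; exact ⟨hmi.symm, hvi⟩) (by simp)
        (by rw [Finset.mem_erase, hT]; exact fun h => hlv h.2)
        (by rw [hDm]; norm_num) hlD hline ⟨v, ?_⟩ ⟨v + t • D m, ?_⟩ ξ hξi ?_ (hwgood l hlw hli)
      · rw [mem_inter_facet]
        intro k hk
        rw [Finset.insert_erase hmT, hT] at hk
        exact ⟨hv.1, hk⟩
      · rw [mem_inter_facet]
        intro k hk
        refine ⟨hw, ?_⟩
        rcases Finset.mem_insert.1 hk with rfl | hk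
        · exact hlw
        · rw [Finset.mem_erase, hT] at hk
          exact hJw k hk.2 hk.1
      · intro k hk hki
        rw [Finset.mem_erase, hT] at hk
        exact hwgood k (hJw k hk.2 hk.1) hki
    obtain ⟨k, h3, h4, h5⟩ := hbad
    by_cases hkm : k = m
    · exact h5 (hkm ▸ hmξ)
    · exact h5 (hwgood k (hJw k h3 hkm) h4)
  refine ⟨ξ, fun h => ?_, fun j hji ⟨x, hxi, hxj⟩ => ?_⟩
  · rw [h, dotp_zero] at hξi; norm_num at hξi
  · obtain ⟨v, hv, hvx⟩ := exists_vert hb x hxi.1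
    exact good v hv (hvx i hxi.2) j (hvx j hxj.2) hji

/-- For a mass linear function, every asymmetric facet is pervasive or flat. -/
theorem stmt9 {n N : ℕ} (η : Fin N → Fin n → ℝ) (κ : Fin N → ℝ) (H : Fin n → ℝ)
    (γ : Fin N → ℝ) (C : ℝ) (hΔ : GoodPolytope η κ)
    (hml : MassLinear η κ H γ C) (i : Fin N) (hi : γ i ≠ 0) :
    Pervasive η κ i ∨ FlatFacet η κ i := by
  by_cases hp : Pervasive η κ i
  · exact Or.inl hp
  right
  unfold Pervasive at hp
  push Not at hp
  obtain ⟨j, hji, hdis⟩ := hp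
  obtain ⟨ρ, z, hL⟩ := exists_loc η κ hΔ
  have hρ := hL.pos
  refine flat_of_affine hΔ hL i (ρ / 6) (by linarith) (by linarith) fun κ' hκ' => ?_
  exact vol_affine hL hΔ.2.2.2 hml i j hji hi (Set.not_nonempty_iff_eq_empty.2 hdis) κ' (ρ / 6)
    (by linarith) fun p => by have := hκ' p; linarith
end
end

section
/- If a simple polytope Δ contains no pervasive facets and no flat facets, then every mass linear function on Δ is constant. -/
open MeasureTheory Function Set

noncomputable section

namespace MassLinearPaper

open Filter Topology

variable {n N : ℕ}

lemma dotp_add (v x y : Fin n → ℝ) : dotp v (x + y) = dotp v x + dotp v y := by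
  simp [dotp, mul_add, Finset.sum_add_distrib]

lemma dotp_smul (v : Fin n → ℝ) (r : ℝ) (y : Fin n → ℝ) : dotp v (r • y) = r * dotp v y := by
  simp only [dotp, Finset.mul_sum, Pi.smul_apply, smul_eq_mul]
  exact Finset.sum_congr rfl fun _ _ => by ring

/-- `dotp v` as a continuous linear map. -/
def dotL (v : Fin n → ℝ) : (Fin n → ℝ) →L[ℝ] ℝ :=
  LinearMap.toContinuousLinearMap
    { toFun := dotp v, map_add' := dotp_add v, map_smul' := dotp_smul v }

lemma dotL_apply (v x : Fin n → ℝ) : dotL v x = dotp v x := rfl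

lemma dotp_sub (v x y : Fin n → ℝ) : dotp v (x - y) = dotp v x - dotp v y := by
  simp only [← dotL_apply, map_sub]

lemma dotp_zero (v : Fin n → ℝ) : dotp v 0 = 0 := by
  simp only [← dotL_apply, map_zero]

lemma dotp_sum {ι : Type*} (v : Fin n → ℝ) (s : Finset ι) (f : ι → Fin n → ℝ) :
    dotp v (∑ i ∈ s, f i) = ∑ i ∈ s, dotp v (f i) := by
  simp only [← dotL_apply, map_sum]

@[fun_prop]
lemma dotp_cont (v : Fin n → ℝ) : Continuous (dotp v) := (dotL v).continuous

lemma pert {η : Fin N → Fin n → ℝ} {κ : Fin N → ℝ} (hs : IsSimplePoly η κ)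
    {x : Fin n → ℝ} (hx : x ∈ polytope η κ) (c : Fin N → ℝ) :
    ∃ u, ∀ k, dotp (η k) x = κ k → dotp (η k) u = c k := by
  have hli := hs x hx
  let φ0 : Submodule.span ℝ (Set.range fun i : {i : Fin N // dotp (η i) x = κ i} => η i.1) →ₗ[ℝ] ℝ :=
    (Finsupp.linearCombination ℝ (fun i : {i : Fin N // dotp (η i) x = κ i} => c i.1)) ∘ₗ
      hli.repr
  obtain ⟨φ, hφ⟩ := φ0.exists_extend
  refine ⟨fun j => φ (Pi.single j 1), fun k hk => ?_⟩
  have h1 : φ (η k) = c k := by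
    have hm : η k ∈ Submodule.span ℝ (Set.range fun i : {i : Fin N // dotp (η i) x = κ i} => η i.1) :=
      Submodule.subset_span ⟨⟨k, hk⟩, rfl⟩
    have h2 : φ0 ⟨η k, hm⟩ = φ (η k) := by rw [← hφ]; rfl
    rw [← h2]
    have h3 : hli.repr ⟨η k, hm⟩ = Finsupp.single ⟨k, hk⟩ 1 :=
      hli.repr_eq_single ⟨k, hk⟩ ⟨η k, hm⟩ rfl
    simp [φ0, h3]
  rw [← h1]
  conv_rhs => rw [pi_eq_sum_univ' (η k)]
  simp [dotp]

lemma move {η : Fin N → Fin n → ℝ} {κ : Fin N → ℝ} (x u : Fin n → ℝ) :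
    ∀ᶠ s : ℝ in 𝓝[>] 0, ∀ k, dotp (η k) x < κ k → dotp (η k) (x + s • u) < κ k := by
  rw [eventually_all]
  intro k
  by_cases h : dotp (η k) x < κ k
  · have hc : Continuous fun s : ℝ => dotp (η k) (x + s • u) := by fun_prop
    have := (hc.tendsto 0).eventually_lt_const (u := κ k) (by simpa using h)
    filter_upwards [this.filter_mono nhdsWithin_le_nhds] with s hs _ using hs
  · exact Eventually.of_forall fun s hk => absurd hk h

lemma slack {η : Fin N → Fin n → ℝ} {κ : Fin N → ℝ} (hs : IsSimplePoly η κ)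
    (hne : (polytope η κ).Nonempty) : ∃ x0, ∀ k, dotp (η k) x0 < κ k := by
  obtain ⟨x, hx⟩ := hne
  obtain ⟨u, hu⟩ := pert hs hx (fun _ => -1)
  obtain ⟨s, h1, h2⟩ := ((move (η := η) (κ := κ) x u).and self_mem_nhdsWithin).exists
  refine ⟨x + s • u, fun k => ?_⟩
  rcases (hx k).lt_or_eq with h | h
  · exact h1 k h
  · rw [dotp_add, dotp_smul, hu k h, h]
    have : (0 : ℝ) < s := h2
    linarith

lemma polytope_closed (η : Fin N → Fin n → ℝ) (κ : Fin N → ℝ) : IsClosed (polytope η κ) := by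
  simp only [polytope, ofPred_forall]
  exact isClosed_iInter fun i => isClosed_le (dotp_cont _) continuous_const

lemma polytope_mono (η : Fin N → Fin n → ℝ) {κ κ' : Fin N → ℝ} (h : ∀ k, κ k ≤ κ' k) :
    polytope η κ ⊆ polytope η κ' := fun _ hx k => (hx k).trans (h k)

lemma bdd_near {η : Fin N → Fin n → ℝ} {κ : Fin N → ℝ} (hs : IsSimplePoly η κ)
    (hb : Bornology.IsBounded (polytope η κ))
    (hne : (polytope η κ).Nonempty) :
    ∃ δ > 0, Bornology.IsBounded (polytope η (fun k => κ k + δ)) := by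
  obtain ⟨x0, hx0⟩ := slack hs hne
  have : ∀ᶠ δ : ℝ in 𝓝[>] 0, ∀ k, dotp (η k) x0 + δ < κ k := by
    rw [eventually_all]
    intro k
    have hc : Continuous fun s : ℝ => dotp (η k) x0 + s := by fun_prop
    exact ((hc.tendsto 0).eventually_lt_const (u := κ k) (by simpa using hx0 k)).filter_mono nhdsWithin_le_nhds
  obtain ⟨δ, h1, h2⟩ := (this.and self_mem_nhdsWithin).exists
  refine ⟨δ, h2, ?_⟩
  have hcomp : IsCompact (polytope η κ) := Metric.isCompact_of_isClosed_isBounded (polytope_closed η κ) hb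
  have him := hcomp.image (f := fun y => (2:ℝ) • y - x0) (by fun_prop)
  refine him.isBounded.subset fun x hx => ⟨(1/2:ℝ) • (x + x0), fun k => ?_, ?_⟩
  · rw [dotp_smul, dotp_add]
    have := hx k
    have := h1 k
    simp only at *
    linarith
  · simp [smul_smul]

/-- Near-active sets are contained in active sets. -/
lemma near_active {η : Fin N → Fin n → ℝ} {κ : Fin N → ℝ} (hs : IsSimplePoly η κ)
    (hb : Bornology.IsBounded (polytope η κ))
    (hne : (polytope η κ).Nonempty) :
    ∃ ε > 0, IsCompact (polytope η (fun k => κ k + ε)) ∧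
      ∀ x, (∀ k, dotp (η k) x ≤ κ k + ε) →
      ∃ y ∈ polytope η κ, ∀ k, κ k - ε ≤ dotp (η k) x → dotp (η k) y = κ k := by
  obtain ⟨δ, hδ, hbδ⟩ := bdd_near hs hb hne
  have hK : IsCompact (polytope η (fun k => κ k + δ)) :=
    Metric.isCompact_of_isClosed_isBounded (polytope_closed η _) hbδ
  have key : ∀ᶠ ε : ℝ in 𝓝 0, ∀ I : Finset (Fin N),
      (¬ ∃ y ∈ polytope η κ, ∀ k ∈ I, dotp (η k) y = κ k) →
      ∀ x ∈ polytope η (fun k => κ k + δ),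
        ¬ ((∀ k, dotp (η k) x ≤ κ k + ε) ∧ ∀ k ∈ I, κ k - ε ≤ dotp (η k) x) := by
    rw [eventually_all]
    intro I
    by_cases hI : ∃ y ∈ polytope η κ, ∀ k ∈ I, dotp (η k) y = κ k
    · exact Eventually.of_forall fun _ h => absurd hI h
    have := hK.eventually_forall_of_forall_eventually (x₀ := (0:ℝ))
      (P := fun ε x => ¬ ((∀ k, dotp (η k) x ≤ κ k + ε) ∧ ∀ k ∈ I, κ k - ε ≤ dotp (η k) x)) ?_
    · filter_upwards [this] with ε h _ using h
    intro y _
    apply IsOpen.mem_nhds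
    · have : IsClosed {z : ℝ × (Fin n → ℝ) | (∀ k, dotp (η k) z.2 ≤ κ k + z.1) ∧ ∀ k ∈ I, κ k - z.1 ≤ dotp (η k) z.2} := by
        refine IsClosed.inter (s₁ := {z : ℝ × (Fin n → ℝ) | ∀ k, dotp (η k) z.2 ≤ κ k + z.1})
          (s₂ := {z : ℝ × (Fin n → ℝ) | ∀ k ∈ I, κ k - z.1 ≤ dotp (η k) z.2}) ?_ ?_
        · simp only [ofPred_forall]
          exact isClosed_iInter fun i => isClosed_le (by fun_prop) (by fun_prop)
        · simp only [ofPred_forall]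
          exact isClosed_iInter fun i => isClosed_iInter fun _ => isClosed_le (by fun_prop) (by fun_prop)
      exact this.isOpen_compl
    · rintro ⟨h1, h2⟩
      simp only [add_zero, sub_zero] at h1 h2
      exact hI ⟨y, h1, fun k hk => le_antisymm (h1 k) (h2 k hk)⟩
  have key2 : ∀ᶠ ε : ℝ in 𝓝[>] 0, ε ≤ δ := nhdsWithin_le_nhds (ge_mem_nhds hδ)
  obtain ⟨ε, ⟨h1, h2⟩, h3⟩ := (((key.filter_mono nhdsWithin_le_nhds).and key2).and (self_mem_nhdsWithin (s := Ioi (0:ℝ)))).exists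
  refine ⟨ε, h3, hK.of_isClosed_subset (polytope_closed η _) (polytope_mono η fun k => by linarith), fun x hx => ?_⟩
  classical
  by_contra hcon
  refine h1 (Finset.univ.filter fun k => κ k - ε ≤ dotp (η k) x) ?_ x (fun k => (hx k).trans (by linarith)) ⟨hx, by simp⟩
  simpa using hcon

lemma stays {η : Fin N → Fin n → ℝ} {κ : Fin N → ℝ} (hs : IsSimplePoly η κ)
    {x : Fin n → ℝ} (hx : x ∈ polytope η κ) :
    ∀ᶠ κ' in 𝓝 κ, ∃ y ∈ polytope η κ', ∀ k, dotp (η k) x = κ k → dotp (η k) y = κ' k := by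
  choose u hu using fun j => pert hs hx (Pi.single j 1)
  have hact : ∀ κ' : Fin N → ℝ, ∀ k, dotp (η k) x = κ k →
      dotp (η k) (x + ∑ j, (κ' j - κ j) • u j) = κ' k := by
    intro κ' k hk
    rw [dotp_add, dotp_sum, hk]
    have : ∀ j, dotp (η k) ((κ' j - κ j) • u j) = if k = j then κ' j - κ j else 0 := by
      intro j
      rw [dotp_smul, hu j k hk, Pi.single_apply]; simp
    simp [this]
  have : ∀ᶠ κ' in 𝓝 κ, ∀ k, dotp (η k) x < κ k → dotp (η k) (x + ∑ j, (κ' j - κ j) • u j) < κ' k := by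
    rw [eventually_all]
    intro k
    by_cases h : dotp (η k) x < κ k
    · have h1 : Continuous fun κ' : Fin N → ℝ => dotp (η k) (x + ∑ j, (κ' j - κ j) • u j) := by fun_prop
      have h2 : Continuous fun κ' : Fin N → ℝ => κ' k := by fun_prop
      have := (isOpen_lt h1 h2).mem_nhds (x := κ) (by simpa using h)
      filter_upwards [this] with s hs _ using hs
    · exact Eventually.of_forall fun s hk => absurd hk h
  filter_upwards [this] with κ' h
  refine ⟨_, fun k => ?_, hact κ'⟩
  rcases (hx k).lt_or_eq with h' | h'
  · exact (h k h').le
  · exact (hact κ' k h').le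

lemma chamber_nhds {η : Fin N → Fin n → ℝ} {κ : Fin N → ℝ} (hs : IsSimplePoly η κ)
    (hb : Bornology.IsBounded (polytope η κ))
    (hne : (polytope η κ).Nonempty) : ∃ r > 0, Metric.ball κ r ⊆ chamber η κ := by
  obtain ⟨ε, hε, -, hnear⟩ := near_active hs hb hne
  have h1 : ∀ᶠ κ' in 𝓝 κ, ∀ I : Finset (Fin N), (⋂ i ∈ I, facet η κ i).Nonempty →
      (⋂ i ∈ I, facet η κ' i).Nonempty := by
    rw [eventually_all]
    intro I
    by_cases hI : (⋂ i ∈ I, facet η κ i).Nonempty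
    · obtain ⟨x, hx⟩ := hI
      simp only [mem_iInter] at hx
      rcases I.eq_empty_or_nonempty with rfl | ⟨i0, hi0⟩
      · simp
      filter_upwards [stays hs (hx i0 hi0).1] with κ' h _
      obtain ⟨y, hy, hy2⟩ := h
      refine ⟨y, ?_⟩
      simp only [mem_iInter]
      exact fun i hi => ⟨hy, hy2 i (hx i hi).2⟩
    · exact Eventually.of_forall fun _ h => absurd h hI
  have h2 : ∀ᶠ κ' in 𝓝 κ, κ' ∈ {κ' | IsSimplePoly η κ' ∧ Analogous η κ κ'} := by
    filter_upwards [h1, Metric.ball_mem_nhds κ hε] with κ' h hball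
    have hd : ∀ k, |κ' k - κ k| < ε := fun k => by
      have := (dist_le_pi_dist κ' κ k).trans_lt hball
      rwa [Real.dist_eq] at this
    have hn : ∀ x ∈ polytope η κ', ∃ y ∈ polytope η κ, ∀ k, dotp (η k) x = κ' k → dotp (η k) y = κ k := by
      intro x hx
      obtain ⟨y, hy, hy2⟩ := hnear x fun k => (hx k).trans (by linarith [(abs_lt.1 (hd k)).2])
      exact ⟨y, hy, fun k hk => hy2 k (by rw [hk]; linarith [(abs_lt.1 (hd k)).1])⟩
    constructor
    · intro x hx
      obtain ⟨y, hy, hy2⟩ := hn x hx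
      exact (hs y hy).comp (fun i : {i : Fin N // dotp (η i) x = κ' i} => (⟨i.1, hy2 i.1 i.2⟩ : {i : Fin N // dotp (η i) y = κ i}))
        (fun a b hab => Subtype.ext (by simpa using hab))
    · intro I
      refine ⟨fun hI => ?_, h I⟩
      obtain ⟨x, hx⟩ := hI
      simp only [mem_iInter] at hx
      rcases I.eq_empty_or_nonempty with rfl | ⟨i0, hi0⟩
      · simp
      obtain ⟨y, hy, hy2⟩ := hn x (hx i0 hi0).1
      refine ⟨y, ?_⟩
      simp only [mem_iInter]
      exact fun i hi => ⟨hy, hy2 i (hx i hi).2⟩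
  obtain ⟨r, hr, hsub⟩ := Metric.mem_nhds_iff.1 h2
  exact ⟨r, hr, (convex_ball κ r).isPreconnected.subset_connectedComponentIn (Metric.mem_ball_self hr) hsub⟩


/-- The output of `near_active`. -/
def NearAct (η : Fin N → Fin n → ℝ) (κ : Fin N → ℝ) (ε : ℝ) : Prop :=
  0 < ε ∧ IsCompact (polytope η (fun k => κ k + ε)) ∧
      ∀ x, (∀ k, dotp (η k) x ≤ κ k + ε) →
      ∃ y ∈ polytope η κ, ∀ k, κ k - ε ≤ dotp (η k) x → dotp (η k) y = κ k

/-- Integral of `g` over the polytope. -/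
def Fint (η : Fin N → Fin n → ℝ) (g : (Fin n → ℝ) → ℝ) (κ : Fin N → ℝ) : ℝ :=
  ∫ x in polytope η κ, g x

lemma NearAct.compact {η : Fin N → Fin n → ℝ} {κ : Fin N → ℝ} {ε : ℝ} (h : NearAct η κ ε)
    {κ' : Fin N → ℝ} (h' : ∀ k, κ' k ≤ κ k + ε) : IsCompact (polytope η κ') :=
  h.2.1.of_isClosed_subset (polytope_closed η _) (polytope_mono η h')

lemma single_nonneg' {i : Fin N} {s : ℝ} (hs : 0 ≤ s) (k : Fin N) :
    0 ≤ (Pi.single i s : Fin N → ℝ) k := by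
  rw [Pi.single_apply]; split_ifs <;> linarith

lemma single_le' {i : Fin N} {s : ℝ} (hs : 0 ≤ s) (k : Fin N) :
    (Pi.single i s : Fin N → ℝ) k ≤ s := by
  rw [Pi.single_apply]; split_ifs <;> linarith

lemma integral_union_inter_aux {A B : Set (Fin n → ℝ)} (hA : IsCompact A) (hB : IsCompact B)
    {g : (Fin n → ℝ) → ℝ} (hg : Continuous g) :
    (∫ x in A ∪ B, g x) + (∫ x in A ∩ B, g x) = (∫ x in A, g x) + ∫ x in B, g x := by
  have iA : IntegrableOn g A := hg.continuousOn.integrableOn_compact hA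
  have iB : IntegrableOn g B := hg.continuousOn.integrableOn_compact hB
  have h1 := integral_inter_add_sdiff (s := B) (t := A) (f := g) hA.measurableSet iB
  have h2 := setIntegral_union (f := g) (disjoint_sdiff_right : Disjoint A (B \ A))
    (hB.measurableSet.diff hA.measurableSet) iA (iB.mono_set sdiff_subset)
  rw [union_sdiff_self] at h2
  rw [inter_comm] at h1
  linarith

lemma sep {η : Fin N → Fin n → ℝ} {κ : Fin N → ℝ} {ε : ℝ} (h : NearAct η κ ε)
    {i j : Fin N} (hij : j ≠ i) (hdis : ¬ (facet η κ i ∩ facet η κ j).Nonempty)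
    {g : (Fin n → ℝ) → ℝ} (hg : Continuous g) {κ' : Fin N → ℝ} {s t : ℝ} (hs : 0 ≤ s) (ht : 0 ≤ t)
    (hlow : ∀ k, κ k - ε ≤ κ' k) (hup : ∀ k, κ' k + s + t ≤ κ k + ε) :
    Fint η g (κ' + Pi.single i s + Pi.single j t) + Fint η g κ' =
      Fint η g (κ' + Pi.single i s) + Fint η g (κ' + Pi.single j t) := by
  have hU : polytope η (κ' + Pi.single i s + Pi.single j t) =
      polytope η (κ' + Pi.single i s) ∪ polytope η (κ' + Pi.single j t) := by
    apply Subset.antisymm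
    · intro x hx
      by_contra hcon
      simp only [mem_union, not_or] at hcon
      obtain ⟨h1, h2⟩ := hcon
      have hi : κ' i ≤ dotp (η i) x := by
        by_contra hlt
        apply h2
        intro k
        have := hx k
        simp only [Pi.add_apply, Pi.single_apply] at this ⊢
        by_cases hk : k = i
        · subst hk; simp [hij.symm]; linarith
        · simpa [hk] using this
      have hj : κ' j ≤ dotp (η j) x := by
        by_contra hlt
        apply h1
        intro k
        have := hx k
        simp only [Pi.add_apply, Pi.single_apply] at this ⊢
        by_cases hk : k = j
        · subst hk; simp [hij]; linarith
        · simpa [hk] using this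
      obtain ⟨y, hy, hy2⟩ := h.2.2 x fun k => (hx k).trans (by
        have := hup k
        have := single_le' (i := i) hs k
        have := single_le' (i := j) ht k
        simp only [Pi.add_apply]; linarith)
      exact hdis ⟨y, ⟨hy, hy2 i ((hlow i).trans hi)⟩, ⟨hy, hy2 j ((hlow j).trans hj)⟩⟩
    · apply union_subset <;> apply polytope_mono <;> intro k
      · have := single_nonneg' (i := j) ht k
        simp only [Pi.add_apply]; linarith
      · have := single_nonneg' (i := i) hs k
        simp only [Pi.add_apply]; linarith
  have hI : polytope η κ' =
      polytope η (κ' + Pi.single i s) ∩ polytope η (κ' + Pi.single j t) := by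
    apply Subset.antisymm
    · apply subset_inter <;> apply polytope_mono <;> intro k
      · have := single_nonneg' (i := i) hs k
        simp only [Pi.add_apply]; linarith
      · have := single_nonneg' (i := j) ht k
        simp only [Pi.add_apply]; linarith
    · rintro x ⟨h1, h2⟩ k
      have h1 := h1 k
      have h2 := h2 k
      simp only [Pi.add_apply, Pi.single_apply] at h1 h2
      by_cases hk : k = i
      · subst hk; simpa [hij.symm] using h2
      · simpa [hk] using h1
  have hA : IsCompact (polytope η (κ' + Pi.single i s)) := h.compact fun k => by
    have := hup k
    have := single_le' (i := i) hs k
    simp only [Pi.add_apply]; linarith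
  have hB : IsCompact (polytope η (κ' + Pi.single j t)) := h.compact fun k => by
    have := hup k
    have := single_le' (i := j) ht k
    simp only [Pi.add_apply]; linarith
  unfold Fint
  rw [hU, hI]
  exact integral_union_inter_aux hA hB hg

lemma vol_lt {A B U : Set (Fin n → ℝ)} (hAB : A ⊆ B) (hUB : U ⊆ B) (hd : Disjoint A U)
    (hU : IsOpen U) (hne : U.Nonempty) (hB : volume B ≠ ⊤) :
    volume.real A < volume.real B := by
  have hA : volume A ≠ ⊤ := measure_ne_top_of_subset hAB hB
  have hU' : volume U ≠ ⊤ := measure_ne_top_of_subset hUB hB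
  have h1 : volume.real (A ∪ U) = volume.real A + volume.real U :=
    measureReal_union hd hU.measurableSet hA hU'
  have h2 : volume.real (A ∪ U) ≤ volume.real B := measureReal_mono (union_subset hAB hUB) hB
  have h3 : 0 < volume.real U := ENNReal.toReal_pos (hU.measure_pos volume hne).ne' hU'
  linarith

lemma Fint_one (η : Fin N → Fin n → ℝ) (κ : Fin N → ℝ) :
    Fint η (fun _ => 1) κ = volume.real (polytope η κ) := by
  simp [Fint]

lemma vol_strict {η : Fin N → Fin n → ℝ} {κ : Fin N → ℝ} (hs : IsSimplePoly η κ)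
    {j : Fin N} (hj : (facet η κ j).Nonempty) {t : ℝ} (ht : 0 < t)
    (hc : IsCompact (polytope η (κ + Pi.single j t))) :
    volume.real (polytope η κ) < volume.real (polytope η (κ + Pi.single j t)) := by
  obtain ⟨x, hx, hxj⟩ := hj
  obtain ⟨u, hu⟩ := pert hs hx (fun k => if k = j then 1 else -1)
  have hlt : ∀ᶠ s : ℝ in 𝓝[>] 0, s < t := (Iio_mem_nhds ht : _ ∈ 𝓝 (0:ℝ)) |> fun h => nhdsWithin_le_nhds h
  obtain ⟨s, ⟨h1, h3⟩, h2⟩ := (((move (η := η) (κ := κ) x u).and hlt).and self_mem_nhdsWithin).exists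
  have hs0 : 0 < s := h2
  refine vol_lt (U := {x | κ j < dotp (η j) x} ∩ ⋂ k, {x | dotp (η k) x < (κ + Pi.single j t : Fin N → ℝ) k}) ?_ ?_ ?_ ?_ ?_ hc.measure_lt_top.ne
  · refine polytope_mono η fun k => ?_
    have := single_nonneg' (i := j) ht.le k
    simp only [Pi.add_apply]; linarith
  · rintro y ⟨_, hy⟩ k
    exact (mem_iInter.1 hy k).le
  · rw [Set.disjoint_left]
    rintro y hy ⟨hy2, _⟩
    exact absurd (hy j) (not_le.2 hy2)
  · exact (isOpen_lt (by fun_prop) (by fun_prop)).inter (isOpen_iInter_of_finite fun k => isOpen_lt (by fun_prop) (by fun_prop))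
  · refine ⟨x + s • u, ?_, mem_iInter.2 fun k => ?_⟩
    · show κ j < dotp (η j) (x + s • u)
      rw [dotp_add, dotp_smul, hxj, hu j hxj]; simp; exact hs0
    · show dotp (η k) (x + s • u) < (κ + Pi.single j t : Fin N → ℝ) k
      simp only [Pi.add_apply, Pi.single_apply]
      by_cases hk : k = j
      · subst hk
        rw [dotp_add, dotp_smul, hxj, hu k hxj]; simp; exact h3
      · simp only [hk, if_false, add_zero]
        rcases (hx k).lt_or_eq with h | h
        · exact h1 k h
        · rw [dotp_add, dotp_smul, hu k h, h]; simp [hk]; exact hs0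

lemma mass_eq {η : Fin N → Fin n → ℝ} {κ κ' : Fin N → ℝ} {H : Fin n → ℝ} {γ : Fin N → ℝ} {C : ℝ}
    (hml : MassLinear η κ H γ C) (hκ : κ' ∈ chamber η κ) (hc : IsCompact (polytope η κ')) :
    Fint η (dotp H) κ' = (∑ i, γ i * κ' i + C) * Fint η (fun _ => 1) κ' := by
  rw [← hml κ' hκ, Fint_one]
  have h1 := measure_smul_setAverage (μ := volume) (fun x : Fin n → ℝ => x) hc.measure_lt_top.ne
  have hi : IntegrableOn (fun x : Fin n → ℝ => x) (polytope η κ') :=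
    continuous_id.continuousOn.integrableOn_compact hc
  have h2 := (dotL H).integral_comp_comm hi
  simp only [dotL_apply] at h2
  rw [Fint, h2, ← h1, dotp_smul, mul_comm, centroid]

lemma second_diff {η : Fin N → Fin n → ℝ} {κ : Fin N → ℝ} {ε r : ℝ} (h : NearAct η κ ε)
    (hsimp : IsSimplePoly η κ)
    {H : Fin n → ℝ} {γ : Fin N → ℝ} {C : ℝ}
    (hml : MassLinear η κ H γ C) (hr : 0 < r) (hball : Metric.ball κ r ⊆ chamber η κ)
    {i j : Fin N} (hij : j ≠ i) (hdis : ¬ (facet η κ i ∩ facet η κ j).Nonempty)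
    (hj : (facet η κ j).Nonempty) (hγ : γ i ≠ 0) :
    ∃ ρ > 0, 4 * ρ ≤ ε ∧ ∀ κ' : Fin N → ℝ, (∀ k, |κ' k - κ k| ≤ ρ) → ∀ s, 0 ≤ s → s ≤ ρ →
      volume.real (polytope η (κ' + Pi.single i (2 * s))) + volume.real (polytope η κ') =
        2 * volume.real (polytope η (κ' + Pi.single i s)) := by
  obtain ⟨ρ, hρ, h4, h5⟩ : ∃ ρ : ℝ, 0 < ρ ∧ 4 * ρ ≤ ε ∧ 4 * ρ < r := by
    refine ⟨min ε r / 8, ?_, ?_, ?_⟩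
    · have := lt_min h.1 hr; linarith
    · have := min_le_left ε r; have := h.1; linarith
    · have := min_le_right ε r; linarith
  refine ⟨ρ, hρ, h4, ?_⟩
  have hch : ∀ κ' : Fin N → ℝ, (∀ k, |κ' k - κ k| ≤ 4 * ρ) →
      Fint η (dotp H) κ' = (∑ i, γ i * κ' i + C) * Fint η (fun _ => 1) κ' := by
    intro κ' hκ'
    apply mass_eq hml
    · apply hball
      rw [Metric.mem_ball]
      exact (dist_pi_le_iff (by linarith)).2 (fun k => by rw [Real.dist_eq]; exact hκ' k) |>.trans_lt h5
    · exact h.compact fun k => by linarith [(abs_le.1 (hκ' k)).2]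
  have hsum : ∀ (κ' : Fin N → ℝ) (l : Fin N) (s : ℝ),
      ∑ i, γ i * (κ' + Pi.single l s : Fin N → ℝ) i = ∑ i, γ i * κ' i + γ l * s := by
    intro κ' l s
    simp [mul_add, Finset.sum_add_distrib, Pi.single_apply]
  have main : ∀ κ' : Fin N → ℝ, (∀ k, |κ' k - κ k| ≤ ρ) → ∀ s, 0 ≤ s → s ≤ 2 * ρ →
      γ i * s * (Fint η (fun _ => 1) (κ' + Pi.single j ρ) - Fint η (fun _ => 1) κ') +
      γ j * ρ * (Fint η (fun _ => 1) (κ' + Pi.single i s) - Fint η (fun _ => 1) κ') = 0 := by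
    intro κ' hκ' s hs hs2
    have hlow : ∀ k, κ k - ε ≤ κ' k := fun k => by linarith [(abs_le.1 (hκ' k)).1]
    have hup : ∀ k, κ' k + s + ρ ≤ κ k + ε := fun k => by linarith [(abs_le.1 (hκ' k)).2]
    have e1 := sep h hij hdis (g := fun _ => 1) continuous_const hs hρ.le hlow hup
    have e2 := sep h hij hdis (g := dotp H) (dotp_cont H) hs hρ.le hlow hup
    rw [hch (κ' + (Pi.single i s : Fin N → ℝ) + (Pi.single j ρ : Fin N → ℝ)), hch κ',
      hch (κ' + (Pi.single i s : Fin N → ℝ)),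
      hch (κ' + (Pi.single j ρ : Fin N → ℝ)), hsum, hsum, hsum] at e2
    · have e3 : Fint η (fun _ => 1) (κ' + Pi.single i s + Pi.single j ρ) =
        Fint η (fun _ => 1) (κ' + Pi.single i s) + Fint η (fun _ => 1) (κ' + Pi.single j ρ) - Fint η (fun _ => 1) κ' := by
        linarith
      rw [e3] at e2
      linear_combination e2
    all_goals
      intro k
      have := abs_le.1 (hκ' k)
      have := single_le' (i := i) hs k
      have := single_le' (i := j) hρ.le k
      have := single_nonneg' (i := i) hs k
      have := single_nonneg' (i := j) hρ.le k
      try simp only [Pi.add_apply]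
      rw [abs_le]
      constructor <;> linarith
  have hγj : γ j ≠ 0 := by
    intro h0
    have := main κ (by simp [hρ.le]) ρ hρ.le (by linarith)
    have hst := vol_strict hsimp hj hρ (h.compact fun k => by
      have := single_le' (i := j) hρ.le k
      simp only [Pi.add_apply]; linarith)
    rw [h0, Fint_one, Fint_one] at this
    simp only [zero_mul, add_zero, mul_eq_zero] at this
    rcases this with (h' | h') | h'
    · exact hγ h'
    · exact hρ.ne' h'
    · linarith
  intro κ' hκ' s hs hs2
  have e1 := main κ' hκ' s hs (by linarith)
  have e2 := main κ' hκ' (2 * s) (by linarith) (by linarith)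
  simp only [Fint_one] at e1 e2
  have : γ j * ρ * (volume.real (polytope η (κ' + Pi.single i (2 * s))) + volume.real (polytope η κ') -
        2 * volume.real (polytope η (κ' + Pi.single i s))) = 0 := by
    linear_combination e2 - 2 * e1
  rcases mul_eq_zero.1 this with h' | h'
  · exact absurd h' (mul_ne_zero hγj hρ.ne')
  · linarith

/-- The part of the polytope near the facets in `T`. -/
def Tube (η : Fin N → Fin n → ℝ) (s : ℝ) (T : Finset (Fin N)) (κ : Fin N → ℝ) :
    Set (Fin n → ℝ) :=
  {x | x ∈ polytope η κ ∧ ∀ k ∈ T, κ k - s < dotp (η k) x}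

lemma tube_meas (η : Fin N → Fin n → ℝ) (s : ℝ) (T : Finset (Fin N)) (κ : Fin N → ℝ) :
    MeasurableSet (Tube η s T κ) := by
  have : Tube η s T κ = polytope η κ ∩ ⋂ k ∈ T, {x | κ k - s < dotp (η k) x} := by
    ext x; simp [Tube]
  rw [this]
  exact (polytope_closed η κ).measurableSet.inter
    (Finset.measurableSet_biInter _ fun k _ => (isOpen_lt (by fun_prop) (by fun_prop)).measurableSet)

lemma tube_sub (η : Fin N → Fin n → ℝ) {s : ℝ} (hs : 0 ≤ s) {T : Finset (Fin N)} (κ : Fin N → ℝ)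
    {k : Fin N} (hk : k ∉ T) : Tube η s T (κ - Pi.single k s) ⊆ Tube η s T κ := by
  rintro x ⟨h1, h2⟩
  refine ⟨polytope_mono η (fun l => ?_) h1, fun l hl => ?_⟩
  · have := single_nonneg' (i := k) hs l
    simp only [Pi.sub_apply]; linarith
  · have := h2 l hl
    have hne : l ≠ k := fun h => hk (h ▸ hl)
    simpa [Pi.single_apply, hne] using this

lemma tube_insert (η : Fin N → Fin n → ℝ) {s : ℝ} {T : Finset (Fin N)} (κ : Fin N → ℝ)
    {k : Fin N} (hk : k ∉ T) :
    Tube η s (insert k T) κ = Tube η s T κ \ Tube η s T (κ - Pi.single k s) := by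
  ext x
  constructor
  · rintro ⟨h1, h2⟩
    refine ⟨⟨h1, fun l hl => h2 l (Finset.mem_insert_of_mem hl)⟩, fun ⟨h3, _⟩ => ?_⟩
    have := h3 k
    have h4 := h2 k (Finset.mem_insert_self _ _)
    simp at this
    linarith
  · rintro ⟨⟨h1, h2⟩, h3⟩
    refine ⟨h1, fun l hl => ?_⟩
    rcases Finset.mem_insert.1 hl with rfl | hl
    · by_contra hcon
      refine h3 ⟨fun m => ?_, fun m hm => ?_⟩
      · by_cases hm : m = l
        · subst hm; simp; linarith
        · have := h1 m; simpa [Pi.single_apply, hm] using this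
      · have hne : m ≠ l := fun h => hk (h ▸ hm)
        have := h2 m hm
        simpa [Pi.single_apply, hne] using this
    · exact h2 l hl

lemma vol_tube_insert (η : Fin N → Fin n → ℝ) {s : ℝ} (hs : 0 ≤ s) {T : Finset (Fin N)} (κ : Fin N → ℝ)
    (hc : IsCompact (polytope η κ)) {k : Fin N} (hk : k ∉ T) :
    volume.real (Tube η s (insert k T) κ) =
      volume.real (Tube η s T κ) - volume.real (Tube η s T (κ - Pi.single k s)) := by
  rw [tube_insert η κ hk]
  exact measureReal_sdiff (tube_sub η hs κ hk) (tube_meas η s T _)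
    (measure_ne_top_of_subset (fun x hx => hx.1) hc.measure_lt_top.ne)

lemma tube_inv {η : Fin N → Fin n → ℝ} {κ : Fin N → ℝ} {ε ρ : ℝ} (h : NearAct η κ ε) (hρ : 4 * ρ ≤ ε)
    {i : Fin N}
    (hsd : ∀ κ' : Fin N → ℝ, (∀ k, |κ' k - κ k| ≤ ρ) → ∀ s, 0 ≤ s → s ≤ ρ →
      volume.real (polytope η (κ' + Pi.single i (2 * s))) + volume.real (polytope η κ') =
        2 * volume.real (polytope η (κ' + Pi.single i s)))
    {s : ℝ} (hs : 0 ≤ s) (T : Finset (Fin N)) (hiT : i ∉ T) :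
    ∀ κ' : Fin N → ℝ, (∀ k, |κ' k - κ k| ≤ ρ - (T.card + 1) * s) →
      volume.real (Tube η s (insert i T) κ') =
      volume.real (Tube η s (insert i T) (κ' + Pi.single i s)) := by
  have hcomp : ∀ (κ' : Fin N → ℝ) (m : ℕ), (∀ k, |κ' k - κ k| ≤ ρ - (m + 1) * s) →
      IsCompact (polytope η κ') ∧ IsCompact (polytope η (κ' + Pi.single i s)) := by
    intro κ' m h'
    have hm : 0 ≤ m * s := by positivity
    have hb := fun k => (abs_le.1 (h' k)).2
    constructor <;> refine h.compact fun k => ?_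
    · have := hb k; have := (abs_nonneg _).trans (h' k); nlinarith
    · have := hb k; have := (abs_nonneg _).trans (h' k)
      have := single_le' (i := i) hs k
      simp only [Pi.add_apply]
      nlinarith
  induction T using Finset.induction_on with
  | empty =>
    intro κ' hκ'
    obtain ⟨c1, c2⟩ := hcomp κ' 0 (by simpa using hκ')
    rw [vol_tube_insert η hs κ' c1 hiT, vol_tube_insert η hs _ c2 hiT]
    have hT : ∀ κ'' : Fin N → ℝ, Tube η s ∅ κ'' = polytope η κ'' := by intro κ''; ext x; simp [Tube]
    simp only [hT, Finset.card_empty, Nat.cast_zero, zero_add, one_mul] at hκ' ⊢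
    have := hsd (κ' - Pi.single i s) (fun k => ?_) s hs ((by have := (abs_nonneg _).trans (hκ' i); linarith))
    · have e1 : κ' - Pi.single i s + Pi.single i (2 * s) = κ' + Pi.single i s := by
        rw [two_mul, Pi.single_add]; abel
      rw [e1, sub_add_cancel] at this
      rw [add_sub_cancel_right]
      linarith
    · have h1 := abs_le.1 (hκ' k)
      have := single_le' (i := i) hs k
      have := single_nonneg' (i := i) hs k
      simp only [Pi.sub_apply]
      rw [abs_le]; constructor <;> linarith
  | insert k T hkT ih =>
    intro κ' hκ'
    have hki : k ≠ i := fun h => hiT (h ▸ Finset.mem_insert_self _ _)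
    have hiT' : i ∉ T := fun h => hiT (Finset.mem_insert_of_mem h)
    have hk' : k ∉ insert i T := by simp [hki, hkT]
    obtain ⟨c1, c2⟩ := hcomp κ' _ hκ'
    rw [Finset.card_insert_of_notMem hkT] at hκ'
    push_cast at hκ'
    rw [Finset.insert_comm, vol_tube_insert η hs κ' c1 hk', vol_tube_insert η hs _ c2 hk',
      add_sub_right_comm, ih hiT' κ' fun l => ?_, ih hiT' (κ' - (Pi.single k s : Fin N → ℝ)) fun l => ?_]
    · have h1 := abs_le.1 (hκ' l)
      have := single_le' (i := k) hs l
      have := single_nonneg' (i := k) hs l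
      simp only [Pi.sub_apply]
      rw [abs_le]; constructor <;> nlinarith
    · have := hκ' l; nlinarith

lemma tube_core {η : Fin N → Fin n → ℝ} {κ : Fin N → ℝ} {ε : ℝ} (h : NearAct η κ ε)
    (hsimp : IsSimplePoly η κ) {S : Finset (Fin N)} {i p q : Fin N} (hi : i ∈ S) (hp : p ∉ S)
    {v w : Fin n → ℝ} (hv : v ∈ polytope η κ)
    (hact : ∀ k, dotp (η k) v = κ k ↔ k ∈ S ∨ k = p)
    (hedge : ∀ y ∈ polytope η κ, (∀ k ∈ S, dotp (η k) y = κ k) →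
      ∀ l, dotp (η l) y = κ l → l ∈ S ∨ l = p ∨ l = q)
    (hwi : dotp (η i) w = 1) (hwS : ∀ k ∈ S, k ≠ i → dotp (η k) w = 0) (hwq : dotp (η q) w = 0)
    {a b : ℝ} (ha0 : 0 ≤ a) (ha1 : a ≤ 1) (hb0 : 0 ≤ b) (hb1 : b ≤ 1)
    (hvol : ∀ᶠ s : ℝ in 𝓝[>] 0, volume.real (Tube η s S (κ + Pi.single i (a * s))) =
      volume.real (Tube η s S (κ + Pi.single i (b * s))))
    (hneg : (b - a) * dotp (η p) w < 0) : False := by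
  obtain ⟨u, hu⟩ := pert hsimp hv (fun k => if k = i then b - 1/2 else if k ∈ S then -1/2 else
    (b - a) * dotp (η p) w / 2)
  have hsmall : ∀ᶠ s : ℝ in 𝓝[>] 0, ∀ k, s * |dotp (η k) w| < ε := by
    rw [eventually_all]
    intro k
    have hc : Continuous fun s : ℝ => s * |dotp (η k) w| := by fun_prop
    exact ((hc.tendsto 0).eventually_lt_const (u := ε) (by simpa using h.1)).filter_mono nhdsWithin_le_nhds
  have hlt : ∀ᶠ s : ℝ in 𝓝[>] 0, s < ε := nhdsWithin_le_nhds (Iio_mem_nhds h.1)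
  obtain ⟨s, ⟨⟨⟨hvol, hmove⟩, hsmall⟩, hlt⟩, hs⟩ :=
    ((((hvol.and (move (η := η) (κ := κ) v u)).and hsmall).and hlt).and self_mem_nhdsWithin).exists
  have hs0 : 0 < s := hs
  have hpi : p ≠ i := fun h => hp (h ▸ hi)
  have hqi : q ≠ i := by rintro rfl; rw [hwi] at hwq; exact one_ne_zero hwq
  have has : 0 ≤ a * s := by positivity
  have hbs : 0 ≤ b * s := by positivity
  have has1 : a * s ≤ s := by nlinarith
  have hbs1 : b * s ≤ s := by nlinarith
  have hcoord : ∀ (c : ℝ) (k : Fin N), k ≠ i → (κ + Pi.single i c : Fin N → ℝ) k = κ k := by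
    intro c k hk; simp [hk]
  have hcoordi : ∀ (c : ℝ), (κ + Pi.single i c : Fin N → ℝ) i = κ i + c := by
    intro c; simp
  set w' := (s * (b - a)) • w with hw'
  have hdw : ∀ k x, dotp (η k) (x + -w') = dotp (η k) x - s * (b - a) * dotp (η k) w := by
    intro k x; rw [← sub_eq_add_neg, dotp_sub, hw', dotp_smul]
  have htr : volume.real ((fun x => x + -w') ⁻¹' Tube η s S (κ + Pi.single i (a * s))) =
      volume.real (Tube η s S (κ + Pi.single i (a * s))) := by
    simp only [Measure.real]; rw [measure_preimage_add_right]
  have hne : volume.real ((fun x => x + -w') ⁻¹' Tube η s S (κ + Pi.single i (a * s))) <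
      volume.real (Tube η s S (κ + Pi.single i (b * s))) := by
    refine vol_lt (U := ((⋂ k, {x | dotp (η k) x < (κ + Pi.single i (b * s) : Fin N → ℝ) k}) ∩
      ⋂ k ∈ S, {x | (κ + Pi.single i (b * s) : Fin N → ℝ) k - s < dotp (η k) x}) ∩
      {x | κ p < dotp (η p) (x + -w')}) ?_ ?_ ?_ ?_ ?_ ?_
    · rintro x ⟨hx1, hx2⟩
      have hS2 : ∀ k ∈ S, κ k - s < dotp (η k) (x + -w') := by
        intro k hk
        have := hx2 k hk
        have h0 := single_nonneg' (i := i) has k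
        simp only [Pi.add_apply] at this
        linarith
      have hle : ∀ k, dotp (η k) (x + -w') ≤ κ k + ε := by
        intro k
        have := hx1 k
        have h0 := single_le' (i := i) has k
        simp only [Pi.add_apply] at this
        linarith
      obtain ⟨Y, hY, hY2⟩ := h.2.2 _ hle
      have hYS : ∀ k ∈ S, dotp (η k) Y = κ k := fun k hk => hY2 k (by linarith [hS2 k hk])
      constructor
      · intro k
        by_cases hki : k = i
        · subst hki
          have := hx1 k
          rw [hdw, hcoordi, hwi] at this
          rw [hcoordi]; linarith
        have h1 := hx1 k
        rw [hcoord _ k hki] at h1 ⊢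
        rw [hdw] at h1
        by_cases hnear : κ k - ε ≤ dotp (η k) (x + -w')
        · rcases hedge Y hY hYS k (hY2 k hnear) with hk | rfl | rfl
          · rw [hwS k hk hki] at h1; linarith
          · nlinarith
          · rw [hwq] at h1; linarith
        · rw [hdw] at hnear
          have hh := hsmall k
          have h3 : s * (b - a) * dotp (η k) w ≤ s * |dotp (η k) w| := by
            rw [mul_assoc]
            refine mul_le_mul_of_nonneg_left ?_ hs0.le
            calc (b - a) * dotp (η k) w ≤ |(b - a) * dotp (η k) w| := le_abs_self _
              _ = |b - a| * |dotp (η k) w| := abs_mul _ _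
              _ ≤ 1 * |dotp (η k) w| := by
                refine mul_le_mul_of_nonneg_right ?_ (abs_nonneg _)
                rw [abs_le]; constructor <;> linarith
              _ = _ := one_mul _
          linarith
      · intro k hk
        have h2 := hx2 k hk
        by_cases hki : k = i
        · subst hki
          rw [hdw, hcoordi, hwi] at h2
          rw [hcoordi]; linarith
        · rw [hcoord _ k hki] at h2 ⊢
          rw [hdw, hwS k hk hki] at h2; linarith
    · rintro x ⟨⟨h1, h2⟩, _⟩
      simp only [mem_iInter] at h1 h2
      exact ⟨fun k => (h1 k).le, fun k hk => h2 k hk⟩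
    · rw [Set.disjoint_left]
      rintro x ⟨hx1, _⟩ ⟨_, hx3⟩
      have h1 := hx1 p
      rw [hcoord _ p hpi] at h1
      exact absurd h1 (not_le.2 hx3)
    · refine ((isOpen_iInter_of_finite fun k => isOpen_lt (by fun_prop) (by fun_prop)).inter
        (isOpen_biInter_finset fun k _ => isOpen_lt (by fun_prop) (by fun_prop))).inter
        (isOpen_lt (by fun_prop) (by fun_prop))
    · have hS : ∀ k ∈ S, dotp (η k) v = κ k := fun k hk => (hact k).2 (Or.inl hk)
      have hpv : dotp (η p) v = κ p := (hact p).2 (Or.inr rfl)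
      have hvi : dotp (η i) (v + s • u) = κ i + s * (b - 1/2) := by
        rw [dotp_add, dotp_smul, hu i (hS i hi), hS i hi]; simp
      have hvS : ∀ k ∈ S, k ≠ i → dotp (η k) (v + s • u) = κ k - s / 2 := by
        intro k hk hki
        rw [dotp_add, dotp_smul, hu k (hS k hk), hS k hk]; simp [hki, hk]; ring
      have hvp : dotp (η p) (v + s • u) = κ p + s * ((b - a) * dotp (η p) w / 2) := by
        rw [dotp_add, dotp_smul, hu p hpv, hpv]; simp [hpi, hp]
      have hsn : s * ((b - a) * dotp (η p) w) < 0 := mul_neg_of_pos_of_neg hs0 hneg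
      refine ⟨v + s • u, ⟨mem_iInter.2 fun k => ?_, mem_iInter₂.2 fun k hk => ?_⟩, ?_⟩
      · show dotp (η k) (v + s • u) < (κ + Pi.single i (b * s) : Fin N → ℝ) k
        by_cases hki : k = i
        · subst hki; rw [hcoordi, hvi]; nlinarith
        rw [hcoord _ k hki]
        by_cases hkS : k ∈ S
        · rw [hvS k hkS hki]; linarith
        by_cases hkp : k = p
        · subst hkp; rw [hvp]; linarith
        · refine hmove k (lt_of_le_of_ne (hv k) fun he => ?_)
          rcases (hact k).1 he with h' | h'
          · exact hkS h'
          · exact hkp h'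
      · show (κ + Pi.single i (b * s) : Fin N → ℝ) k - s < dotp (η k) (v + s • u)
        by_cases hki : k = i
        · subst hki; rw [hcoordi, hvi]; nlinarith
        rw [hcoord _ k hki, hvS k hk hki]; linarith
      · show κ p < dotp (η p) (v + s • u + -w')
        rw [hdw, hvp]; linarith
    · refine measure_ne_top_of_subset (fun x hx => hx.1) (IsCompact.measure_lt_top (h.compact fun k => ?_)).ne
      have h0 := single_le' (i := i) hbs k
      simp only [Pi.add_apply]
      linarith
  rw [htr, hvol] at hne
  exact lt_irrefl _ hne

lemma tube_conc {η : Fin N → Fin n → ℝ} {κ : Fin N → ℝ} {ε ρ : ℝ} (h : NearAct η κ ε)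
    (hρ0 : 0 < ρ) (hρ : 4 * ρ ≤ ε) (hsimp : IsSimplePoly η κ)
    {S : Finset (Fin N)} {i p q : Fin N} (hi : i ∈ S) (hp : p ∉ S)
    (hsd : ∀ κ' : Fin N → ℝ, (∀ k, |κ' k - κ k| ≤ ρ) → ∀ s, 0 ≤ s → s ≤ ρ →
      volume.real (polytope η (κ' + Pi.single i (2 * s))) + volume.real (polytope η κ') =
        2 * volume.real (polytope η (κ' + Pi.single i s)))
    {v w : Fin n → ℝ} (hv : v ∈ polytope η κ)
    (hact : ∀ k, dotp (η k) v = κ k ↔ k ∈ S ∨ k = p)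
    (hedge : ∀ y ∈ polytope η κ, (∀ k ∈ S, dotp (η k) y = κ k) →
      ∀ l, dotp (η l) y = κ l → l ∈ S ∨ l = p ∨ l = q)
    (hwi : dotp (η i) w = 1) (hwS : ∀ k ∈ S, k ≠ i → dotp (η k) w = 0) (hwq : dotp (η q) w = 0) :
    dotp (η p) w = 0 := by
  have hvol : ∀ᶠ s : ℝ in 𝓝[>] 0, volume.real (Tube η s S (κ + Pi.single i (0 * s))) =
      volume.real (Tube η s S (κ + Pi.single i (1 * s))) := by
    have hc : Continuous fun s : ℝ => (((S.erase i).card : ℝ) + 1) * s := by fun_prop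
    have := ((hc.tendsto 0).eventually_lt_const (u := ρ) (by simpa using hρ0)).filter_mono
      (nhdsWithin_le_nhds (s := Ioi 0))
    filter_upwards [this, self_mem_nhdsWithin] with s hs hs0
    have := tube_inv h hρ hsd (le_of_lt hs0) (S.erase i) (Finset.notMem_erase _ _) κ
      (fun k => by rw [sub_self, abs_zero]; linarith)
    rw [Finset.insert_erase hi] at this
    simpa using this
  rcases lt_trichotomy (dotp (η p) w) 0 with h1 | h1 | h1
  · exact (tube_core h hsimp hi hp hv hact hedge hwi hwS hwq le_rfl zero_le_one zero_le_one le_rfl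
      hvol (by linarith)).elim
  · exact h1
  · exact (tube_core h hsimp hi hp hv hact hedge hwi hwS hwq zero_le_one le_rfl le_rfl zero_le_one
      (hvol.mono fun _ h => h.symm) (by linarith)).elim

/-- A vertex: the active conormals span. -/
def IsVert (η : Fin N → Fin n → ℝ) (κ : Fin N → ℝ) (v : Fin n → ℝ) : Prop :=
  v ∈ polytope η κ ∧ ∀ u, (∀ k, dotp (η k) v = κ k → dotp (η k) u = 0) → u = 0

lemma exists_vert {η : Fin N → Fin n → ℝ} {κ : Fin N → ℝ} (hc : IsCompact (polytope η κ))
    {i k : Fin N} (hne : (facet η κ i ∩ facet η κ k).Nonempty) :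
    ∃ v, IsVert η κ v ∧ dotp (η i) v = κ i ∧ dotp (η k) v = κ k := by
  have hcl : ∀ i, IsClosed (facet η κ i) := fun i =>
    (polytope_closed η κ).inter (isClosed_eq (dotp_cont _) continuous_const)
  have hcA : IsCompact (facet η κ i ∩ facet η κ k) :=
    hc.of_isClosed_subset ((hcl i).inter (hcl k)) fun x hx => hx.1.1
  obtain ⟨x, hx⟩ := hcA.extremePoints_nonempty hne
  rw [mem_extremePoints] at hx
  obtain ⟨hxA, hext⟩ := hx
  refine ⟨x, ⟨hxA.1.1, fun u hu => ?_⟩, hxA.1.2, hxA.2.2⟩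
  obtain ⟨s, ⟨h1, h2⟩, h3⟩ := (((move (η := η) (κ := κ) x u).and
    (move (η := η) (κ := κ) x (-u))).and self_mem_nhdsWithin).exists
  have hs : 0 < s := h3
  have hmem : ∀ u' : Fin n → ℝ, (∀ k, dotp (η k) x = κ k → dotp (η k) u' = 0) →
      (∀ k, dotp (η k) x < κ k → dotp (η k) (x + s • u') < κ k) →
      x + s • u' ∈ facet η κ i ∩ facet η κ k := by
    intro u' hu' hlt
    have heq : ∀ k, dotp (η k) x = κ k → dotp (η k) (x + s • u') = κ k := by
      intro k hk; rw [dotp_add, dotp_smul, hu' k hk, hk]; simp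
    have hp : x + s • u' ∈ polytope η κ := by
      intro k
      rcases (hxA.1.1 k).lt_or_eq with h | h
      · exact (hlt k h).le
      · exact (heq k h).le
    exact ⟨⟨hp, heq i hxA.1.2⟩, ⟨hp, heq k hxA.2.2⟩⟩
  have m1 := hmem u hu h1
  have m2 := hmem (-u) (fun k hk => by
    have := hu k hk
    rw [← dotL_apply] at this ⊢; simp [this]) h2
  have := hext _ m1 _ m2 ⟨1/2, 1/2, by norm_num, by norm_num, by norm_num, by
    ext j; simp; ring⟩
  have h4 : s • u = 0 := by simpa using this.1
  exact (smul_eq_zero.1 h4).resolve_left hs.ne'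

lemma vert_finite (η : Fin N → Fin n → ℝ) (κ : Fin N → ℝ) : {v | IsVert η κ v}.Finite := by
  classical
  refine Set.Finite.of_injOn (f := fun v => Finset.univ.filter fun k => dotp (η k) v = κ k)
    (t := Set.univ) (fun _ _ => mem_univ _) ?_ Set.finite_univ
  intro v hv v' _ heq
  have : v - v' = 0 := hv.2 _ fun k hk => by
    have h1 : k ∈ Finset.univ.filter fun k => dotp (η k) v = κ k := by simpa using hk
    simp only at heq
    rw [heq] at h1
    simp only [Finset.mem_filter, Finset.mem_univ, true_and] at h1
    rw [dotp_sub, hk, h1, sub_self]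
  exact sub_eq_zero.1 this

lemma edge {η : Fin N → Fin n → ℝ} {κ : Fin N → ℝ} (hsimp : IsSimplePoly η κ)
    (hc : IsCompact (polytope η κ)) {v e : Fin n → ℝ} (hv : IsVert η κ v) {p : Fin N}
    (hp : dotp (η p) v = κ p) (hep : dotp (η p) e = -1)
    (he : ∀ k, k ≠ p → dotp (η k) v = κ k → dotp (η k) e = 0)
    {S : Finset (Fin N)} (hS : ∀ k, k ∈ S ↔ k ≠ p ∧ dotp (η k) v = κ k) :
    ∃ τ > (0 : ℝ), ∃ q, q ∉ S ∧ IsVert η κ (v + τ • e) ∧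
      (∀ k, dotp (η k) (v + τ • e) = κ k ↔ k ∈ S ∨ k = q) ∧
      (∀ y ∈ polytope η κ, (∀ k ∈ S, dotp (η k) y = κ k) →
      ∀ l, dotp (η l) y = κ l → l ∈ S ∨ l = p ∨ l = q) := by
  classical
  have hpos : ∃ q, 0 < dotp (η q) e := by
    by_contra hcon
    push Not at hcon
    have hray : ∀ r : ℝ, 0 ≤ r → v + r • e ∈ polytope η κ := by
      intro r hr k
      rw [dotp_add, dotp_smul]
      have := hv.1 k
      nlinarith [hcon k]
    obtain ⟨R, hR⟩ := (hc.image (dotp_cont (η p))).bddBelow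
    have h1 := hR ⟨_, hray (|κ p - R| + 1) (by positivity), rfl⟩
    rw [dotp_add, dotp_smul, hep, hp] at h1
    have := le_abs_self (κ p - R)
    linarith
  obtain ⟨q, hq, hmin⟩ := Finset.exists_min_image (Finset.univ.filter fun q => 0 < dotp (η q) e)
    (fun q => (κ q - dotp (η q) v) / dotp (η q) e) (by
      obtain ⟨q, hq⟩ := hpos
      exact ⟨q, by simpa using hq⟩)
  simp only [Finset.mem_filter, Finset.mem_univ, true_and] at hq hmin
  have hqp : q ≠ p := by rintro rfl; linarith
  have hqv : dotp (η q) v ≠ κ q := fun h => by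
    have := he q hqp h; linarith
  have hqlt : dotp (η q) v < κ q := lt_of_le_of_ne (hv.1 q) hqv
  set τ := (κ q - dotp (η q) v) / dotp (η q) e with hτ
  have hτ0 : 0 < τ := div_pos (by linarith) hq
  have hτq : dotp (η q) v + τ * dotp (η q) e = κ q := by
    rw [hτ]; field_simp; ring
  have hd : ∀ k (r : ℝ), dotp (η k) (v + r • e) = dotp (η k) v + r * dotp (η k) e := by
    intro k r; rw [dotp_add, dotp_smul]
  have hv' : v + τ • e ∈ polytope η κ := by
    intro k
    rw [hd]
    by_cases hk : 0 < dotp (η k) e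
    · have := hmin k hk
      rw [le_div_iff₀ hk] at this
      linarith
    · have := hv.1 k
      nlinarith
  have hSact : ∀ k ∈ S, dotp (η k) (v + τ • e) = κ k := by
    intro k hk
    have := (hS k).1 hk
    rw [hd, he k this.1 this.2, this.2]; simp
  have hqact : dotp (η q) (v + τ • e) = κ q := by rw [hd, hτq]
  have hqS : q ∉ S := fun h => hqv ((hS q).1 h).2
  have hspan : ∀ u, (∀ k ∈ S, dotp (η k) u = 0) → dotp (η q) u = 0 → u = 0 := by
    intro u hu huq
    have h1 : u + dotp (η p) u • e = 0 := hv.2 _ fun k hk => by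
      rw [dotp_add, dotp_smul]
      by_cases hkp : k = p
      · subst hkp; rw [hep]; ring
      · rw [hu k ((hS k).2 ⟨hkp, hk⟩), he k hkp hk]; simp
    have h2 : dotp (η q) (u + dotp (η p) u • e) = 0 := by rw [h1, dotp_zero]
    rw [dotp_add, dotp_smul, huq, zero_add] at h2
    have h3 := (mul_eq_zero.1 h2).resolve_right hq.ne'
    rw [h3] at h1
    simpa using h1
  have hiff : ∀ k, dotp (η k) (v + τ • e) = κ k ↔ k ∈ S ∨ k = q := by
    intro k
    constructor
    · intro hk
      by_contra hcon
      push Not at hcon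
      obtain ⟨u, hu⟩ := pert hsimp hv' (Pi.single k 1)
      have hu0 : u = 0 := hspan u (fun l hl => by
        rw [hu l (hSact l hl), Pi.single_apply, if_neg]
        rintro rfl; exact hcon.1 hl) (by
        rw [hu q hqact, Pi.single_apply, if_neg]
        rintro rfl; exact hcon.2 rfl)
      have := hu k hk
      rw [hu0, dotp_zero] at this
      simp at this
    · rintro (hk | rfl)
      · exact hSact k hk
      · exact hqact
  refine ⟨τ, hτ0, q, hqS, ⟨hv', fun u hu => hspan u (fun k hk => hu k (hSact k hk)) (hu q hqact)⟩, hiff, ?_⟩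
  intro y hy hyS l hl
  by_cases hlS : l ∈ S
  · exact Or.inl hlS
  by_cases hlp : l = p
  · exact Or.inr (Or.inl hlp)
  have hc0 : 0 ≤ κ p - dotp (η p) y := by linarith [hy p]
  have hyv : y = v + (κ p - dotp (η p) y) • e := by
    have : y - (v + (κ p - dotp (η p) y) • e) = 0 := hv.2 _ fun k hk => by
      rw [dotp_sub, hd]
      by_cases hkp : k = p
      · subst hkp; rw [hep, hk]; ring
      · rw [hyS k ((hS k).2 ⟨hkp, hk⟩), he k hkp hk, hk]; ring
    exact sub_eq_zero.1 this
  generalize κ p - dotp (η p) y = c at hc0 hyv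
  subst hyv
  have hlv : dotp (η l) v < κ l := lt_of_le_of_ne (hv.1 l) fun h => hlS ((hS l).2 ⟨hlp, h⟩)
  rw [hd] at hl
  have hle : 0 < dotp (η l) e := by
    by_contra hcon
    nlinarith
  have h1 : c ≤ τ := by
    have := hy q
    rw [hd, ← hτq] at this
    exact le_of_mul_le_mul_right (by linarith) hq
  have h2 : τ ≤ c := by
    have := hv' l
    rw [hd, ← hl] at this
    exact le_of_mul_le_mul_right (by linarith) hle
  have h3 : c = τ := le_antisymm h1 h2
  subst h3
  rcases (hiff l).1 (by rw [hd, hl]) with h | h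
  · exact Or.inl h
  · exact Or.inr (Or.inr h)

lemma flat_of {η : Fin N → Fin n → ℝ} {κ : Fin N → ℝ} {ε ρ : ℝ} (h : NearAct η κ ε)
    (hρ0 : 0 < ρ) (hρ : 4 * ρ ≤ ε) (hsimp : IsSimplePoly η κ) {i : Fin N}
    (hsd : ∀ κ' : Fin N → ℝ, (∀ k, |κ' k - κ k| ≤ ρ) → ∀ s, 0 ≤ s → s ≤ ρ →
      volume.real (polytope η (κ' + Pi.single i (2 * s))) + volume.real (polytope η κ') =
        2 * volume.real (polytope η (κ' + Pi.single i s)))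
    (hne : (facet η κ i).Nonempty) : FlatFacet η κ i := by
  classical
  have hc : IsCompact (polytope η κ) := h.compact fun k => by linarith [h.1]
  obtain ⟨vs, hvs, hvsi, -⟩ := exists_vert hc (i := i) (k := i) (by simpa using hne)
  obtain ⟨w, hw⟩ := pert hsimp hvs.1 (Pi.single i 1)
  have hwi : dotp (η i) w = 1 := by rw [hw i hvsi]; simp
  have key : ∀ v, IsVert η κ v → dotp (η i) v = κ i → ∀ k, k ≠ i → dotp (η k) v = κ k →
      dotp (η k) w = 0 := by
    by_contra hcon
    let B := {v | IsVert η κ v ∧ dotp (η i) v = κ i ∧ ∃ k, k ≠ i ∧ dotp (η k) v = κ k ∧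
      dotp (η k) w ≠ 0}
    have hBne : B.Nonempty := by
      push Not at hcon
      obtain ⟨v, h1, h2, k, h3, h4, h5⟩ := hcon
      exact ⟨v, h1, h2, k, h3, h4, h5⟩
    have hBfin : B.Finite := (vert_finite η κ).subset fun v hv => hv.1
    let As := Finset.univ.filter fun k => dotp (η k) vs = κ k
    let ℓ : (Fin n → ℝ) →L[ℝ] ℝ := ∑ k ∈ As, dotL (η k)
    have hℓ : ∀ x, ℓ x = ∑ k ∈ As, dotp (η k) x := by
      intro x; simp [ℓ, dotL_apply]
    obtain ⟨v, hvB, hmax⟩ := Set.exists_max_image B ℓ hBfin hBne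
    obtain ⟨hv, hvi, k0, hk0i, hk0, hk0w⟩ := hvB
    have hAs : ∀ k ∈ As, dotp (η k) vs = κ k := fun k hk => by simpa [As] using hk
    have hd : 0 < ℓ (vs - v) := by
      rw [hℓ]
      apply Finset.sum_pos'
      · intro k hk
        rw [dotp_sub, hAs k hk]; linarith [hv.1 k]
      · by_contra hall
        push Not at hall
        have : vs - v = 0 := hvs.2 _ fun k hk => by
          have hk' : k ∈ As := by simpa [As] using hk
          have h1 := hall k hk'
          rw [dotp_sub, hk] at h1 ⊢
          linarith [hv.1 k]
        have heq : vs = v := sub_eq_zero.1 this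
        subst heq
        apply hk0w
        rw [hw k0 hk0, Pi.single_apply, if_neg hk0i]
    choose e he using fun j => pert hsimp hv.1 (-Pi.single j 1)
    let A := Finset.univ.filter fun k => dotp (η k) v = κ k
    have hA : ∀ k, k ∈ A ↔ dotp (η k) v = κ k := fun k => by simp [A]
    have hdec : vs - v = ∑ k ∈ A, (-dotp (η k) (vs - v)) • e k := by
      have : vs - v - ∑ k ∈ A, (-dotp (η k) (vs - v)) • e k = 0 := hv.2 _ fun l hl => by
        rw [dotp_sub (η l) (vs - v), dotp_sum]
        have : ∀ k ∈ A, dotp (η l) ((-dotp (η k) (vs - v)) • e k) =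
            if l = k then dotp (η k) (vs - v) else 0 := by
          intro k _
          rw [dotp_smul, he k l hl, Pi.neg_apply, Pi.single_apply]
          split_ifs <;> ring
        rw [Finset.sum_congr rfl this]
        simp [(hA l).2 hl]
      exact sub_eq_zero.1 this
    have hex : ∃ p ∈ A, 0 < (-dotp (η p) (vs - v)) * ℓ (e p) := by
      by_contra hall
      push Not at hall
      rw [hdec, map_sum] at hd
      have := Finset.sum_nonpos hall
      simp only [map_smul, smul_eq_mul] at hd
      linarith
    obtain ⟨p, hpA, hpp⟩ := hex
    have hpv := (hA p).1 hpA
    have hnn : 0 ≤ -dotp (η p) (vs - v) := by rw [dotp_sub, hpv]; linarith [hvs.1 p]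
    have hℓp : 0 < ℓ (e p) := pos_of_mul_pos_right hpp hnn
    have hpi : p ≠ i := by
      rintro rfl
      rw [dotp_sub, hvi, hvsi] at hpp; simp at hpp
    have hS : ∀ k, k ∈ A.erase p ↔ k ≠ p ∧ dotp (η k) v = κ k := fun k => by
      rw [Finset.mem_erase, hA]
    obtain ⟨τ, hτ, q, hqS, hv', hact', hedge⟩ := edge hsimp hc hv hpv (e := e p)
      (by rw [he p p hpv]; simp) (fun k hkp hk => by
        rw [he p k hk, Pi.neg_apply, Pi.single_apply, if_neg hkp]; simp) hS
    have hiS : i ∈ A.erase p := (hS i).2 ⟨hpi.symm, hvi⟩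
    have hv'i : dotp (η i) (v + τ • e p) = κ i := (hact' i).2 (Or.inl hiS)
    have hqi : q ≠ i := fun h => hqS (h ▸ hiS)
    have hnB : v + τ • e p ∉ B := fun hB => by
      have := hmax _ hB
      rw [map_add, map_smul, smul_eq_mul] at this
      have := mul_pos hτ hℓp
      linarith
    have hgood : ∀ k, k ≠ i → dotp (η k) (v + τ • e p) = κ k → dotp (η k) w = 0 := by
      intro k hki hk
      by_contra hkw
      exact hnB ⟨hv', hv'i, k, hki, hk, hkw⟩
    have hwS : ∀ k ∈ A.erase p, k ≠ i → dotp (η k) w = 0 := fun k hk hki =>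
      hgood k hki ((hact' k).2 (Or.inl hk))
    have hwq : dotp (η q) w = 0 := hgood q hqi ((hact' q).2 (Or.inr rfl))
    have hactv : ∀ k, dotp (η k) v = κ k ↔ k ∈ A.erase p ∨ k = p := by
      intro k
      rw [hS]
      by_cases hkp : k = p
      · subst hkp; simp [hpv]
      · simp [hkp]
    have hwp := tube_conc h hρ0 hρ hsimp hiS (Finset.notMem_erase p A) hsd hv.1 hactv hedge hwi hwS hwq
    apply hk0w
    rcases (hactv k0).1 hk0 with h' | h'
    · exact hwS k0 h' hk0i
    · rw [h', hwp]
  refine ⟨w, ?_, fun j hji hj => ?_⟩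
  · rintro rfl
    rw [dotp_zero] at hwi; exact zero_ne_one hwi
  · obtain ⟨v, hv, hvi, hvj⟩ := exists_vert hc hj
    exact key v hv hvi j hji hvj

end MassLinearPaper

open MassLinearPaper

/-- If a simple polytope has no pervasive and no flat facets, every mass linear function
on it is constant. -/
theorem stmt10 {n N : ℕ} (η : Fin N → Fin n → ℝ) (κ : Fin N → ℝ) (H : Fin n → ℝ)
    (γ : Fin N → ℝ) (C : ℝ) (hΔ : GoodPolytope η κ)
    (hperv : ∀ i, ¬ Pervasive η κ i) (hflat : ∀ i, ¬ FlatFacet η κ i)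
    (hml : MassLinear η κ H γ C) :
    ∀ κ₁ ∈ chamber η κ, ∀ κ₂ ∈ chamber η κ,
      dotp H (centroid η κ₁) = dotp H (centroid η κ₂) := by
  obtain ⟨hsimp, hb, hinterior, hfac⟩ := hΔ
  have hne : (polytope η κ).Nonempty := hinterior.mono interior_subset
  obtain ⟨r, hr, hball⟩ := chamber_nhds hsimp hb hne
  obtain ⟨ε, hε⟩ := near_active hsimp hb hne
  have hγ : ∀ i, γ i = 0 := by
    intro i
    by_contra hγ
    have hp := hperv i
    unfold Pervasive at hp
    push Not at hp
    obtain ⟨j, hji, hj⟩ := hp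
    obtain ⟨ρ, hρ0, hρ, hsd⟩ := second_diff hε hsimp hml hr hball hji
      (by rw [hj]; exact Set.not_nonempty_empty) (hfac j) hγ
    exact hflat i (flat_of hε hρ0 hρ hsimp hsd (hfac i))
  intro κ₁ h1 κ₂ h2
  rw [hml κ₁ h1, hml κ₂ h2]
  simp [hγ]
end
end
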